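/- arXiv:math/0204195 — 6 statements merged into one kernel-verified Lean document; each statement's English description precedes it below -/
import Mathlib

section
/- Let Γ be a subgroup of SL₂(ℂ) which is Zariski-dense. Then there exists an infinite set of pairwise multiplicatively independent complex numbers each of which occurs as an eigenvalue of some element of Γ (viewed as a 2×2 complex matrix). -/
/-- A subset of `SL₂(ℂ)` is Zariski-dense if every polynomial in the four matrix
entries vanishing on it vanishes on all of `SL₂(ℂ)`. -/
def ZariskiDenseSet (s : Set (Matrix.SpecialLinearGroup (Fin 2) ℂ)) : Prop :=
  ∀ p : MvPolynomial (Fin 2 × Fin 2) ℂ,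
    (∀ g ∈ s, MvPolynomial.eval (fun ij => (g : Matrix (Fin 2) (Fin 2) ℂ) ij.1 ij.2) p = 0) →
    ∀ g : Matrix.SpecialLinearGroup (Fin 2) ℂ,
      MvPolynomial.eval (fun ij => (g : Matrix (Fin 2) (Fin 2) ℂ) ij.1 ij.2) p = 0

/-- `lam` is an eigenvalue of `g ∈ SL₂(ℂ)`. -/
def IsEigenvalue (g : Matrix.SpecialLinearGroup (Fin 2) ℂ) (lam : ℂ) : Prop :=
  Matrix.det ((g : Matrix (Fin 2) (Fin 2) ℂ) - lam • 1) = 0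

/-- `x` and `y` are multiplicatively independent: there is no
`(p,q) ∈ ℤ×ℤ \ {(0,0)}` with `x^q = y^p`. -/
def MultIndep {K : Type*} [DivisionRing K] (x y : K) : Prop :=
  ∀ p q : ℤ, x ^ q = y ^ p → p = 0 ∧ q = 0

/-!
Suppose all eigenvalues of elements of `Γ` of infinite order are multiplicatively dependent on
finitely many numbers. Then every `g ∈ Γ` has an eigenvalue with a positive power in a fixed
finitely generated ring, and specialization replaces that ring by a number field `F`. An eigenvalue
with a power in `F` lies in `F` or is a root of unity of bounded order, so some finite extension of
`F` contains an eigenvalue of every `g`. Embedding this extension into `ℚ_p` and reducing modulo a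
suitable `p` gives a subgroup of `SL₂(𝔽_p)` all of whose elements are split. By Klein's orbit count
on the projective line, the 60th powers in it have a common fixed point, hence
`tr ⁅x ^ 60, y ^ 60⁆ = 2`. Since `p` can be chosen so that `tr ⁅x ^ 60, y ^ 60⁆ - 2`, if nonzero, is
a unit modulo `p`, this identity holds on `Γ`; being polynomial, it would hold on all of `SL₂(ℂ)`,
where it is false.
-/

section GroupActions

open MulAction

lemma eq_or_two_mul_eq_or_three_mul_le_of_dvd {d n : ℕ} (hn : n ≠ 0) (h : d ∣ n) :
    d = n ∨ 2 * d = n ∨ 3 * d ≤ n := by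
  obtain ⟨e, rfl⟩ := h
  have he : e ≠ 0 := right_ne_zero_of_mul hn
  obtain rfl | rfl | he : e = 1 ∨ e = 2 ∨ 3 ≤ e := by omega
  · simp
  · simp [mul_comm]
  · exact Or.inr (Or.inr (by nlinarith))

lemma card_filter_ne_mul_le_two_mul_sum_sub {ι : Type*} (s : Finset ι) {d : ι → ℕ} {n : ℕ}
    (hn : n ≠ 0) (hdvd : ∀ i ∈ s, d i ∣ n) :
    (s.filter (d · ≠ n)).card * n ≤ 2 * ∑ i ∈ s, (n - d i) := by
  calc (s.filter (d · ≠ n)).card * n ≤ ∑ i ∈ s with d i ≠ n, 2 * (n - d i) := by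
        refine Finset.card_nsmul_le_sum _ _ _ fun i hi => ?_
        obtain ⟨his, hne⟩ := Finset.mem_filter.mp hi
        have := eq_or_two_mul_eq_or_three_mul_le_of_dvd hn (hdvd i his)
        omega
    _ ≤ ∑ i ∈ s, 2 * (n - d i) := Finset.sum_le_sum_of_subset (Finset.filter_subset _ s)
    _ = 2 * ∑ i ∈ s, (n - d i) := Finset.mul_sum .. |>.symm

-- The defects `n - d i` sum to `2 * (n - 1)`, so `d i ≠ n` for at most three `i`.
lemma le_five_mul_of_sum_add_eq_card_mul {ι : Type*} [Fintype ι] {d : ι → ℕ} {n : ℕ}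
    (hdvd : ∀ i, d i ∣ n) (hd : ∀ i, 3 ≤ d i)
    (hsum : ∑ i, d i + 2 * (n - 1) = Fintype.card ι * n) (i₀ : ι) : n ≤ 5 * d i₀ := by
  classical
  by_contra! hlt
  have h₀ : 6 * d i₀ ≤ n := by
    obtain ⟨e, rfl⟩ := hdvd i₀
    have : 5 < e := lt_of_mul_lt_mul_left (mul_comm 5 (d i₀) ▸ hlt) (Nat.zero_le _)
    nlinarith
  have h3 := hd i₀
  have hle i : d i ≤ n := Nat.le_of_dvd (by omega) (hdvd i)
  have hdefect : ∑ i, (n - d i) = 2 * (n - 1) := by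
    rw [Finset.sum_tsub_distrib _ fun i _ => hle i, Finset.sum_const, Finset.card_univ,
      smul_eq_mul, ← hsum, Nat.add_sub_cancel_left]
  have hothers : ∑ i ∈ Finset.univ.erase i₀, (n - d i) = n - 2 + d i₀ := by
    have := Finset.add_sum_erase Finset.univ (fun i => n - d i) (Finset.mem_univ i₀)
    omega
  let B : Finset ι := {i ∈ Finset.univ.erase i₀ | d i ≠ n}
  have hB : ∑ i ∈ B, (n - d i) = n - 2 + d i₀ :=
    (Finset.sum_filter_of_ne fun i _ h => by contrapose! h; simp [h]).trans hothers
  have hcases : ∀ i ∈ B, 2 * d i = n ∨ 3 * d i ≤ n := fun i hi =>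
    (eq_or_two_mul_eq_or_three_mul_le_of_dvd (by omega) (hdvd i)).resolve_left
      (Finset.mem_filter.mp hi).2
  have hcard : B.card ≤ 2 := by
    have hlower : B.card * n ≤ 2 * ∑ i ∈ Finset.univ.erase i₀, (n - d i) :=
      card_filter_ne_mul_le_two_mul_sum_sub _ (by omega) fun i _ => hdvd i
    by_contra! hgt
    have := Nat.mul_le_mul_right n hgt
    omega
  interval_cases hB2 : B.card
  · simp only [Finset.card_eq_zero.mp hB2, Finset.sum_empty] at hB
    omega
  · obtain ⟨i, hi⟩ := Finset.card_eq_one.mp hB2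
    rw [hi, Finset.sum_singleton] at hB
    have := hd i
    omega
  · obtain ⟨i, j, hij, h⟩ := Finset.card_eq_two.mp hB2
    rw [h, Finset.sum_pair hij] at hB
    have := hcases i (by simp [h])
    have := hcases j (by simp [h])
    omega

variable {G X : Type*} [Group G] [MulAction G X]

lemma sum_ncard_orbit_add_eq_of_ncard_fixedBy_eq_two [Finite G] [Finite X]
    [Fintype (orbitRel.Quotient G X)] (h2 : ∀ g : G, g ≠ 1 → (fixedBy X g).ncard = 2) :
    ∑ ω : orbitRel.Quotient G X, ω.orbit.ncard + 2 * (Nat.card G - 1) =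
      Fintype.card (orbitRel.Quotient G X) * Nat.card G := by
  classical
  have := Fintype.ofFinite G
  have := Fintype.ofFinite X
  have horbits : ∑ ω : orbitRel.Quotient G X, ω.orbit.ncard = Nat.card X := by
    rw [Nat.card_congr (selfEquivSigmaOrbits' G X), Nat.card_sigma]
    rfl
  have hfixed : ∑ g : G, Fintype.card (fixedBy X g) = Nat.card X + 2 * (Nat.card G - 1) := by
    rw [← Finset.add_sum_erase _ _ (Finset.mem_univ (1 : G))]
    have hne : ∀ g ∈ Finset.univ.erase (1 : G), Fintype.card (fixedBy X g) = 2 := fun g hg => by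
      rw [← h2 g (Finset.ne_of_mem_erase hg), Set.ncard_eq_toFinset_card', Set.toFinset_card]
    rw [Finset.sum_congr rfl hne]
    simp [mul_comm]
  rw [horbits, ← hfixed, sum_card_fixedBy_eq_card_orbits_mul_card_group, Nat.card_eq_fintype_card]

lemma index_stabilizer_le_two_or_card_stabilizer_le_five [Finite G] [Finite X]
    (h2 : ∀ g : G, g ≠ 1 → (fixedBy X g).ncard = 2) :
    (∃ P : X, (stabilizer G P).index ≤ 2) ∨ ∀ P : X, Nat.card (stabilizer G P) ≤ 5 := by
  have := Fintype.ofFinite (orbitRel.Quotient G X)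
  refine or_iff_not_imp_left.mpr fun hlarge P₀ => ?_
  push Not at hlarge
  have hindex (P : X) : (orbitRel.Quotient.orbit (⟦P⟧ : orbitRel.Quotient G X)).ncard =
      (stabilizer G P).index :=
    (index_stabilizer G P).symm
  have hle : Nat.card G ≤ 5 * (stabilizer G P₀).index := by
    rw [← hindex]
    refine le_five_mul_of_sum_add_eq_card_mul ?_ ?_
      (sum_ncard_orbit_add_eq_of_ncard_fixedBy_eq_two h2) _
    · rintro ⟨P⟩
      exact (hindex P).symm ▸ Subgroup.index_dvd_card _
    · rintro ⟨P⟩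
      exact (hindex P).symm ▸ hlarge P
  rw [← (stabilizer G P₀).card_mul_index] at hle
  exact Nat.le_of_mul_le_mul_right hle (Nat.pos_of_ne_zero Subgroup.index_ne_zero_of_finite)

lemma exists_forall_pow_sixty_smul_eq_of_ne_one [Finite G] [Finite X] [Nonempty X]
    (h2 : ∀ g : G, g ≠ 1 → (fixedBy X g).ncard = 2) : ∃ P : X, ∀ g : G, g ^ 60 • P = P := by
  rcases index_stabilizer_le_two_or_card_stabilizer_le_five h2 with ⟨P, hP⟩ | hcard
  · refine ⟨P, fun g => (?_ : g ^ 60 ∈ stabilizer G P)⟩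
    have := (stabilizer G P).index_ne_zero_of_finite
    obtain hone | htwo : (stabilizer G P).index = 1 ∨ (stabilizer G P).index = 2 := by omega
    · simp [Subgroup.index_eq_one.mp hone]
    · rw [show 60 = 2 * 30 from rfl, pow_mul]
      exact pow_mem (Subgroup.sq_mem_of_index_two htwo g) 30
  · obtain ⟨P⟩ := ‹Nonempty X›
    suffices hpow : ∀ g : G, g ^ 60 = 1 from ⟨P, fun g => by rw [hpow, one_smul]⟩
    intro g
    by_cases hg : g = 1
    · rw [hg, one_pow]
    obtain ⟨Q, hQ⟩ : (fixedBy X g).Nonempty := Set.nonempty_of_ncard_ne_zero (by simp [h2 g hg])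
    have hdvd : Nat.card (stabilizer G Q) ∣ 60 := by
      have hpos := Nat.card_pos (α := stabilizer G Q)
      have hle := hcard Q
      interval_cases Nat.card (stabilizer G Q) <;> norm_num
    exact orderOf_dvd_iff_pow_eq_one.mp
      ((Subgroup.orderOf_dvd_natCard _ (mem_stabilizer_iff.mpr hQ)).trans hdvd)

lemma exists_forall_pow_sixty_smul_eq [Finite X] [Nonempty X]
    (h2 : ∀ g : G, (∃ P : X, g • P ≠ P) → (fixedBy X g).ncard = 2) :
    ∃ P : X, ∀ g : G, g ^ 60 • P = P := by
  have hrange : ∀ σ : (toPermHom G X).range, σ ≠ 1 → (fixedBy X σ).ncard = 2 := by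
    rintro ⟨_, g, rfl⟩ hg
    refine h2 g ?_
    contrapose! hg
    exact Subtype.ext (Equiv.ext hg)
  obtain ⟨P, hP⟩ := exists_forall_pow_sixty_smul_eq_of_ne_one hrange
  refine ⟨P, fun g => ?_⟩
  have hfix : (toPermHom G X g ^ 60) P = P := hP ⟨_, g, rfl⟩
  rwa [← map_pow] at hfix

end GroupActions

section SpecialLinear

open Matrix
open scoped MatrixGroups commutatorElement

/-- An element of `SL₂(R)` is split if its characteristic polynomial `X ^ 2 - tr(g) X + 1` has a
root in `R`. -/
def IsSplit {R : Type*} [CommRing R] (g : SL(2, R)) : Prop :=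
  ∃ l : R, l ^ 2 - g.1.trace * l + 1 = 0

variable {R : Type*} [CommRing R]

lemma trace_inv_eq_trace (g : SL(2, R)) : (g⁻¹).1.trace = g.1.trace := by
  rw [SpecialLinearGroup.SL2_inv_expl, trace_fin_two, trace_fin_two]
  exact add_comm _ _

lemma trace_sq_eq (g : SL(2, R)) : (g ^ 2).1.trace = g.1.trace ^ 2 - 2 := by
  have hdet := g.det_coe
  rw [det_fin_two] at hdet
  simp only [sq, Matrix.SpecialLinearGroup.coe_mul, trace_fin_two, mul_apply, Fin.sum_univ_two]
  linear_combination -2 * hdet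

-- The right-hand side is the resultant of the quadratics whose roots are the fixed points of `A`
-- and of `B` on the projective line.
lemma trace_commutator_sub_two (A B : SL(2, R)) :
    ⁅A, B⁆.1.trace - 2 = (A 0 1 * B 1 0 - A 1 0 * B 0 1) ^ 2 -
      (A 1 0 * (B 1 1 - B 0 0) - (A 1 1 - A 0 0) * B 1 0) *
        (A 0 1 * (B 1 1 - B 0 0) - (A 1 1 - A 0 0) * B 0 1) := by
  have hA := A.det_coe
  have hB := B.det_coe
  rw [det_fin_two] at hA hB
  simp only [commutatorElement_def, Matrix.SpecialLinearGroup.coe_mul,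
    Matrix.SpecialLinearGroup.coe_inv, trace_fin_two, adjugate_fin_two, mul_apply,
    Fin.sum_univ_two, of_apply, cons_val', cons_val_zero, cons_val_one, cons_val_fin_one]
  linear_combination (2 * (B 0 0 * B 1 1 - B 0 1 * B 1 0)) * hA + 2 * hB

lemma one_add_pow_of_mul_self_eq_zero {S : Type*} [Semiring S] {N : S} (hN : N * N = 0) (m : ℕ) :
    (1 + N) ^ m = 1 + m • N := by
  induction m with
  | zero => simp
  | succ m ih =>
    rw [pow_succ, ih, add_mul, one_mul, mul_add, mul_one, smul_mul_assoc, hN, smul_zero, add_zero,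
      add_assoc, add_smul, one_smul, add_comm N]

lemma mul_self_eq_zero_of_trace_eq_zero_of_det_eq_zero {N : Matrix (Fin 2) (Fin 2) R}
    (htr : N.trace = 0) (hdet : N.det = 0) : N * N = 0 := by
  rw [trace_fin_two] at htr
  rw [det_fin_two] at hdet
  ext i j
  fin_cases i <;> fin_cases j <;>
    simp only [Fin.zero_eta, Fin.mk_one, mul_apply, Fin.sum_univ_two, Matrix.zero_apply]
  · linear_combination N 0 0 * htr - hdet
  · linear_combination N 0 1 * htr
  · linear_combination N 1 0 * htr
  · linear_combination N 1 1 * htr - hdet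

lemma det_sub_one_eq (v : SL(2, R)) : (v.1 - 1).det = 2 - v.1.trace := by
  have hdet := v.det_coe
  rw [det_fin_two] at hdet
  simp only [det_fin_two, trace_fin_two, Matrix.sub_apply, one_apply_eq, ne_eq, zero_ne_one,
    one_ne_zero, not_false_eq_true, one_apply_ne]
  linear_combination hdet

variable {K : Type*} [Field K] [DecidableEq K]

/-- The action of `SL₂(K)` on the projective line by Möbius transformations. -/
local instance : MulAction SL(2, K) (OnePoint K) :=
  MulAction.compHom _ (SpecialLinearGroup.toGL : SL(2, K) →* GL (Fin 2) K)

lemma smul_infty_eq_self_iff {g : SL(2, K)} :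
    g • (OnePoint.infty : OnePoint K) = OnePoint.infty ↔ g 1 0 = 0 :=
  OnePoint.smul_infty_eq_self_iff (g := SpecialLinearGroup.toGL g)

lemma smul_coe_eq_self_iff {g : SL(2, K)} {z : K} :
    g • (z : OnePoint K) = z ↔ g 1 0 * z ^ 2 + (g 1 1 - g 0 0) * z - g 0 1 = 0 := by
  have h := GeneralLinearGroup.fixpointPolynomial_aeval_eq_zero_iff (c := z)
    (g := SpecialLinearGroup.toGL g)
  rw [show g • (z : OnePoint K) = SpecialLinearGroup.toGL g • (z : OnePoint K) from rfl, ← h]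
  simp [GeneralLinearGroup.fixpointPolynomial]

lemma trace_commutator_eq_two_of_smul_eq_self {A B : SL(2, K)} {P : OnePoint K}
    (hA : A • P = P) (hB : B • P = P) : ⁅A, B⁆.1.trace = 2 := by
  rw [← sub_eq_zero, trace_commutator_sub_two]
  cases P with
  | infty =>
    rw [smul_infty_eq_self_iff] at hA hB
    rw [hA, hB]
    ring
  | coe z =>
    rw [smul_coe_eq_self_iff, sub_eq_zero] at hA hB
    rw [← hA, ← hB]
    ring

lemma exists_forall_smul_eq_self_of_trace_mul_eq_zero {N : Matrix (Fin 2) (Fin 2) K}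
    (htr : N.trace = 0) (hdet : N.det = 0) (hN : N ≠ 0) :
    ∃ P : OnePoint K, ∀ g : SL(2, K), (N * g.1).trace = 0 → g • P = P := by
  rw [trace_fin_two, ← eq_neg_iff_add_eq_zero] at htr
  rw [det_fin_two, htr] at hdet
  simp only [trace_fin_two, mul_apply, Fin.sum_univ_two]
  by_cases hc : N 1 0 = 0
  · have hd : N 1 1 = 0 := by simpa [hc] using hdet
    have hb : N 0 1 ≠ 0 := fun hb => hN (by ext i j; fin_cases i <;> fin_cases j <;> simp [*])
    refine ⟨OnePoint.infty, fun g hg => smul_infty_eq_self_iff.mpr ?_⟩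
    simpa [htr, hc, hd, hb] using hg
  · refine ⟨(N 0 0 / N 1 0 : K), fun g hg => smul_coe_eq_self_iff.mpr ?_⟩
    rw [htr] at hg ⊢
    field_simp
    linear_combination -g 1 0 * hdet - N 1 0 * hg

lemma ncard_fixedBy_eq_two {g : SL(2, K)} (hg : IsSplit g) (htr : g.1.trace ^ 2 ≠ 4) :
    (MulAction.fixedBy (OnePoint K) g).ncard = 2 := by
  obtain ⟨l, hl⟩ := hg
  have hdet := g.det_coe
  rw [det_fin_two] at hdet
  rw [trace_fin_two] at hl htr
  rw [Set.ncard_eq_two]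
  by_cases hc : g 1 0 = 0
  · have hda : g 1 1 - g 0 0 ≠ 0 := fun h => htr <| by
      linear_combination 4 * hdet + (g 1 1 - g 0 0) * h + 4 * g 0 1 * hc
    refine ⟨OnePoint.infty, (g 0 1 / (g 1 1 - g 0 0) : K), OnePoint.infty_ne_coe _, ?_⟩
    ext P
    cases P with
    | infty => simp [smul_infty_eq_self_iff, hc]
    | coe z => simp [smul_coe_eq_self_iff, hc, eq_div_iff hda, sub_eq_zero, mul_comm]
  · have hne : l - g 1 1 ≠ g 0 0 - l := fun h => htr <| by
      linear_combination (2 * l - g 0 0 - g 1 1) * h - 4 * hl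
    refine ⟨((l - g 1 1) / g 1 0 : K), ((g 0 0 - l) / g 1 0 : K), by simpa [hc] using hne, ?_⟩
    ext P
    cases P with
    | infty => simp [smul_infty_eq_self_iff, hc]
    | coe z =>
      have hfactor : g 1 0 * (g 1 0 * z ^ 2 + (g 1 1 - g 0 0) * z - g 0 1) =
          (z * g 1 0 - (l - g 1 1)) * (z * g 1 0 - (g 0 0 - l)) := by
        linear_combination hdet + hl
      rw [MulAction.mem_fixedBy, smul_coe_eq_self_iff, ← mul_eq_zero_iff_left hc, hfactor]
      simp [eq_div_iff hc, sub_eq_zero]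

lemma smul_eq_self_of_sq_eq_one (hK : ringChar K ≠ 2) {g : SL(2, K)} (hg : g ^ 2 = 1)
    (P : OnePoint K) : g • P = P := by
  have hinv : g = g⁻¹ := eq_inv_of_mul_eq_one_left (by rwa [← sq])
  have hentry (i j : Fin 2) : g i j = !![g 1 1, -g 0 1; -g 1 0, g 0 0] i j := by
    conv_lhs => rw [hinv, Matrix.SpecialLinearGroup.coe_inv, adjugate_fin_two]
  have hc : g 1 0 = 0 := (Ring.eq_self_iff_eq_zero_of_char_ne_two hK).mp (hentry 1 0).symm
  have hb : g 0 1 = 0 := (Ring.eq_self_iff_eq_zero_of_char_ne_two hK).mp (hentry 0 1).symm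
  have had : g 1 1 - g 0 0 = 0 := sub_eq_zero.mpr (hentry 1 1)
  cases P with
  | infty => exact smul_infty_eq_self_iff.mpr hc
  | coe z => exact smul_coe_eq_self_iff.mpr (by rw [hc, had, hb]; ring)

lemma exists_forall_sq_sub_mul_add_one_ne_zero (K : Type*) [Field K] [Finite K] :
    ∃ t : K, ∀ l : K, l ^ 2 - t * l + 1 ≠ 0 := by
  by_contra! hroot
  choose l hl using hroot
  have hl0 (t : K) : l t ≠ 0 := fun h => by simpa [h] using hl t
  have hinj : Function.Injective l := fun s t hst => by
    have hs := hl s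
    rw [hst] at hs
    exact mul_right_cancel₀ (hl0 t) (by linear_combination hl t - hs)
  obtain ⟨t, ht⟩ := Finite.surjective_of_injective hinj 0
  exact hl0 t ht

section PrimeField

variable {p : ℕ} [Fact p.Prime] {G : Subgroup SL(2, ZMod p)}

-- If `tr ((v - 1) g) ≠ 0`, then `tr (v ^ m g) = tr g + m tr ((v - 1) g)` takes every value in
-- `𝔽_p`.
lemma trace_sub_one_mul_eq_zero (hG : ∀ g ∈ G, IsSplit g) {v : SL(2, ZMod p)} (hv : v ∈ G)
    (htr : v.1.trace = 2) {g : SL(2, ZMod p)} (hg : g ∈ G) : ((v.1 - 1) * g.1).trace = 0 := by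
  by_contra hk
  obtain ⟨t, ht⟩ := exists_forall_sq_sub_mul_add_one_ne_zero (ZMod p)
  have hsq : (v.1 - 1) * (v.1 - 1) = 0 :=
    mul_self_eq_zero_of_trace_eq_zero_of_det_eq_zero (by simp [htr]) (by simp [det_sub_one_eq, htr])
  let m : ℕ := ((t - g.1.trace) / ((v.1 - 1) * g.1).trace).val
  have htrace : (v ^ m * g).1.trace = t := by
    have hpow := one_add_pow_of_mul_self_eq_zero hsq m
    rw [add_sub_cancel] at hpow
    rw [Matrix.SpecialLinearGroup.coe_mul, Matrix.SpecialLinearGroup.coe_pow, hpow, add_mul,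
      one_mul, smul_mul_assoc, trace_add, trace_smul, nsmul_eq_mul, ZMod.natCast_zmod_val,
      div_mul_cancel₀ _ hk, add_sub_cancel]
  obtain ⟨l, hl⟩ := hG _ (mul_mem (pow_mem hv m) hg)
  exact ht l (htrace ▸ hl)

lemma exists_forall_smul_eq_self_of_trace_eq_two (hG : ∀ g ∈ G, IsSplit g) {v : SL(2, ZMod p)}
    (hv : v ∈ G) (hne : v ≠ 1) (htr : v.1.trace = 2) :
    ∃ P : OnePoint (ZMod p), ∀ g ∈ G, g • P = P := by
  obtain ⟨P, hP⟩ := exists_forall_smul_eq_self_of_trace_mul_eq_zero (N := v.1 - 1)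
    (by simp [htr]) (by simp [det_sub_one_eq, htr]) (fun h => hne (Subtype.ext (sub_eq_zero.mp h)))
  exact ⟨P, fun g hg => hP g (trace_sub_one_mul_eq_zero hG hv htr hg)⟩

lemma exists_forall_pow_sixty_smul_eq_of_isSplit (hp : p ≠ 2) (hG : ∀ g ∈ G, IsSplit g) :
    ∃ P : OnePoint (ZMod p), ∀ g ∈ G, g ^ 60 • P = P := by
  by_cases hu : ∃ u ∈ G, u.1.trace ^ 2 = 4 ∧ u ^ 2 ≠ 1
  · obtain ⟨u, huG, htr, hne⟩ := hu
    obtain ⟨P, hP⟩ := exists_forall_smul_eq_self_of_trace_eq_two hG (pow_mem huG 2) hne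
      (by rw [trace_sq_eq, htr]; norm_num)
    exact ⟨P, fun g hg => hP _ (pow_mem hg 60)⟩
  · push Not at hu
    have : Finite (OnePoint (ZMod p)) := inferInstanceAs (Finite (Option (ZMod p)))
    have hfixed (g : G) (hmoved : ∃ P : OnePoint (ZMod p), g • P ≠ P) :
        (MulAction.fixedBy (OnePoint (ZMod p)) g).ncard = 2 := by
      refine ncard_fixedBy_eq_two (hG g g.2) fun htr => ?_
      obtain ⟨P, hP⟩ := hmoved
      exact hP (smul_eq_self_of_sq_eq_one ((ZMod.ringChar_zmod_n p).trans_ne hp) (hu g g.2 htr) P)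
    obtain ⟨P, hP⟩ := exists_forall_pow_sixty_smul_eq hfixed
    exact ⟨P, fun g hg => hP ⟨g, hg⟩⟩

theorem trace_commutator_pow_sixty_eq_two_of_zmod (hp : p ≠ 2) (hG : ∀ g ∈ G, IsSplit g)
    {x y : SL(2, ZMod p)} (hx : x ∈ G) (hy : y ∈ G) : ⁅x ^ 60, y ^ 60⁆.1.trace = 2 := by
  obtain ⟨P, hP⟩ := exists_forall_pow_sixty_smul_eq_of_isSplit hp hG
  exact trace_commutator_eq_two_of_smul_eq_self (hP x hx) (hP y hy)

end PrimeField

end SpecialLinear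

section PadicEmbedding

open Polynomial

lemma finite_setOf_eval_eq {A : Type*} [CommRing A] [IsDomain A] {f : A[X]} (hf : 0 < f.natDegree)
    (a : A) : {k : A | f.eval k = a}.Finite := by
  have hne : f - C a ≠ 0 := fun h => by
    rw [sub_eq_zero.mp h, natDegree_C] at hf
    exact hf.false
  refine (finite_setOfPred_isRoot hne).subset fun k hk => ?_
  simpa [sub_eq_zero] using hk

-- If `c = f 0 ≠ 0`, then `f (c N k) = c (1 + N r)` for some `r`.
lemma exists_prime_not_dvd_and_dvd_eval {f : ℤ[X]} (hf : 0 < f.natDegree) {N : ℤ} (hN : N ≠ 0) :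
    ∃ p : ℕ, p.Prime ∧ ¬ (p : ℤ) ∣ N ∧ ∃ n : ℤ, (p : ℤ) ∣ f.eval n := by
  by_cases hc : f.eval 0 = 0
  · obtain ⟨p, hp, hpp⟩ := Nat.exists_infinite_primes (N.natAbs + 1)
    refine ⟨p, hpp, fun h => ?_, 0, by rw [hc]; exact dvd_zero _⟩
    have := Nat.le_of_dvd (Int.natAbs_pos.mpr hN) (Int.natCast_dvd.mp h)
    omega
  set c := f.eval 0
  let g : ℤ[X] := f.comp (C (c * N) * X)
  have hg : 0 < g.natDegree := by
    rwa [natDegree_comp, natDegree_C_mul_X _ (mul_ne_zero hc hN), mul_one]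
  have hgeval (k : ℤ) : g.eval k = f.eval (c * N * k) := by simp [g]
  obtain ⟨k, hk⟩ :=
    ((finite_setOf_eval_eq hg c).union (finite_setOf_eval_eq hg (-c))).infinite_compl.nonempty
  simp only [Set.mem_compl_iff, Set.mem_union, Set.mem_ofPred_eq, not_or, hgeval] at hk
  obtain ⟨r, hr⟩ : c * N * k - 0 ∣ f.eval (c * N * k) - c := sub_dvd_eval_sub _ _ _
  have hval : f.eval (c * N * k) = c * (1 + N * (k * r)) := by linear_combination hr
  have hunit : (1 + N * (k * r)).natAbs ≠ 1 := fun h => by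
    rcases Int.natAbs_eq_iff.mp h with h | h
    · exact hk.1 (by rw [hval, h]; simp)
    · exact hk.2 (by rw [hval, h]; simp)
  obtain ⟨p, hp, hpd⟩ := Nat.exists_prime_and_dvd hunit
  rw [← Int.natCast_dvd] at hpd
  refine ⟨p, hp, fun h => ?_, c * N * k, hval ▸ hpd.mul_left _⟩
  exact (Nat.prime_iff_prime_int.mp hp).not_dvd_one ((Int.dvd_add_left (h.mul_right _)).mp hpd)

lemma exists_bezout_eq_C_of_separable_map {f : ℤ[X]}
    (hf : (f.map (Int.castRingHom ℚ)).Separable) (hdeg : 0 < f.natDegree) :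
    ∃ (u v : ℤ[X]) (r : ℤ), r ≠ 0 ∧ f * u + derivative f * v = C r := by
  obtain ⟨u, v, -, -, huv⟩ := exists_mul_add_mul_eq_C_resultant f (derivative f) le_rfl le_rfl
    (Or.inl hdeg.ne')
  refine ⟨u, v, _, fun hr => ?_, huv⟩
  have hne := resultant_ne_zero _ _ hf
  rw [derivative_map, natDegree_map_eq_of_injective (RingHom.injective_int _),
    natDegree_map_eq_of_injective (RingHom.injective_int _), resultant_map_map, hr] at hne
  exact hne (map_zero _)

lemma exists_padicInt_aeval_eq_zero {f : ℤ[X]} (hf : (f.map (Int.castRingHom ℚ)).Separable)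
    (hdeg : 0 < f.natDegree) {N : ℤ} (hN : N ≠ 0) :
    ∃ (p : ℕ) (_ : Fact p.Prime), ¬ (p : ℤ) ∣ N ∧ ∃ z : ℤ_[p], aeval z f = 0 := by
  obtain ⟨u, v, r, hr, huv⟩ := exists_bezout_eq_C_of_separable_map hf hdeg
  obtain ⟨p, hp, hpN, n, hn⟩ := exists_prime_not_dvd_and_dvd_eval hdeg (mul_ne_zero hN hr)
  have : Fact p.Prime := ⟨hp⟩
  have hderiv : ¬ (p : ℤ) ∣ (derivative f).eval n := fun h => hpN <| by
    have heval := congrArg (eval n) huv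
    simp only [eval_add, eval_mul, eval_C] at heval
    exact heval ▸ ((hn.mul_right _).add (h.mul_right _)).mul_left _
  have hcast (g : ℤ[X]) : aeval (n : ℤ_[p]) g = ((g.eval n : ℤ) : ℤ_[p]) := by
    simpa using aeval_algebraMap_apply ℤ_[p] n g
  have hunit : ‖aeval (n : ℤ_[p]) (derivative f)‖ = 1 := by
    rw [hcast]
    exact PadicInt.norm_intCast_eq_one_iff.mpr
      ((Nat.prime_iff_prime_int.mp hp).coprime_iff_not_dvd.mpr hderiv).symm
  have hnorm : ‖aeval (n : ℤ_[p]) f‖ < ‖aeval (n : ℤ_[p]) (derivative f)‖ ^ 2 := by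
    rw [hunit, one_pow, hcast]
    exact (PadicInt.norm_int_lt_one_iff_dvd _).mpr hn
  obtain ⟨z, hz, -⟩ := hensels_lemma hnorm
  exact ⟨p, this, fun h => hpN (h.mul_right _), z, hz⟩

variable (L : Type*) [Field L] [NumberField L]

lemma exists_nonempty_ringHom_padic {N : ℤ} (hN : N ≠ 0) :
    ∃ (p : ℕ) (_ : Fact p.Prime), ¬ (p : ℤ) ∣ N ∧ Nonempty (L →+* ℚ_[p]) := by
  let pb := Field.powerBasisOfFiniteOfSeparable ℚ L
  have hint : IsIntegral ℚ pb.gen := Algebra.IsIntegral.isIntegral _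
  obtain ⟨b, hb, hf⟩ :=
    IsLocalization.integerNormalization_spec (nonZeroDivisors ℤ) (minpoly ℚ pb.gen)
  set f := IsLocalization.integerNormalization (nonZeroDivisors ℤ) (minpoly ℚ pb.gen)
  have hb0 : (b : ℚ) ≠ 0 := Int.cast_ne_zero.mpr (nonZeroDivisors.ne_zero hb)
  replace hf : f.map (Int.castRingHom ℚ) = C (b : ℚ) * minpoly ℚ pb.gen := by
    rw [← algebraMap_int_eq, hf, ← Int.cast_smul_eq_zsmul ℚ, smul_eq_C_mul]
  have hsep : (f.map (Int.castRingHom ℚ)).Separable := by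
    rw [hf]
    exact (minpoly.irreducible hint).separable.unit_mul (isUnit_C.mpr hb0.isUnit)
  have hdeg : 0 < f.natDegree := by
    rw [← natDegree_map_eq_of_injective (RingHom.injective_int (Int.castRingHom ℚ)), hf,
      natDegree_C_mul hb0]
    exact minpoly.natDegree_pos hint
  obtain ⟨p, hp, hpN, z, hz⟩ := exists_padicInt_aeval_eq_zero hsep hdeg hN
  have hroot : aeval (z : ℚ_[p]) (minpoly ℚ pb.gen) = 0 := by
    have hzf : aeval (z : ℚ_[p]) (f.map (Int.castRingHom ℚ)) = 0 := by
      rw [← algebraMap_int_eq, aeval_map_algebraMap, ← PadicInt.algebraMap_apply,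
        aeval_algebraMap_apply, hz, map_zero]
    simpa [hf, nonZeroDivisors.ne_zero hb] using hzf
  exact ⟨p, hp, hpN, ⟨(pb.lift (z : ℚ_[p]) hroot).toRingHom⟩⟩

lemma mem_range_algebraMap_padicInt_of_isIntegral_smul {p : ℕ} [Fact p.Prime] {d : ℤ}
    (hd : ¬ (p : ℤ) ∣ d) {x : ℚ_[p]} (hx : IsIntegral ℤ (d • x)) :
    x ∈ (algebraMap ℤ_[p] ℚ_[p]).range := by
  obtain ⟨y, hy⟩ := IsIntegrallyClosed.isIntegral_iff.mp (hx.tower_top (A := ℤ_[p]))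
  have hunit : IsUnit (d : ℤ_[p]) := PadicInt.isUnit_iff.mpr <|
    PadicInt.norm_intCast_eq_one_iff.mpr
      ((Nat.prime_iff_prime_int.mp Fact.out).coprime_iff_not_dvd.mpr hd).symm
  obtain ⟨e, he⟩ := hunit.exists_left_inv
  refine ⟨e * y, ?_⟩
  rw [map_mul, hy, zsmul_eq_mul, ← mul_assoc, ← map_intCast (algebraMap ℤ_[p] ℚ_[p]), ← map_mul,
    he, map_one, one_mul]

lemma exists_ringHom_padic_mem_range {s : Set L} (hs : s.Finite) {N : ℤ} (hN : N ≠ 0) :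
    ∃ (p : ℕ) (_ : Fact p.Prime), ¬ (p : ℤ) ∣ N ∧
      ∃ σ : L →+* ℚ_[p], ∀ c ∈ s, σ c ∈ (algebraMap ℤ_[p] ℚ_[p]).range := by
  have : Algebra.IsAlgebraic ℤ L :=
    (IsFractionRing.comap_isAlgebraic_iff (A := ℤ) (K := ℚ)).mpr inferInstance
  obtain ⟨d, hd, hint⟩ := Algebra.IsAlgebraic.exists_integral_multiples ℤ hs.toFinset
  obtain ⟨p, hp, hpN, ⟨σ⟩⟩ := exists_nonempty_ringHom_padic L (mul_ne_zero hN hd)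
  refine ⟨p, hp, fun h => hpN (h.mul_right _), σ, fun c hc => ?_⟩
  refine mem_range_algebraMap_padicInt_of_isIntegral_smul (fun h => hpN (h.mul_left _)) ?_
  rw [← map_zsmul]
  exact (hint c (hs.mem_toFinset.mpr hc)).map σ.toIntAlgHom

end PadicEmbedding

section NumberField

universe u v

open Matrix
open scoped MatrixGroups commutatorElement

section Map

variable {A B : Type*} [CommRing A] [CommRing B]

lemma trace_map_eq (f : A →+* B) (g : SL(2, A)) :
    (SpecialLinearGroup.map f g).1.trace = f g.1.trace := by
  simp [trace_fin_two]

lemma trace_commutator_pow_map_eq (f : A →+* B) (x y : SL(2, A)) (n : ℕ) :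
    ⁅SpecialLinearGroup.map f x ^ n, SpecialLinearGroup.map f y ^ n⁆.1.trace =
      f ⁅x ^ n, y ^ n⁆.1.trace := by
  rw [← trace_map_eq, map_commutatorElement, map_pow, map_pow]

lemma exists_map_eq_of_forall_mem_range {f : A →+* B} (hf : Function.Injective f) {g : SL(2, B)}
    (hg : ∀ i j, g i j ∈ f.range) : ∃ g' : SL(2, A), SpecialLinearGroup.map f g' = g := by
  choose r hr using hg
  have hmap : f.mapMatrix (of r) = g.1 := by
    ext i j
    exact hr i j
  exact ⟨⟨of r, hf (by rw [f.map_det, hmap, g.det_coe, map_one])⟩, Subtype.ext hmap⟩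

-- The finite set consists of the entries of `x` and `y` and the inverse of `tr ⁅x ^ n, y ^ n⁆ - 2`.
lemma exists_finite_forall_exists_map_eq_and_isUnit {K : Type*} [Field K] {x y : SL(2, K)} {n : ℕ}
    (hne : ⁅x ^ n, y ^ n⁆.1.trace ≠ 2) :
    ∃ s : Set K, s.Finite ∧ ∀ {A : Type u} {B : Type v} [CommRing A] [CommRing B] (f : A →+* B)
      (σ : K →+* B), Function.Injective f → (∀ c ∈ s, σ c ∈ f.range) →
        ∃ x' y' : SL(2, A), SpecialLinearGroup.map f x' = SpecialLinearGroup.map σ x ∧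
          SpecialLinearGroup.map f y' = SpecialLinearGroup.map σ y ∧
          IsUnit (⁅x' ^ n, y' ^ n⁆.1.trace - 2) := by
  let entries (g : SL(2, K)) : Set K := Set.range fun ij : Fin 2 × Fin 2 => g ij.1 ij.2
  refine ⟨insert (⁅x ^ n, y ^ n⁆.1.trace - 2)⁻¹ (entries x ∪ entries y),
    ((Set.finite_range _).union (Set.finite_range _)).insert _, fun f σ hf hσ => ?_⟩
  obtain ⟨x', hx'⟩ := exists_map_eq_of_forall_mem_range hf (g := SpecialLinearGroup.map σ x)
    fun i j => hσ _ (Or.inr (Or.inl ⟨(i, j), rfl⟩))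
  obtain ⟨y', hy'⟩ := exists_map_eq_of_forall_mem_range hf (g := SpecialLinearGroup.map σ y)
    fun i j => hσ _ (Or.inr (Or.inr ⟨(i, j), rfl⟩))
  obtain ⟨r, hr⟩ := hσ _ (Set.mem_insert _ _)
  refine ⟨x', y', hx', hy', IsUnit.of_mul_eq_one r (hf ?_)⟩
  rw [map_mul, hr, map_sub, ← trace_commutator_pow_map_eq, hx', hy', trace_commutator_pow_map_eq,
    map_ofNat, ← map_ofNat σ 2, ← map_sub, ← map_mul, mul_inv_cancel₀ (sub_ne_zero.mpr hne),
    map_one, map_one]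

lemma IsSplit.map {g : SL(2, A)} (hg : IsSplit g) (f : A →+* B) :
    IsSplit (SpecialLinearGroup.map f g) := by
  obtain ⟨l, hl⟩ := hg
  refine ⟨f l, ?_⟩
  rw [trace_map_eq]
  simpa using congrArg f hl

open Polynomial in
lemma isIntegral_of_sq_sub_mul_add_one_eq_zero [Algebra A B] {t : A} {l : B}
    (hl : l ^ 2 - algebraMap A B t * l + 1 = 0) : IsIntegral A l :=
  ⟨X ^ 2 - C t * X + 1, by monicity!, by simpa using hl⟩

lemma IsSplit.of_map_algebraMap [IsIntegrallyClosed A] [IsDomain A] {K : Type*} [Field K]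
    [Algebra A K] [IsFractionRing A K] {g : SL(2, A)}
    (hg : IsSplit (SpecialLinearGroup.map (algebraMap A K) g)) : IsSplit g := by
  obtain ⟨l, hl⟩ := hg
  rw [trace_map_eq] at hl
  obtain ⟨m, rfl⟩ :=
    IsIntegrallyClosed.isIntegral_iff.mp (isIntegral_of_sq_sub_mul_add_one_eq_zero hl)
  exact ⟨m, IsFractionRing.injective A K (by simpa using hl)⟩

end Map

lemma not_isUnit_trace_commutator_pow_sixty_sub_two_of_padicInt {p : ℕ} [Fact p.Prime] (hp : p ≠ 2)
    {G : Subgroup SL(2, ℤ_[p])} (hG : ∀ g ∈ G, IsSplit g) {x y : SL(2, ℤ_[p])} (hx : x ∈ G)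
    (hy : y ∈ G) : ¬ IsUnit (⁅x ^ 60, y ^ 60⁆.1.trace - 2) := by
  let ψ := SpecialLinearGroup.map (n := Fin 2) (PadicInt.toZMod (p := p))
  have hsplit : ∀ g ∈ G.map ψ, IsSplit g := by
    rintro _ ⟨g, hg, rfl⟩
    exact (hG g hg).map _
  have htrace := trace_commutator_pow_sixty_eq_two_of_zmod hp hsplit
    (Subgroup.mem_map_of_mem ψ hx) (Subgroup.mem_map_of_mem ψ hy)
  rw [trace_commutator_pow_map_eq] at htrace
  intro hunit
  have := hunit.map (PadicInt.toZMod (p := p))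
  rw [map_sub, htrace, map_ofNat, sub_self] at this
  exact not_isUnit_zero this

theorem trace_commutator_pow_sixty_eq_two_of_numberField {L : Type*} [Field L] [NumberField L]
    {Γ : Subgroup SL(2, L)} (hΓ : ∀ g ∈ Γ, IsSplit g) {x y : SL(2, L)} (hx : x ∈ Γ)
    (hy : y ∈ Γ) : ⁅x ^ 60, y ^ 60⁆.1.trace = 2 := by
  by_contra hne
  obtain ⟨s, hs, hlift⟩ := exists_finite_forall_exists_map_eq_and_isUnit hne
  obtain ⟨p, _, hp, σ, hσ⟩ := exists_ringHom_padic_mem_range L hs two_ne_zero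
  let ι := algebraMap ℤ_[p] ℚ_[p]
  obtain ⟨x', y', hx', hy', hunit⟩ := hlift ι σ (IsFractionRing.injective ℤ_[p] ℚ_[p]) hσ
  have hG : ∀ g ∈ (Γ.map (SpecialLinearGroup.map σ)).comap (SpecialLinearGroup.map ι),
      IsSplit g := by
    rintro g ⟨g', hg', heq⟩
    exact IsSplit.of_map_algebraMap (K := ℚ_[p]) (heq ▸ (hΓ g' hg').map σ)
  have hp2 : p ≠ 2 := by
    rintro rfl
    exact hp dvd_rfl
  exact not_isUnit_trace_commutator_pow_sixty_sub_two_of_padicInt hp2 hG ⟨x, hx, hx'.symm⟩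
    ⟨y, hy, hy'.symm⟩ hunit

end NumberField

section Torsion

open Matrix
open scoped MatrixGroups commutatorElement Nat

lemma dvd_factorial_pow_of_totient_le {n B : ℕ} (hn : n ≠ 0) (h : φ n ≤ B) :
    n ∣ (B + 1)! ^ (B + 1) := by
  rw [Nat.dvd_iff_prime_pow_dvd_dvd]
  intro p k hp hpk
  rcases Nat.eq_zero_or_pos k with rfl | hk
  · simp
  have htotient : p ^ (k - 1) * (p - 1) ≤ B := by
    rw [← Nat.totient_prime_pow hp hk]
    exact (Nat.le_of_dvd (Nat.totient_pos.mpr hn.bot_lt) (Nat.totient_dvd_of_dvd hpk)).trans h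
  have hkB : k ≤ B + 1 := by
    have := Nat.lt_pow_self (n := k - 1) hp.one_lt
    have := Nat.le_mul_of_pos_right (p ^ (k - 1)) (Nat.sub_pos_of_lt hp.one_lt)
    omega
  have hpB : p ≤ B + 1 := by
    have := Nat.le_mul_of_pos_left (p - 1) (pow_pos hp.pos (k - 1))
    omega
  exact (pow_dvd_pow_of_dvd (Nat.dvd_factorial hp.pos hpB) k).trans (pow_dvd_pow _ hkB)

lemma exists_pow_eq_mul_add {R : Type*} [CommRing R] {S : Subring R} {t : R} (ht : t ∈ S) (n : ℕ) :
    ∃ a ∈ S, ∃ b ∈ S, ∀ l : R, l ^ 2 - t * l + 1 = 0 → l ^ n = a * l + b := by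
  induction n with
  | zero => exact ⟨0, S.zero_mem, 1, S.one_mem, fun l _ => by simp⟩
  | succ n ih =>
    obtain ⟨a, ha, b, hb, hpow⟩ := ih
    refine ⟨a * t + b, S.add_mem (S.mul_mem ha ht) hb, -a, S.neg_mem ha, fun l hl => ?_⟩
    rw [pow_succ, hpow l hl]
    linear_combination a * hl

-- Both roots `l` and `l⁻¹ = t - l` satisfy `l ^ q = a * l + b` with the same `a b ∈ F`, and if
-- `a = 0` then `l ^ q = l ^ (-q)`.
lemma mem_or_pow_two_mul_eq_one {E : Type*} [Field E] {F : Subfield E} {t l : E} (ht : t ∈ F)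
    (hl : l ^ 2 - t * l + 1 = 0) {q : ℕ} (hq : l ^ q ∈ F) : l ∈ F ∨ l ^ (2 * q) = 1 := by
  obtain ⟨a, ha, b, hb, hpow⟩ := exists_pow_eq_mul_add (S := F.toSubring) ht q
  have hlq := hpow l hl
  by_cases ha0 : a = 0
  · have hlq' := hpow (t - l) (by linear_combination hl)
    rw [ha0, zero_mul] at hlq hlq'
    right
    calc l ^ (2 * q) = l ^ q * (t - l) ^ q := by rw [two_mul, pow_add, hlq', ← hlq]
      _ = 1 := by rw [← mul_pow, show l * (t - l) = 1 by linear_combination -hl, one_pow]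
  · left
    rw [show l = (l ^ q - b) / a by rw [hlq]; field_simp; ring]
    exact F.div_mem (F.sub_mem hq hb) ha

lemma totient_orderOf_le_finrank {L : Type*} [Field L] [NumberField L] {l : L}
    (hl : IsOfFinOrder l) : φ (orderOf l) ≤ Module.finrank ℚ L := by
  rw [← Polynomial.natDegree_cyclotomic (orderOf l) ℚ,
    Polynomial.cyclotomic_eq_minpoly_rat (IsPrimitiveRoot.orderOf l) hl.orderOf_pos]
  exact minpoly.natDegree_le l

section Extension

variable {F E : Type*} [Field F] [Field E] [Algebra F E]

open Polynomial in
lemma finrank_adjoin_simple_le_two {t : F} {l : E}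
    (hl : l ^ 2 - algebraMap F E t * l + 1 = 0) :
    Module.finrank F (IntermediateField.adjoin F {l}) ≤ 2 := by
  rw [IntermediateField.adjoin.finrank (isIntegral_of_sq_sub_mul_add_one_eq_zero hl)]
  have hdeg : (X ^ 2 - C t * X + 1 : F[X]).natDegree = 2 := by compute_degree!
  rw [← hdeg]
  exact natDegree_le_natDegree (minpoly.min F l (by monicity!) (by simpa using hl))

variable [NumberField F]

lemma totient_orderOf_le_finrank_mul_two {t : F} {l : E}
    (hl : l ^ 2 - algebraMap F E t * l + 1 = 0) (hfin : IsOfFinOrder l) :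
    φ (orderOf l) ≤ Module.finrank ℚ F * 2 := by
  let M := IntermediateField.adjoin F {l}
  have : FiniteDimensional F M :=
    IntermediateField.adjoin.finiteDimensional (isIntegral_of_sq_sub_mul_add_one_eq_zero hl)
  have : NumberField M := NumberField.of_module_finite F M
  let l' : M := ⟨l, IntermediateField.mem_adjoin_simple_self F l⟩
  have horder : orderOf l' = orderOf l :=
    (orderOf_injective (algebraMap M E : M →* E) (algebraMap M E).injective l').symm
  have hfin' : IsOfFinOrder l' := by rwa [← orderOf_pos_iff, horder, orderOf_pos_iff]
  calc φ (orderOf l) ≤ Module.finrank ℚ M := horder ▸ totient_orderOf_le_finrank hfin'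
    _ = Module.finrank ℚ F * Module.finrank F M := (Module.finrank_mul_finrank ℚ F M).symm
    _ ≤ Module.finrank ℚ F * 2 := Nat.mul_le_mul_left _ (finrank_adjoin_simple_le_two hl)

variable (F E) in
lemma exists_finiteDimensional_forall_mem_of_pow_mem :
    ∃ L : IntermediateField F E, FiniteDimensional F L ∧
      ∀ (t : F) (l : E), l ^ 2 - algebraMap F E t * l + 1 = 0 →
        ∀ q ≠ 0, l ^ q ∈ (algebraMap F E).range → l ∈ L := by
  let B := Module.finrank ℚ F * 2
  let W : Set E := {z | z ^ (B + 1)! ^ (B + 1) = 1}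
  have hpos : 0 < (B + 1)! ^ (B + 1) := pow_pos (Nat.factorial_pos _) _
  have : Finite W := (Polynomial.nthRootsFinset _ (1 : E)).finite_toSet.subset
    fun z hz => (Polynomial.mem_nthRootsFinset hpos _).mpr hz
  refine ⟨IntermediateField.adjoin F W, IntermediateField.finiteDimensional_adjoin fun z hz =>
    .of_pow hpos (hz ▸ isIntegral_one), fun t l hl q hq hlq => ?_⟩
  rcases mem_or_pow_two_mul_eq_one (F := (algebraMap F E).fieldRange) ⟨t, rfl⟩ hl hlq with
    ⟨a, rfl⟩ | htorsion
  · exact IntermediateField.algebraMap_mem _ a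
  · have hfin : IsOfFinOrder l := isOfFinOrder_iff_pow_eq_one.mpr ⟨2 * q, by omega, htorsion⟩
    exact IntermediateField.subset_adjoin F W <| orderOf_dvd_iff_pow_eq_one.mp <|
      dvd_factorial_pow_of_totient_le hfin.orderOf_pos.ne'
        (totient_orderOf_le_finrank_mul_two hl hfin)

end Extension

/-- An element of `SL₂(A)` is power-split in an `A`-algebra `B` if its characteristic polynomial
has a root in `B` some positive power of which comes from `A`. -/
def IsPowerSplit {A : Type*} (B : Type*) [CommRing A] [CommRing B] [Algebra A B] (g : SL(2, A)) :
    Prop :=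
  ∃ l : B, l ^ 2 - algebraMap A B g.1.trace * l + 1 = 0 ∧
    ∃ q ≠ 0, l ^ q ∈ (algebraMap A B).range

theorem trace_commutator_pow_sixty_eq_two_of_isPowerSplit {F E : Type*} [Field F] [NumberField F]
    [Field E] [Algebra F E] {Γ : Subgroup SL(2, F)} (hΓ : ∀ g ∈ Γ, IsPowerSplit E g)
    {x y : SL(2, F)} (hx : x ∈ Γ) (hy : y ∈ Γ) : ⁅x ^ 60, y ^ 60⁆.1.trace = 2 := by
  obtain ⟨L, _, hL⟩ := exists_finiteDimensional_forall_mem_of_pow_mem F E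
  have : NumberField L := NumberField.of_module_finite F L
  let ψ := SpecialLinearGroup.map (n := Fin 2) (algebraMap F L)
  have hsplit : ∀ g ∈ Γ.map ψ, IsSplit g := by
    rintro _ ⟨g, hg, rfl⟩
    obtain ⟨l, hl, q, hq, hlq⟩ := hΓ g hg
    refine ⟨⟨l, hL _ l hl q hq hlq⟩, Subtype.ext ?_⟩
    rw [trace_map_eq]
    exact hl
  have htrace := trace_commutator_pow_sixty_eq_two_of_numberField hsplit
    (Subgroup.mem_map_of_mem ψ hx) (Subgroup.mem_map_of_mem ψ hy)
  rw [trace_commutator_pow_map_eq, ← map_ofNat (algebraMap F L) 2] at htrace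
  exact (algebraMap F L).injective htrace

end Torsion

section Specialization

open Matrix
open scoped MatrixGroups commutatorElement

lemma not_isUnit_trace_commutator_pow_sixty_sub_two_of_finiteType {R K : Type*} [CommRing R]
    [Algebra ℚ R] [Algebra.FiniteType ℚ R] [CommRing K] [Nontrivial K] [Algebra R K]
    {Γ : Subgroup SL(2, R)} (hΓ : ∀ g ∈ Γ, IsPowerSplit K g) {x y : SL(2, R)} (hx : x ∈ Γ)
    (hy : y ∈ Γ) : ¬ IsUnit (⁅x ^ 60, y ^ 60⁆.1.trace - 2) := by
  let S := integralClosure R K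
  obtain ⟨M, _⟩ := Ideal.exists_maximal S
  let P := M.under R
  have : P.IsMaximal := Ideal.isMaximal_comap_of_isIntegral_of_isMaximal M
  let _ : Field (R ⧸ P) := Ideal.Quotient.field P
  let _ : Field (S ⧸ M) := Ideal.Quotient.field M
  have hfinite : Module.Finite ℚ (R ⧸ P) := finite_of_finite_type_of_isJacobsonRing ℚ (R ⧸ P)
  have : CharZero (R ⧸ P) := algebraRat.charZero _
  have : NumberField (R ⧸ P) := { to_finiteDimensional := by convert hfinite; subsingleton }
  let ψ := SpecialLinearGroup.map (n := Fin 2) (Ideal.Quotient.mk P)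
  have hsplit : ∀ g ∈ Γ.map ψ, IsPowerSplit (S ⧸ M) g := by
    rintro _ ⟨g, hg, rfl⟩
    obtain ⟨l, hl, q, hq, a, ha⟩ := hΓ g hg
    let l' : S := ⟨l, isIntegral_of_sq_sub_mul_add_one_eq_zero hl⟩
    have hl' : l' ^ 2 - algebraMap R S g.1.trace * l' + 1 = 0 := Subtype.ext hl
    have ha' : algebraMap R S a = l' ^ q := Subtype.ext ha
    refine ⟨Ideal.Quotient.mk M l', ?_, q, hq, Ideal.Quotient.mk P a, ?_⟩
    · rw [trace_map_eq]
      exact congrArg (Ideal.Quotient.mk M) hl'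
    · exact congrArg (Ideal.Quotient.mk M) ha'
  have htrace := trace_commutator_pow_sixty_eq_two_of_isPowerSplit hsplit
    (Subgroup.mem_map_of_mem ψ hx) (Subgroup.mem_map_of_mem ψ hy)
  rw [trace_commutator_pow_map_eq] at htrace
  intro hunit
  have := hunit.map (Ideal.Quotient.mk P)
  rw [map_sub, htrace, map_ofNat, sub_self] at this
  exact not_isUnit_zero this

theorem trace_commutator_pow_sixty_eq_two_of_exists_pow_mem {K : Type*} [Field K] [CharZero K]
    {R₀ : Subalgebra ℚ K} (hR₀ : R₀.FG) {Γ : Subgroup SL(2, K)}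
    (hΓ : ∀ g ∈ Γ, ∃ l : K, l ^ 2 - g.1.trace * l + 1 = 0 ∧ ∃ q ≠ 0, l ^ q ∈ R₀)
    {x y : SL(2, K)} (hx : x ∈ Γ) (hy : y ∈ Γ) : ⁅x ^ 60, y ^ 60⁆.1.trace = 2 := by
  by_contra hne
  obtain ⟨s, hs, hlift⟩ := exists_finite_forall_exists_map_eq_and_isUnit hne
  let R := R₀ ⊔ Algebra.adjoin ℚ s
  have : Algebra.FiniteType ℚ R :=
    R.fg_iff_finiteType.mp (hR₀.sup (Subalgebra.fg_def.mpr ⟨s, hs, rfl⟩))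
  have hsR : ∀ c ∈ s, c ∈ R := fun c hc => le_sup_right (a := R₀) (Algebra.subset_adjoin hc)
  obtain ⟨x', y', hx', hy', hunit⟩ := hlift (algebraMap R K) (RingHom.id K)
    Subtype.val_injective fun c hc => ⟨⟨c, hsR c hc⟩, rfl⟩
  have hsplit : ∀ g ∈ Γ.comap (SpecialLinearGroup.map (algebraMap R K)), IsPowerSplit K g := by
    intro g hg
    obtain ⟨l, hl, q, hq, hlq⟩ := hΓ _ hg
    exact ⟨l, trace_map_eq (algebraMap R K) g ▸ hl, q, hq, ⟨_, le_sup_left (a := R₀) hlq⟩, rfl⟩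
  exact not_isUnit_trace_commutator_pow_sixty_sub_two_of_finiteType hsplit
    (Subgroup.mem_comap.mpr (hx'.symm ▸ hx)) (Subgroup.mem_comap.mpr (hy'.symm ▸ hy)) hunit

end Specialization

section Density

open Matrix
open scoped MatrixGroups commutatorElement

lemma trace_commutator_swap {R : Type*} [CommRing R] (x y : SL(2, R)) :
    ⁅y, x⁆.1.trace = ⁅x, y⁆.1.trace := by
  rw [← commutatorElement_inv, trace_inv_eq_trace]

lemma trace_commutator_T_pow (n : ℕ) :
    ⁅ModularGroup.T ^ n, ModularGroup.T.transpose ^ n⁆.1.trace = (n : ℤ) ^ 4 + 2 := by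
  have hT : (ModularGroup.T ^ n).1 = !![1, (n : ℤ); 0, 1] := by
    exact_mod_cast ModularGroup.coe_T_zpow n
  have hT' : (ModularGroup.T.transpose ^ n).1 = !![1, 0; (n : ℤ), 1] := by
    rw [Matrix.SpecialLinearGroup.coe_pow, Matrix.SpecialLinearGroup.coe_transpose, ← transpose_pow,
      ← Matrix.SpecialLinearGroup.coe_pow, hT]
    ext i j
    fin_cases i <;> fin_cases j <;> rfl
  rw [← sub_eq_iff_eq_add, trace_commutator_sub_two, hT, hT']
  simp only [of_apply, cons_val', cons_val_zero, cons_val_one, cons_val_fin_one]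
  ring

lemma exists_trace_commutator_pow_ne_two (R : Type*) [CommRing R] [CharZero R] {n : ℕ}
    (hn : n ≠ 0) : ∃ x y : SL(2, R), ⁅x ^ n, y ^ n⁆.1.trace ≠ 2 := by
  refine ⟨SpecialLinearGroup.map (Int.castRingHom R) ModularGroup.T,
    SpecialLinearGroup.map (Int.castRingHom R) ModularGroup.T.transpose, ?_⟩
  rw [trace_commutator_pow_map_eq, trace_commutator_T_pow, eq_intCast]
  norm_cast
  simpa using hn

lemma ZariskiDenseSet.forall_trace_commutator_pow_eq_two {s : Set SL(2, ℂ)}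
    (hs : ZariskiDenseSet s) {n : ℕ} {y : SL(2, ℂ)}
    (h : ∀ x ∈ s, ⁅x ^ n, y ^ n⁆.1.trace = 2) (x : SL(2, ℂ)) : ⁅x ^ n, y ^ n⁆.1.trace = 2 := by
  let X := mvPolynomialX (Fin 2) (Fin 2) ℂ
  let Y := (MvPolynomial.C (σ := Fin 2 × Fin 2)).mapMatrix y.1
  let P := (X ^ n * Y ^ n * (X ^ n).adjugate * (Y ^ n).adjugate).trace - 2
  have hP (g : SL(2, ℂ)) :
      MvPolynomial.eval (fun ij => g ij.1 ij.2) P = ⁅g ^ n, y ^ n⁆.1.trace - 2 := by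
    let ε := MvPolynomial.eval fun ij : Fin 2 × Fin 2 => g ij.1 ij.2
    have hX : ε.mapMatrix X = g.1 := mvPolynomialX_mapMatrix_eval g.1
    have hY : ε.mapMatrix Y = y.1 := by
      ext i j
      exact MvPolynomial.eval_C _
    rw [map_sub, map_ofNat, AddMonoidHom.map_trace, ← RingHom.mapMatrix_apply]
    simp only [map_mul, map_pow, RingHom.map_adjugate]
    rw [hX, hY]
    rfl
  exact sub_eq_zero.mp (hP x ▸ hs P (fun g hg => by rw [hP, h g hg, sub_self]) x)

lemma ZariskiDenseSet.exists_trace_commutator_pow_ne_two {s : Set SL(2, ℂ)}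
    (hs : ZariskiDenseSet s) {n : ℕ} (hn : n ≠ 0) :
    ∃ x ∈ s, ∃ y ∈ s, ⁅x ^ n, y ^ n⁆.1.trace ≠ 2 := by
  by_contra! heq
  obtain ⟨x, y, hne⟩ := _root_.exists_trace_commutator_pow_ne_two ℂ hn
  refine hne (hs.forall_trace_commutator_pow_eq_two (fun x' hx' => ?_) x)
  rw [trace_commutator_swap]
  refine hs.forall_trace_commutator_pow_eq_two (fun y' hy' => ?_) y
  exact heq y' hy' x' hx'

end Density

section Eigenvalues

open Matrix
open scoped MatrixGroups Pointwise

lemma isEigenvalue_iff {g : SL(2, ℂ)} {l : ℂ} :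
    IsEigenvalue g l ↔ l ^ 2 - g.1.trace * l + 1 = 0 := by
  have hcharpoly : (g.1 - l • 1).det = l ^ 2 - g.1.trace * l + 1 := by
    have hdet := g.det_coe
    rw [det_fin_two] at hdet
    simp only [det_fin_two, trace_fin_two, Matrix.sub_apply, Matrix.smul_apply, one_apply_eq,
      ne_eq, zero_ne_one, one_ne_zero, not_false_eq_true, one_apply_ne, smul_eq_mul]
    linear_combination hdet
  rw [IsEigenvalue, hcharpoly]

lemma exists_isEigenvalue (g : SL(2, ℂ)) : ∃ l, IsEigenvalue g l := by
  obtain ⟨l, hl⟩ := exists_quadratic_eq_zero (a := 1) (b := -g.1.trace) (c := 1) one_ne_zero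
    (IsAlgClosed.exists_eq_mul_self _)
  exact ⟨l, isEigenvalue_iff.mpr (by linear_combination hl)⟩

section MultIndep

variable {K : Type*} [DivisionRing K] {x y : K}

lemma MultIndep.symm (h : MultIndep x y) : MultIndep y x :=
  fun p q hpq => (h q p hpq.symm).symm

lemma not_multIndep_self (x : K) : ¬ MultIndep x x :=
  fun h => one_ne_zero (h 1 1 rfl).1

lemma exists_pow_eq_zpow_of_not_multIndep (hx : ¬ IsOfFinOrder x) (h : ¬ MultIndep x y) :
    ∃ q ≠ 0, ∃ m : ℤ, y ^ q = x ^ m := by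
  simp only [MultIndep, not_forall, not_and_or] at h
  obtain ⟨p, q, hpq, hne⟩ := h
  have hp : p ≠ 0 := by
    rintro rfl
    have hq : q ≠ 0 := by simpa using hne
    exact hx (isOfFinOrder_iff_zpow_eq_one.mpr ⟨q, hq, by rw [hpq, zpow_zero]⟩)
  refine ⟨p.natAbs, Int.natAbs_ne_zero.mpr hp, ?_⟩
  rcases Int.natAbs_eq p with hp' | hp'
  · exact ⟨q, by rw [← zpow_natCast, ← hp', hpq]⟩
  · exact ⟨-q, by rw [← zpow_natCast, ← neg_eq_iff_eq_neg.mpr hp', _root_.zpow_neg, _root_.zpow_neg,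
      hpq]⟩

end MultIndep

lemma exists_isEigenvalue_forall_multIndep {Γ : Subgroup SL(2, ℂ)}
    (hΓ : ZariskiDenseSet (Γ : Set SL(2, ℂ))) {s : Set ℂ} (hfin : s.Finite)
    (hs : ∀ z ∈ s, ¬ IsOfFinOrder z) :
    ∃ l : ℂ, (¬ IsOfFinOrder l ∧ ∃ g ∈ Γ, IsEigenvalue g l) ∧ ∀ z ∈ s, MultIndep z l := by
  by_contra! hdep
  obtain ⟨x, hx, y, hy, hxy⟩ := hΓ.exists_trace_commutator_pow_ne_two (n := 60) (by norm_num)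
  let R := Algebra.adjoin ℚ (s ∪ s⁻¹)
  have hR : R.FG := Subalgebra.fg_def.mpr ⟨_, hfin.union hfin.inv, rfl⟩
  have hzpow : ∀ z ∈ s, ∀ m : ℤ, z ^ m ∈ R := by
    rintro z hz (m | m)
    · rw [Int.ofNat_eq_natCast, zpow_natCast]
      exact R.pow_mem (Algebra.subset_adjoin (Or.inl hz)) m
    · rw [zpow_negSucc, ← inv_pow]
      exact R.pow_mem (Algebra.subset_adjoin (Or.inr (Set.inv_mem_inv.mpr hz))) _
  refine hxy (trace_commutator_pow_sixty_eq_two_of_exists_pow_mem hR (fun g hg => ?_) hx hy)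
  obtain ⟨l, hl⟩ := exists_isEigenvalue g
  refine ⟨l, isEigenvalue_iff.mp hl, ?_⟩
  by_cases htorsion : IsOfFinOrder l
  · obtain ⟨q, hq, hlq⟩ := isOfFinOrder_iff_pow_eq_one.mp htorsion
    exact ⟨q, hq.ne', hlq ▸ R.one_mem⟩
  · obtain ⟨z, hz, hzl⟩ := hdep l ⟨htorsion, g, hg, hl⟩
    obtain ⟨q, hq, m, hlq⟩ := exists_pow_eq_zpow_of_not_multIndep (hs z hz) hzl
    exact ⟨q, hq, hlq ▸ hzpow z hz m⟩

end Eigenvalues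

/-- If `Γ ≤ SL₂(ℂ)` is Zariski-dense, then there are infinitely many pairwise
multiplicatively independent complex numbers occurring as eigenvalues of elements of `Γ`. -/
theorem zariski_dense_subgroup_exists_infinite_multIndep_eigenvalues
    (Γ : Subgroup (Matrix.SpecialLinearGroup (Fin 2) ℂ))
    (hΓ : ZariskiDenseSet (Γ : Set (Matrix.SpecialLinearGroup (Fin 2) ℂ))) :
    ∃ Λ : Set ℂ, Λ.Infinite ∧ Λ.Pairwise MultIndep ∧
      ∀ lam ∈ Λ, ∃ g ∈ Γ, IsEigenvalue g lam := by
  have : Std.Symm (MultIndep : ℂ → ℂ → Prop) := ⟨fun _ _ => MultIndep.symm⟩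
  obtain ⟨f, hf, hindep⟩ := exists_seq_of_forall_finset_exists'
    (fun l : ℂ => ¬ IsOfFinOrder l ∧ ∃ g ∈ Γ, IsEigenvalue g l) MultIndep
    fun s hs => exists_isEigenvalue_forall_multIndep hΓ s.finite_toSet fun z hz => (hs z hz).1
  have hinj : Function.Injective f := fun a b hab => by
    by_contra hne
    have hab' : MultIndep (f a) (f b) := hindep hne
    exact not_multIndep_self (f b) (hab ▸ hab')
  exact ⟨Set.range f, Set.infinite_range_of_injective hinj, hindep.range_pairwise,
    Set.forall_mem_range.mpr fun n => (hf n).2⟩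
end

section
/- Let K be a finitely generated field extension of ℚ and x ∈ K. Then at least one of the following holds: (i) x = 0; (ii) both x and x⁻¹ are algebraic integers (i.e. x is an invertible algebraic integer); (iii) there exists a discrete valuation v : K* → ℤ (a surjective group homomorphism satisfying v(a+b) ≥ min(v(a), v(b)) whenever a, b, a+b ∈ K*) with v(x) ≠ 0. -/
/-!
Let `A` be a Noetherian integrally closed domain (here `ℤ`) and `x ∈ K` not integral over `A`. If
`x` is transcendental over `A`, then `A[x⁻¹]` is a polynomial ring over which `x` is algebraic but
still not integral, so `x` may be assumed algebraic over `A`. Adjoining a transcendence basis of `K`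
to `A` gives a Noetherian integrally closed `R` with `K` finite over `Frac R`, and `x` is not
integral over `R`. The integral closure `B` of `R` in `K` is then Noetherian and integrally closed
with fraction field `K`, and `x ∉ B`. An associated prime `P` of `K / B` containing the denominator
ideal `{b | b x ∈ B}` yields a discrete valuation ring `B_P` that misses `x`, that is, a discrete
valuation with a pole at `x`. Apply this to `x` or to `x⁻¹`.
-/

open Function IsLocalRing WithZero

section UnitsOrd

variable {K : Type*} [Field K] (v : Valuation K ℤᵐ⁰)

/-- The additive form `Kˣ → ℤ` of a `ℤᵐ⁰`-valued valuation. The sign turns the multiplicative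
convention `v (a + b) ≤ max (v a) (v b)` into the additive one with `min`. -/
noncomputable def unitsOrd (a : Kˣ) : ℤ := -log (v a)

theorem unitsOrd_mul (a b : Kˣ) : unitsOrd v (a * b) = unitsOrd v a + unitsOrd v b := by
  have hne (c : Kˣ) : v c ≠ 0 := v.ne_zero_iff.2 c.ne_zero
  rw [unitsOrd, Units.val_mul, map_mul, log_mul (hne a) (hne b), neg_add, unitsOrd, unitsOrd]

theorem unitsOrd_le_unitsOrd {a b : Kˣ} : unitsOrd v a ≤ unitsOrd v b ↔ v b ≤ v a := by
  rw [unitsOrd, unitsOrd, neg_le_neg_iff,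
    log_le_log (v.ne_zero_iff.2 b.ne_zero) (v.ne_zero_iff.2 a.ne_zero)]

theorem min_unitsOrd_le_of_add_eq {a b c : Kˣ} (h : (a : K) + b = c) :
    min (unitsOrd v a) (unitsOrd v b) ≤ unitsOrd v c := by
  simpa only [min_le_iff, unitsOrd_le_unitsOrd, ← le_max_iff, h] using v.map_add a b

theorem unitsOrd_eq_zero_iff {a : Kˣ} : unitsOrd v a = 0 ↔ v a = 1 := by
  refine ⟨fun h ↦ ?_, fun h ↦ by rw [unitsOrd, h, log_one, neg_zero]⟩
  rw [← exp_log (v.ne_zero_iff.2 a.ne_zero), neg_eq_zero.1 h, exp_zero]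

theorem unitsOrd_surjective (hv : Surjective v) : Surjective (unitsOrd v) := by
  intro n
  obtain ⟨a, ha⟩ := hv (exp (-n))
  have ha₀ : a ≠ 0 := v.ne_zero_iff.1 (ha ▸ exp_ne_zero)
  exact ⟨Units.mk0 a ha₀, by rw [unitsOrd, Units.val_mk0, ha, log_exp, neg_neg]⟩

end UnitsOrd

section Normal

theorem exists_valuation_one_lt_of_isDedekindDomain {D K : Type*} [CommRing D]
    [IsDedekindDomain D] [Field K] [Algebra D K] [IsFractionRing D K] {x : K}
    (hx : x ∉ (algebraMap D K).range) : ∃ v : Valuation K ℤᵐ⁰, Surjective v ∧ 1 < v x := by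
  contrapose! hx
  exact IsDedekindDomain.HeightOneSpectrum.mem_integers_of_valuation_le_one K x
    fun P ↦ hx _ (P.valuation_surjective K)

theorem isPrincipal_maximalIdeal_of_forall_mul_mem_range {D K : Type*} [CommRing D] [IsLocalRing D]
    [IsNoetherianRing D] [IsIntegrallyClosed D] [Field K] [Algebra D K] [IsFractionRing D K]
    {y : K} (hy : y ∉ (algebraMap D K).range)
    (hmul : ∀ a ∈ maximalIdeal D, y * algebraMap D K a ∈ (algebraMap D K).range) :
    (maximalIdeal D).IsPrincipal := by
  have hinj := IsFractionRing.injective D K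
  choose! f hf using hmul
  by_cases hunit : ∃ t ∈ maximalIdeal D, IsUnit (f t)
  · obtain ⟨t, ht, hft⟩ := hunit
    refine ⟨t, le_antisymm (fun a ha ↦ ?_) ((Ideal.span_singleton_le_iff_mem _).2 ht)⟩
    have hswap : f t * a = f a * t := hinj <| by
      rw [map_mul, map_mul, hf t ht, hf a ha, mul_right_comm]
    exact Ideal.mem_span_singleton.2 (hft.dvd_mul_left.1 ⟨f a, by rw [hswap, mul_comm]⟩)
  · -- Otherwise `y • 𝔪 ⊆ 𝔪`, which makes `y` integral over `D` unless `𝔪 = 0`.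
    by_contra hprinc
    have hbot : maximalIdeal D ≠ ⊥ := fun h ↦ hprinc (h ▸ inferInstance)
    refine hy (IsIntegrallyClosed.isIntegral_iff.1 (isIntegral_of_smul_mem_submodule
      (Submodule.map (Algebra.linearMap D K) (maximalIdeal D)) ?_ ?_ y ?_))
    · exact (Submodule.map_bot (Algebra.linearMap D K)).symm ▸
        (Submodule.map_injective_of_injective hinj).ne hbot
    · exact (IsNoetherian.noetherian _).map _
    · rintro _ ⟨a, ha, rfl⟩
      exact ⟨f a, fun h ↦ hunit ⟨a, ha, h⟩, hf a ha⟩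

theorem exists_isPrime_eq_denominators {B S : Type*} [CommRing B] [IsNoetherianRing B] [CommRing S]
    [Algebra B S] {x : S} (hx : x ∉ (algebraMap B S).range) :
    ∃ (P : Ideal B) (y : S), P.IsPrime ∧ (∀ b, b ∈ P ↔ b • y ∈ (algebraMap B S).range) ∧
      ∀ b, b • x ∈ (algebraMap B S).range → b ∈ P := by
  let N : Submodule B S := LinearMap.range (Algebra.linearMap B S)
  have hmem (b : B) (z : S) : b ∈ (⊥ : Submodule B (S ⧸ N)).colon {N.mkQ z} ↔
      b • z ∈ (algebraMap B S).range := by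
    rw [Submodule.mem_colon_singleton, ← map_smul, Submodule.mem_bot, ← LinearMap.mem_ker,
      Submodule.ker_mkQ]
    rfl
  have hx₀ : N.mkQ x ≠ 0 := fun h ↦ hx ((Submodule.Quotient.mk_eq_zero N).1 h)
  obtain ⟨P, hP, hxP⟩ := exists_le_isAssociatedPrime_of_isNoetherianRing B (N.mkQ x) hx₀
  obtain ⟨hprime, y', rfl⟩ := isAssociatedPrime_iff.1 hP
  obtain ⟨y, rfl⟩ := N.mkQ_surjective y'
  exact ⟨_, y, hprime, fun b ↦ hmem b y, fun b hb ↦ hxP ((hmem b x).2 hb)⟩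

theorem exists_notMem_smul_mem_range {B D S : Type*} [CommRing B] [CommRing D] [CommRing S]
    [Algebra B D] [Algebra B S] [Algebra D S] [IsScalarTower B D S] (P : Ideal B) [P.IsPrime]
    [IsLocalization.AtPrime D P] {z : S} (hz : z ∈ (algebraMap D S).range) :
    ∃ s ∉ P, s • z ∈ (algebraMap B S).range := by
  obtain ⟨d, rfl⟩ := hz
  obtain ⟨⟨b, s⟩, hs⟩ := IsLocalization.surj P.primeCompl d
  refine ⟨s, s.2, b, ?_⟩
  rw [IsScalarTower.algebraMap_apply B D S, ← hs, map_mul, mul_comm, Algebra.smul_def,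
    IsScalarTower.algebraMap_apply B D S]

theorem mul_mem_range_of_mem_ideal_map {B D S : Type*} [CommRing B] [CommRing D] [CommRing S]
    [Algebra B D] [Algebra B S] [Algebra D S] [IsScalarTower B D S] {I : Ideal B} {y : S}
    (hI : ∀ b ∈ I, b • y ∈ (algebraMap B S).range) {a : D} (ha : a ∈ I.map (algebraMap B D)) :
    y * algebraMap D S a ∈ (algebraMap D S).range := by
  induction ha using Submodule.span_induction with
  | mem a ha =>
    obtain ⟨b, hb, rfl⟩ := ha
    obtain ⟨c, hc⟩ := hI b hb
    refine ⟨algebraMap B D c, ?_⟩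
    rw [← IsScalarTower.algebraMap_apply, ← IsScalarTower.algebraMap_apply, hc, mul_comm,
      Algebra.smul_def]
  | zero => simp
  | add a b _ _ ha hb => simpa only [map_add, mul_add] using add_mem ha hb
  | smul d a _ ha =>
    rw [smul_eq_mul, map_mul, mul_left_comm]
    exact mul_mem ⟨d, rfl⟩ ha

theorem isDedekindDomain_of_isLocalization_denominators {B D K : Type*} [CommRing B] [IsDomain B]
    [IsNoetherianRing B] [IsIntegrallyClosed B] [CommRing D] [IsDomain D] [Field K] [Algebra B D]
    [Algebra B K] [Algebra D K] [IsScalarTower B D K] [IsFractionRing D K] {P : Ideal B}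
    [P.IsPrime] [IsLocalization.AtPrime D P] {y : K}
    (hP : ∀ b, b ∈ P ↔ b • y ∈ (algebraMap B K).range) : IsDedekindDomain D := by
  have : IsLocalRing D := IsLocalization.AtPrime.isLocalRing D P
  have : IsNoetherianRing D := IsLocalization.isNoetherianRing P.primeCompl D inferInstance
  have : IsIntegrallyClosed D :=
    isIntegrallyClosed_of_isLocalization D P.primeCompl P.primeCompl_le_nonZeroDivisors
  have hy : y ∉ (algebraMap D K).range := fun h ↦ by
    obtain ⟨s, hsP, hs⟩ := exists_notMem_smul_mem_range P h
    exact hsP ((hP s).2 hs)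
  have hprinc : (maximalIdeal D).IsPrincipal :=
    isPrincipal_maximalIdeal_of_forall_mul_mem_range hy fun a ha ↦
      mul_mem_range_of_mem_ideal_map (fun b ↦ (hP b).1)
        (IsLocalization.AtPrime.map_eq_maximalIdeal P D ▸ ha)
  exact ((tfae_of_isNoetherianRing_of_isLocalRing_of_isDomain D).out 2 4).2 hprinc

theorem exists_valuation_one_lt_of_isIntegrallyClosed {B K : Type*} [CommRing B] [IsDomain B]
    [IsNoetherianRing B] [IsIntegrallyClosed B] [Field K] [Algebra B K] [IsFractionRing B K]
    {x : K} (hx : x ∉ (algebraMap B K).range) :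
    ∃ v : Valuation K ℤᵐ⁰, Surjective v ∧ 1 < v x := by
  obtain ⟨P, y, hprime, hyP, hxP⟩ := exists_isPrime_eq_denominators hx
  let D := Localization.subalgebra.ofField K P.primeCompl P.primeCompl_le_nonZeroDivisors
  have : IsLocalization.AtPrime D P :=
    Localization.subalgebra.isLocalization_ofField K P.primeCompl P.primeCompl_le_nonZeroDivisors
  have : IsDedekindDomain D := isDedekindDomain_of_isLocalization_denominators hyP
  refine exists_valuation_one_lt_of_isDedekindDomain (D := D) fun hxD ↦ ?_
  obtain ⟨s, hsP, hs⟩ := exists_notMem_smul_mem_range P hxD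
  exact hsP (hxP s hs)

theorem exists_valuation_one_lt_of_isSeparable {R K : Type*} (F : Type*) [CommRing R] [IsDomain R]
    [IsNoetherianRing R] [IsIntegrallyClosed R] [Field F] [Algebra R F] [IsFractionRing R F]
    [Field K] [Algebra F K] [FiniteDimensional F K] [Algebra.IsSeparable F K] [Algebra R K]
    [IsScalarTower R F K] {x : K} (hx : ¬IsIntegral R x) :
    ∃ v : Valuation K ℤᵐ⁰, Surjective v ∧ 1 < v x := by
  have := IsIntegralClosure.isNoetherianRing R F K (integralClosure R K)
  have := integralClosure.isFractionRing_of_finite_extension (A := R) F K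
  have := integralClosure.isIntegrallyClosedOfFiniteExtension (R := R) F (L := K)
  refine exists_valuation_one_lt_of_isIntegrallyClosed (B := integralClosure R K) ?_
  rintro ⟨y, rfl⟩
  exact hx y.2

theorem exists_valuation_one_lt_of_isAlgebraic {R K : Type*} [CommRing R] [IsDomain R]
    [IsNoetherianRing R] [IsIntegrallyClosed R] [Field K] [CharZero K] [Algebra R K]
    [FaithfulSMul R K] [Algebra.EssFiniteType R K] [Algebra.IsAlgebraic R K]
    {x : K} (hx : ¬IsIntegral R x) : ∃ v : Valuation K ℤᵐ⁰, Surjective v ∧ 1 < v x := by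
  let F := FractionRing R
  let : Algebra F K := FractionRing.liftAlgebra R K
  have : CharZero F := (algebraMap F K).charZero_iff (algebraMap F K).injective |>.2 inferInstance
  have : Algebra.IsAlgebraic F K := (IsFractionRing.comap_isAlgebraic_iff (A := R)).1 inferInstance
  have : Algebra.EssFiniteType F K := .of_comp R F K
  have : FiniteDimensional F K := Algebra.finite_of_essFiniteType_of_isAlgebraic
  exact exists_valuation_one_lt_of_isSeparable F hx

end Normal

section PolynomialRing

open MvPolynomial

theorem isIntegrallyClosed_mvPolynomial {A : Type*} (σ : Type*) [CommRing A] [IsDomain A]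
    [IsIntegrallyClosed A] : IsIntegrallyClosed (MvPolynomial σ A) := by
  let F := FractionRing A
  let _ : Algebra (MvPolynomial σ A) (MvPolynomial σ F) := algebraMvPolynomial
  suffices IsIntegrallyClosedIn (MvPolynomial σ A) (MvPolynomial σ F) from
    .of_isIntegrallyClosed_of_isIntegrallyClosedIn _ (MvPolynomial σ F)
  refine isIntegrallyClosedIn_iff.2 ⟨map_injective _ (IsFractionRing.injective A F), ?_⟩
  intro p hp
  refine (mem_range_map_iff_coeffs_subset (f := algebraMap A F)).2 fun c hc ↦ ?_
  obtain ⟨n, -, rfl⟩ := mem_coeffs_iff.1 hc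
  exact IsIntegrallyClosed.isIntegral_iff.1 (isIntegral_iff_isIntegral_coeff.1 hp n)

variable {A S ι : Type*} [CommRing A] [IsDomain A] [CommRing S] [Algebra A S] {u : ι → S}

theorem isIntegrallyClosed_adjoin_of_algebraicIndependent [IsIntegrallyClosed A]
    (hu : AlgebraicIndependent A u) : IsIntegrallyClosed (Algebra.adjoin A (Set.range u)) :=
  have := isIntegrallyClosed_mvPolynomial (A := A) ι
  .of_equiv hu.aevalEquiv.toRingEquiv

-- `x` is a constant of the polynomial ring `A[x][u]`, where integrality over `A[u]` can be tested
-- on coefficients.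
theorem isIntegral_of_isIntegral_adjoin_of_algebraicIndependent [IsDomain S]
    (hu : AlgebraicIndependent A u) {x : S} (halg : IsAlgebraic A x)
    (hx : IsIntegral (Algebra.adjoin A (Set.range u)) x) : IsIntegral A x := by
  let k := Algebra.adjoin A {x}
  have : Algebra.IsAlgebraic A k :=
    (Subalgebra.isAlgebraic_iff _).1 (Algebra.isAlgebraic_adjoin_singleton_iff.2 halg)
  let x' : k := ⟨x, Algebra.self_mem_adjoin_singleton A x⟩
  let _ : Algebra (MvPolynomial ι A) (MvPolynomial ι k) := algebraMvPolynomial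
  let φ : MvPolynomial ι k →+* S := (aeval u : MvPolynomial ι k →ₐ[k] S)
  have hφ : (φ.comp (algebraMap _ _)).comp hu.repr.toRingHom = algebraMap _ S := by
    ext r
    change aeval u (map (algebraMap A k) (hu.repr r)) = r
    rw [aeval_map_algebraMap, hu.aeval_repr]
  have hφx : φ (C x') = x := by simp [φ, x']
  have hC : IsIntegral (MvPolynomial ι A) (C x' : MvPolynomial ι k) := by
    refine .of_map (g := φ) (hu.extendScalars k) (.of_comp (f := hu.repr.toRingHom) ?_)
    rwa [hφ, hφx]
  exact (coeff_zero_C x' ▸ isIntegral_iff_isIntegral_coeff.1 hC 0).map k.val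

end PolynomialRing

section EssFiniteType

theorem isNoetherianRing_adjoin_of_finite {A S : Type*} [CommRing A] [IsNoetherianRing A]
    [CommRing S] [Algebra A S] {s : Set S} (hs : s.Finite) :
    IsNoetherianRing (Algebra.adjoin A s) :=
  have : Algebra.FiniteType A (Algebra.adjoin A s) := .adjoin_of_finite hs
  Algebra.FiniteType.isNoetherianRing A _

variable {A K : Type*} [CommRing A] [Field K] [Algebra A K]

theorem isIntegral_of_isIntegral_adjoin_inv {x : K} (hx : IsIntegral (Algebra.adjoin A {x⁻¹}) x) :
    IsIntegral A x := by
  obtain rfl | hx₀ := eq_or_ne x 0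
  · exact isIntegral_zero
  let y : Algebra.adjoin A {x⁻¹} := ⟨x⁻¹, Algebra.self_mem_adjoin_singleton A _⟩
  let B := integralClosure (Algebra.adjoin A {x⁻¹}) K
  have hyB : IsUnit (algebraMap _ B y) :=
    .of_mul_eq_one ⟨x, hx⟩ (Subtype.ext (inv_mul_cancel₀ hx₀))
  have : IsLocalHom (algebraMap (Algebra.adjoin A {x⁻¹}) B) :=
    (algebraMap_isIntegral_iff.2 inferInstance).isLocalHom fun _ _ h ↦
      Subtype.ext (congrArg (Subtype.val : B → K) h)
  have hy : IsUnit y := (isUnit_map_iff (algebraMap _ B) y).1 hyB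
  have : Nontrivial A := (algebraMap A K).domain_nontrivial
  have : Invertible x⁻¹ := invertibleOfNonzero (inv_ne_zero hx₀)
  obtain ⟨p, hp, hpx⟩ := Algebra.exists_aeval_invOf_eq_zero_of_idealMap_adjoin_sup_span_eq_top x⁻¹
    (⊥ : Ideal A) bot_ne_top (by rw [Ideal.span_singleton_eq_top.2 hy, sup_top_eq])
  exact ⟨p, by simpa [Polynomial.Monic, sub_eq_zero] using hp, by simpa using! hpx⟩

theorem exists_finite_isTranscendenceBasis_of_essFiniteType [FaithfulSMul A K]
    [Algebra.EssFiniteType A K] :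
    ∃ u : Set K, u.Finite ∧ IsTranscendenceBasis A ((↑) : u → K) := by
  let s := Algebra.EssFiniteType.finset A K
  have : Algebra.IsAlgebraic (Algebra.adjoin A (s : Set K)) K :=
    (Algebra.EssFiniteType.isLocalization A K).isAlgebraic
  obtain ⟨u, hus, hu⟩ := exists_isTranscendenceBasis_subset (R := A) (s : Set K)
  exact ⟨u, s.finite_toSet.subset hus, hu⟩

variable [IsDomain A] [IsNoetherianRing A] [IsIntegrallyClosed A] [CharZero K] [FaithfulSMul A K]
  [Algebra.EssFiniteType A K]

theorem exists_valuation_one_lt_of_isAlgebraic_of_not_isIntegral {x : K} (halg : IsAlgebraic A x)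
    (hx : ¬IsIntegral A x) : ∃ v : Valuation K ℤᵐ⁰, Surjective v ∧ 1 < v x := by
  obtain ⟨u, hfin, hu⟩ := exists_finite_isTranscendenceBasis_of_essFiniteType (A := A) (K := K)
  let R := Algebra.adjoin A (Set.range ((↑) : u → K))
  have : IsNoetherianRing R := isNoetherianRing_adjoin_of_finite (by rwa [Subtype.range_coe])
  have : IsIntegrallyClosed R := isIntegrallyClosed_adjoin_of_algebraicIndependent hu.1
  have : Algebra.IsAlgebraic R K := hu.isAlgebraic
  have : Algebra.EssFiniteType R K := .of_comp A R K
  exact exists_valuation_one_lt_of_isAlgebraic (R := R) fun h ↦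
    hx (isIntegral_of_isIntegral_adjoin_of_algebraicIndependent hu.1 halg h)

theorem exists_valuation_one_lt_of_not_isIntegral {x : K} (hx : ¬IsIntegral A x) :
    ∃ v : Valuation K ℤᵐ⁰, Surjective v ∧ 1 < v x := by
  by_cases halg : IsAlgebraic A x
  · exact exists_valuation_one_lt_of_isAlgebraic_of_not_isIntegral halg hx
  let R := Algebra.adjoin A {x⁻¹}
  have : IsIntegrallyClosed R := by
    have hind : AlgebraicIndependent A fun _ : Unit ↦ x⁻¹ :=
      algebraicIndependent_unique_type_iff.2 (mt IsAlgebraic.inv_iff.1 halg)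
    have hclosed := isIntegrallyClosed_adjoin_of_algebraicIndependent hind
    rwa [Set.range_const] at hclosed
  have : IsNoetherianRing R := isNoetherianRing_adjoin_of_finite (Set.finite_singleton _)
  have : Algebra.EssFiniteType R K := .of_comp A R K
  have halgR : IsAlgebraic R x := IsAlgebraic.inv_iff.1
    (isAlgebraic_algebraMap (⟨x⁻¹, Algebra.self_mem_adjoin_singleton A _⟩ : R))
  exact exists_valuation_one_lt_of_isAlgebraic_of_not_isIntegral halgR
    (mt isIntegral_of_isIntegral_adjoin_inv hx)

theorem exists_valuation_ne_one_of_not_isIntegral_and_inv {x : K}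
    (hx : ¬(IsIntegral A x ∧ IsIntegral A x⁻¹)) :
    ∃ v : Valuation K ℤᵐ⁰, Surjective v ∧ v x ≠ 1 := by
  obtain hx | hx := not_and_or.1 hx
  · obtain ⟨v, hv, hlt⟩ := exists_valuation_one_lt_of_not_isIntegral hx
    exact ⟨v, hv, hlt.ne'⟩
  · obtain ⟨v, hv, hlt⟩ := exists_valuation_one_lt_of_not_isIntegral hx
    exact ⟨v, hv, fun h ↦ hlt.ne' (by rw [map_inv₀, h, inv_one])⟩

end EssFiniteType

theorem fin_gen_field_zero_or_unit_or_valuation_general (A : Type*) {K : Type*} [CommRing A]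
    [IsDomain A] [IsNoetherianRing A] [IsIntegrallyClosed A] [Field K] [CharZero K] [Algebra A K]
    [FaithfulSMul A K] [Algebra.EssFiniteType A K] (x : K) :
    x = 0 ∨
    (IsIntegral A x ∧ IsIntegral A x⁻¹) ∨
    (∃ (hx : x ≠ 0) (v : Kˣ → ℤ),
      Surjective v ∧
      (∀ a b : Kˣ, v (a * b) = v a + v b) ∧
      (∀ a b c : Kˣ, (a : K) + (b : K) = (c : K) → min (v a) (v b) ≤ v c) ∧
      v (Units.mk0 x hx) ≠ 0) := by
  refine or_iff_not_imp_left.2 fun hx ↦ or_iff_not_imp_left.2 fun hunit ↦ ?_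
  obtain ⟨v, hv, hvx⟩ := exists_valuation_ne_one_of_not_isIntegral_and_inv hunit
  exact ⟨hx, unitsOrd v, unitsOrd_surjective v hv, unitsOrd_mul v,
    fun _ _ _ ↦ min_unitsOrd_le_of_add_eq v, (unitsOrd_eq_zero_iff v).not.2 hvx⟩

theorem essFiniteType_int_of_adjoin_rat_eq_top {K : Type*} [Field K] [CharZero K]
    (hfg : ∃ s : Finset K, IntermediateField.adjoin ℚ (s : Set K) = ⊤) :
    Algebra.EssFiniteType ℤ K := by
  have : Algebra.EssFiniteType ℚ K := IntermediateField.fg_top_iff.1 hfg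
  have : Algebra.EssFiniteType ℤ ℚ := .of_isLocalization ℚ (nonZeroDivisors ℤ)
  exact .comp ℤ ℚ K

/-- In a finitely generated field extension `K` of `ℚ`, every element `x` is either `0`,
an invertible algebraic integer (a unit), or there is a discrete valuation
`v : K* → ℤ` with `v x ≠ 0`. -/
theorem fin_gen_field_zero_or_unit_or_valuation
    (K : Type*) [Field K] [CharZero K]
    (hfg : ∃ s : Finset K, IntermediateField.adjoin ℚ (s : Set K) = ⊤)
    (x : K) :
    x = 0 ∨
    (IsIntegral ℤ x ∧ IsIntegral ℤ x⁻¹) ∨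
    (∃ (hx : x ≠ 0) (v : Kˣ → ℤ),
      Function.Surjective v ∧
      (∀ a b : Kˣ, v (a * b) = v a + v b) ∧
      (∀ a b c : Kˣ, (a : K) + (b : K) = (c : K) → min (v a) (v b) ≤ v c) ∧
      v (Units.mk0 x hx) ≠ 0) := by
  have := essFiniteType_int_of_adjoin_rat_eq_top hfg
  exact fin_gen_field_zero_or_unit_or_valuation_general ℤ x
end

section
/- Let K be a finitely generated field extension of ℚ and let x ∈ K* be an element that is not a root of unity. Then ρ_K(x) < ∞, i.e. the set {n ∈ ℕ : ∃ α ∈ K, αⁿx⁻¹ ∈ W_K} is bounded. -/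
/-- `y` is a root of unity in the field `K`. -/
def IsRootOfUnity {K : Type*} [Field K] (y : K) : Prop :=
  ∃ m : ℕ, 0 < m ∧ y ^ m = 1

/-- The set whose supremum is `ρ_K(x)`: natural numbers `n ≥ 1` such that some
`α ∈ K` satisfies `αⁿ·x⁻¹ ∈ W_K`. -/
def rhoSet (K : Type*) [Field K] (x : K) : Set ℕ :=
  {n : ℕ | 0 < n ∧ ∃ α : K, IsRootOfUnity (α ^ n * x⁻¹)}

/-!
Suppose `h : K → ℝ` satisfies `h (yⁿ) = n * h y` and its positive values are bounded below by some
`c > 0`. If `αⁿ` is `x` up to a root of unity, then `n * h α = h x`, so `h x > 0` forces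
`n ≤ h x / c`. Such an `h` with `h x > 0` exists in each of two cases.

* If `x` is transcendental over `ℚ`, then `K` is finite over some `E(x)` with `x` transcendental
  over `E`; take `h y = |deg N(y)|`, with `N` the norm from `K` to `E(x)`.
* If `x` is algebraic, then so is every `α` as above, and the algebraic closure of `ℚ` in `K` is a
  number field because it is linearly disjoint from a purely transcendental subfield over which `K`
  is finite; take `h` to be the Weil height. Northcott's theorem gives `c`, and Kronecker's theorem
  gives `h x > 0`.
-/

open IntermediateField

section RhoSet

theorem pow_eq_pow_of_mul_inv_pow_eq_one {G : Type*} [CommGroupWithZero G] {a b : G} {m : ℕ}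
    (hm : m ≠ 0) (h : (a * b⁻¹) ^ m = 1) : a ^ m = b ^ m := by
  have hb : b ≠ 0 := by
    rintro rfl
    simp [hm] at h
  rwa [mul_pow, inv_pow, mul_inv_eq_one₀ (pow_ne_zero m hb)] at h

variable {K : Type*} [Field K]

theorem bddAbove_rhoSet_of_map_pow {x : K} {h : K → ℝ} (h_pow : ∀ y (n : ℕ), h (y ^ n) = n * h y)
    {c : ℝ} (hc : 0 < c) (h_gap : ∀ y, 0 < h y → c ≤ h y) (hx : 0 < h x) :
    BddAbove (rhoSet K x) := by
  refine ⟨⌊h x / c⌋₊, ?_⟩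
  rintro n ⟨-, α, m, hm, hα⟩
  have h_mul : n * h α = h x := by
    have := congrArg h (pow_eq_pow_of_mul_inv_pow_eq_one hm.ne' hα)
    rw [h_pow, h_pow, h_pow] at this
    exact mul_left_cancel₀ (Nat.cast_ne_zero.2 hm.ne') this
  have hα_pos : 0 < h α := pos_of_mul_pos_right (h_mul ▸ hx) n.cast_nonneg
  refine Nat.le_floor ?_
  calc (n : ℝ) ≤ n * h α / c := by
        rw [le_div_iff₀ hc]
        gcongr
        exact h_gap α hα_pos
    _ = h x / c := by rw [h_mul]

theorem rhoSet_coe_subset_rhoSet_algebraicClosure {F : Type*} [Field F] [Algebra F K]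
    (x : algebraicClosure F K) : rhoSet K (x : K) ⊆ rhoSet (algebraicClosure F K) x := by
  rintro n ⟨hn, α, m, hm, hα⟩
  have hα_alg : IsAlgebraic F α := by
    refine .of_pow hn (.of_pow hm ?_)
    rw [pow_eq_pow_of_mul_inv_pow_eq_one hm.ne' hα]
    exact (mem_algebraicClosure_iff.1 x.2).pow m
  exact ⟨hn, ⟨α, mem_algebraicClosure_iff.2 hα_alg⟩, m, hm, Subtype.ext hα⟩

end RhoSet

section Height

theorem exists_gt_forall_le_of_northcott {α β : Type*} [LinearOrder β] [NoMaxOrder β] (h : α → β)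
    [Northcott h] (b : β) : ∃ c, b < c ∧ ∀ a, b < h a → c ≤ h a := by
  by_cases hne : {a | b < h a}.Nonempty
  · obtain ⟨a, ha, ha_min⟩ := Northcott.exists_min_image h _ hne
    exact ⟨h a, ha, ha_min⟩
  · obtain ⟨c, hc⟩ := exists_gt b
    exact ⟨c, hc, fun a ha => (hne ⟨a, ha⟩).elim⟩

variable {K : Type*} [Field K] [Height.AdmissibleAbsValues K]
  [Northcott (Height.logHeight₁ (K := K))] {x : K}

theorem isRootOfUnity_of_logHeight₁_eq_zero (hx : x ≠ 0) (h : Height.logHeight₁ x = 0) :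
    IsRootOfUnity x := by
  have h_finite : {y : Kˣ | Height.logHeight₁ (y : K) ≤ 0}.Finite :=
    (Northcott.finite_le (h := Height.logHeight₁ (K := K)) 0).preimage Units.val_injective.injOn
  have h_powers : (Submonoid.powers (Units.mk0 x hx) : Set Kˣ).Finite := by
    refine h_finite.subset ?_
    rintro _ ⟨n, rfl⟩
    simp [Height.logHeight₁_pow, h]
  have h_order := isOfFinOrder_iff_pow_eq_one.1 (finite_powers.1 h_powers)
  simpa [IsRootOfUnity, Units.ext_iff] using h_order

theorem bddAbove_rhoSet_of_northcott (hx : x ≠ 0) (hxu : ¬ IsRootOfUnity x) :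
    BddAbove (rhoSet K x) := by
  obtain ⟨c, hc, h_gap⟩ := exists_gt_forall_le_of_northcott (Height.logHeight₁ (K := K)) 0
  have h_pos : 0 < Height.logHeight₁ x :=
    (Height.zero_le_logHeight₁ x).lt_of_ne' (hxu ∘ isRootOfUnity_of_logHeight₁_eq_zero hx)
  exact bddAbove_rhoSet_of_map_pow Height.logHeight₁_pow hc h_gap h_pos

end Height

section AlgebraicClosure

theorem linearDisjoint_adjoin_range_of_algebraicIndependent {R A ι : Type*} [CommRing R]
    [CommRing A] [Algebra R A] [FaithfulSMul R A] {S : Subalgebra R A} {x : ι → A}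
    (hx : AlgebraicIndependent S x) : S.LinearDisjoint (Algebra.adjoin R (Set.range x)) := by
  have hxR : AlgebraicIndependent R x :=
    hx.restrictScalars (.of_comp (f := S.val) (FaithfulSMul.algebraMap_injective R A))
  let monomials := (MvPolynomial.basisMonomials ι R).map hxR.aevalEquiv.toLinearEquiv
  refine .of_basis_right _ _ monomials ?_
  have h_indep := (MvPolynomial.basisMonomials ι S).linearIndependent.map'
    (MvPolynomial.aeval x).toLinearMap (LinearMap.ker_eq_bot.2 hx)
  convert! h_indep using 1
  ext m
  simp [monomials, MvPolynomial.aeval_monomial]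

variable {F K : Type*} [Field F] [Field K] [Algebra F K]

open scoped IntermediateField.algebraAdjoinAdjoin in
theorem linearDisjoint_algebraicClosure_adjoin_range {ι : Type*} {x : ι → K}
    (hx : AlgebraicIndependent F x) :
    (algebraicClosure F K).LinearDisjoint (adjoin F (Set.range x)) := by
  have h_disjoint : (algebraicClosure F K).toSubalgebra.LinearDisjoint
      (Algebra.adjoin F (Set.range x)) :=
    linearDisjoint_adjoin_range_of_algebraicIndependent hx.algebraicClosure
  let b := Module.Basis.ofVectorSpace F (algebraicClosure F K)
  refine .of_basis_left b ?_
  exact (LinearIndependent.iff_fractionRing (Algebra.adjoin F (Set.range x)) _).1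
    (h_disjoint.linearIndependent_left_of_flat b.linearIndependent)

variable (F K) in
theorem finiteDimensional_algebraicClosure_of_essFiniteType [Algebra.EssFiniteType F K] :
    FiniteDimensional F (algebraicClosure F K) := by
  obtain ⟨t, ht⟩ := exists_isTranscendenceBasis F K
  let P := adjoin F (Set.range ((↑) : t → K))
  have : Algebra.IsAlgebraic P K := ht.isAlgebraic_field
  have : Algebra.EssFiniteType P K := .of_comp F P K
  have : FiniteDimensional P K := Algebra.finite_of_essFiniteType_of_isAlgebraic
  let b := Module.Basis.ofVectorSpace F (algebraicClosure F K)
  have hb : LinearIndependent P (Subtype.val ∘ b) :=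
    (linearDisjoint_algebraicClosure_adjoin_range ht.1).linearIndependent_left b.linearIndependent
  have := hb.finite
  exact Module.Finite.of_basis b

end AlgebraicClosure

section Transcendental

theorem ratFunc_intDegree_pow {F : Type*} [Field F] (f : RatFunc F) (n : ℕ) :
    (f ^ n).intDegree = n * f.intDegree := by
  rcases eq_or_ne f 0 with rfl | hf
  · rcases eq_or_ne n 0 with rfl | hn <;> simp [*]
  induction n with
  | zero => simp
  | succ n ih =>
    rw [pow_succ, RatFunc.intDegree_mul (pow_ne_zero n hf) hf, ih]
    push_cast
    ring

variable {F K : Type*} [Field F] [Field K] [Algebra F K] {x : K}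

theorem bddAbove_rhoSet_of_finiteDimensional_adjoin_simple (hx : Transcendental F x)
    [FiniteDimensional F⟮x⟯ K] : BddAbove (rhoSet K x) := by
  let e := (RatFunc.algEquivOfTranscendental x hx).symm
  let normDegree (y : K) : ℤ := (e (Algebra.norm F⟮x⟯ y)).intDegree
  have h_pow (y : K) (n : ℕ) : normDegree (y ^ n) = n * normDegree y := by
    simp only [normDegree, map_pow, ratFunc_intDegree_pow]
  have hx_degree : normDegree x = Module.finrank F⟮x⟯ K := by
    have hx_norm : Algebra.norm F⟮x⟯ x = AdjoinSimple.gen F x ^ Module.finrank F⟮x⟯ K :=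
      Algebra.norm_algebraMap (AdjoinSimple.gen F x)
    have he_gen : e (AdjoinSimple.gen F x) = RatFunc.X :=
      RatFunc.algEquivOfTranscendental_symm_gen x hx
    simp only [normDegree, hx_norm, map_pow, he_gen, ratFunc_intDegree_pow, RatFunc.intDegree_X,
      mul_one]
  refine bddAbove_rhoSet_of_map_pow (h := fun y => |(normDegree y : ℝ)|) (c := 1) ?_ one_pos ?_ ?_
  · intro y n
    simp [h_pow, abs_mul]
  · intro y hy
    exact_mod_cast Int.one_le_abs (Int.cast_ne_zero.1 (abs_pos.1 hy))
  · simpa [hx_degree] using Module.finrank_pos (R := F⟮x⟯) (M := K)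

theorem exists_transcendental_and_isAlgebraic_adjoin_simple (hx : Transcendental F x) :
    ∃ E : IntermediateField F K, Transcendental E x ∧ Algebra.IsAlgebraic E⟮x⟯ K := by
  have h_single : AlgebraicIndepOn F id {x} :=
    (algebraicIndependent_singleton_iff (⟨x, rfl⟩ : ({x} : Set K))).2 hx
  obtain ⟨t, hxt, ht⟩ := exists_isTranscendenceBasis_superset h_single
  have h_insert : insert x (t \ {x}) = t := Set.insert_sdiff_self_of_mem (hxt rfl)
  refine ⟨adjoin F (t \ {x}), ?_, ?_⟩
  · have h_indep : AlgebraicIndepOn F id (insert x (t \ {x})) := h_insert.symm ▸ ht.1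
    have hx_adjoin := ((AlgebraicIndepOn.insert_iff (by simp)).1 h_indep).2
    rw [Set.image_id] at hx_adjoin
    exact transcendental_adjoin_iff.2 hx_adjoin
  · have h_adjoin : (adjoin F (t \ {x}))⟮x⟯.restrictScalars F =
        adjoin F (Set.range ((↑) : t → K)) := by
      rw [adjoin_adjoin_left, Set.union_singleton, h_insert, Subtype.range_coe]
    have h_alg := ht.isAlgebraic_field
    rw [← h_adjoin] at h_alg
    exact h_alg

theorem bddAbove_rhoSet_of_transcendental [Algebra.EssFiniteType F K] (hx : Transcendental F x) :
    BddAbove (rhoSet K x) := by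
  obtain ⟨E, hxE, _⟩ := exists_transcendental_and_isAlgebraic_adjoin_simple hx
  have : Algebra.EssFiniteType E K := .of_comp F E K
  have : Algebra.EssFiniteType E⟮x⟯ K := .of_comp E E⟮x⟯ K
  have : FiniteDimensional E⟮x⟯ K := Algebra.finite_of_essFiniteType_of_isAlgebraic
  exact bddAbove_rhoSet_of_finiteDimensional_adjoin_simple hxE

end Transcendental

/-- If `K` is a finitely generated field extension of `ℚ` and `x ∈ K*` is not a root
of unity, then `ρ_K(x) < ∞`. -/
theorem rho_finite_of_not_rootOfUnity
    (K : Type*) [Field K] [CharZero K]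
    (hfg : ∃ s : Finset K, IntermediateField.adjoin ℚ (s : Set K) = ⊤)
    (x : K) (hx : x ≠ 0) (hxu : ¬ IsRootOfUnity x) :
    BddAbove (rhoSet K x) := by
  have : Algebra.EssFiniteType ℚ K := IntermediateField.fg_top_iff.1 hfg
  by_cases hx_alg : IsAlgebraic ℚ x
  · have : FiniteDimensional ℚ (algebraicClosure ℚ K) :=
      finiteDimensional_algebraicClosure_of_essFiniteType ℚ K
    have : NumberField (algebraicClosure ℚ K) := {}
    let x' : algebraicClosure ℚ K := ⟨x, mem_algebraicClosure_iff.2 hx_alg⟩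
    have hx' : x' ≠ 0 := fun h => hx (congrArg Subtype.val h)
    have hxu' : ¬ IsRootOfUnity x' := fun ⟨m, hm, h⟩ => hxu ⟨m, hm, congrArg Subtype.val h⟩
    exact (bddAbove_rhoSet_of_northcott hx' hxu').mono
      (rhoSet_coe_subset_rhoSet_algebraicClosure x')
  · exact bddAbove_rhoSet_of_transcendental hx_alg
end

section
/- Let K be a field and x ∈ K* with ρ_K(x) < ∞. Define Θ_{K,x} = {p/q ∈ ℚ : p ∈ ℤ, q ∈ ℤ \ {0}, ∃ β ∈ K*, β^q·x^{-p} ∈ W_K}. Then Θ_{K,x} is a subgroup of (ℚ,+) and equals (1/ρ_K(x))·ℤ, the cyclic group generated by 1/ρ_K(x). -/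
/-- The set `Θ_{K,x}` of rationals `p/q` such that `β^q·x^{-p} ∈ W_K` for some `β ∈ K*`. -/
def ThetaSet (K : Type*) [Field K] (x : K) : Set ℚ :=
  {r : ℚ | ∃ p q : ℤ, q ≠ 0 ∧ r = (p : ℚ) / (q : ℚ) ∧
    ∃ β : K, β ≠ 0 ∧ IsRootOfUnity (β ^ q * x ^ (-p))}

/-!
The roots of unity of `K` are the torsion of `Kˣ`, so everything takes place in a commutative group
`G` modulo torsion. There the rationals `p / q` such that `x ^ p` is a `q`-th power form a subgroup
of `ℚ`, and it contains `1 / n` exactly when `x` is an `n`-th power. Let `N` be the largest such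
`n`. If `r` lies in the subgroup and `d` is the denominator of `N * r`, then Bézout's identity puts
`1 / (d * N)` in the subgroup, so `d = 1` by maximality and `r` is a multiple of `1 / N`.
-/

theorem inv_den_smul_mem {A : Type*} [AddCommGroup A] [Module ℚ A] {H : AddSubgroup A} {a : A}
    {r : ℚ} (ha : a ∈ H) (hr : r • a ∈ H) : (r.den : ℚ)⁻¹ • a ∈ H := by
  obtain ⟨u, v, huv⟩ : IsCoprime r.num (r.den : ℤ) := Rat.isCoprime_num_den r
  have bezout : u * r + v = (r.den : ℚ)⁻¹ := by
    have huvQ : (u * r.num + v * r.den : ℚ) = 1 := mod_cast huv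
    rw [← Rat.mul_den_eq_num] at huvQ
    exact eq_inv_of_mul_eq_one_left (by linear_combination huvQ)
  rw [← bezout, add_smul, mul_smul, Int.cast_smul_eq_zsmul, Int.cast_smul_eq_zsmul]
  exact add_mem (H.zsmul_mem hr u) (H.zsmul_mem ha v)

theorem eq_closure_one_div_of_isGreatest {H : AddSubgroup ℚ} {N : ℕ}
    (hN : IsGreatest {n : ℕ | 0 < n ∧ (1 / n : ℚ) ∈ H} N) :
    H = AddSubgroup.closure {(1 / N : ℚ)} := by
  obtain ⟨⟨hN_pos, hN_mem⟩, hN_max⟩ := hN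
  refine le_antisymm (fun r hr ↦ ?_) ((AddSubgroup.closure_le H).2 (by simpa using hN_mem))
  have hN_ne : (N : ℚ) ≠ 0 := mod_cast hN_pos.ne'
  have inv_den_mem : ((N * r).den : ℚ)⁻¹ • (1 / N : ℚ) ∈ H :=
    inv_den_smul_mem hN_mem (by rwa [smul_eq_mul, mul_comm (N : ℚ), mul_one_div,
      mul_div_cancel_right₀ r hN_ne])
  have den_mul_le : (N * r).den * N ≤ N :=
    hN_max ⟨Nat.mul_pos (N * r).den_pos hN_pos, by
      simpa only [smul_eq_mul, one_div, Nat.cast_mul, mul_inv] using inv_den_mem⟩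
  have den_eq_one : (N * r).den = 1 :=
    le_antisymm (Nat.le_of_mul_le_mul_right (by simpa using den_mul_le) hN_pos) (N * r).den_pos
  refine AddSubgroup.mem_closure_singleton.2 ⟨(N * r).num, ?_⟩
  rw [zsmul_eq_mul, Rat.coe_int_num_of_den_eq_one den_eq_one, mul_one_div,
    mul_div_cancel_left₀ r hN_ne]

theorem isOfFinOrder_of_zpow {G : Type*} [DivisionMonoid G] {y : G} {p : ℤ} (hp : p ≠ 0)
    (hy : IsOfFinOrder (y ^ p)) : IsOfFinOrder y := by
  obtain ⟨k, hk, y_pow⟩ := isOfFinOrder_iff_zpow_eq_one.1 hy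
  exact isOfFinOrder_iff_zpow_eq_one.2 ⟨p * k, mul_ne_zero hp hk, by rw [zpow_mul, y_pow]⟩

section CommGroup

variable {G : Type*} [CommGroup G]

/-- The analogue of `Θ_{K,x}` in a commutative group, torsion elements playing the part of roots of
unity: the rationals `p / q`, not necessarily in lowest terms, such that `x ^ p` is a `q`-th power
up to torsion. -/
def rationalExponents (x : G) : AddSubgroup ℚ where
  carrier := {r | ∃ p q : ℤ, q ≠ 0 ∧ r = p / q ∧ ∃ b : G, IsOfFinOrder (b ^ q * x ^ (-p))}
  zero_mem' := ⟨0, 1, one_ne_zero, by simp, 1, by simp⟩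
  add_mem' := by
    rintro _ _ ⟨p, q, hq, rfl, b, hb⟩ ⟨p', q', hq', rfl, b', hb'⟩
    refine ⟨p * q' + q * p', q * q', mul_ne_zero hq hq', ?_, b * b', ?_⟩
    · push_cast
      exact div_add_div _ _ (mod_cast hq) (mod_cast hq')
    · have pow_eq : (b * b') ^ (q * q') * x ^ (-(p * q' + q * p')) =
          (b ^ q * x ^ (-p)) ^ q' * (b' ^ q' * x ^ (-p')) ^ q := by
        rw [mul_zpow, neg_add, zpow_add, mul_mul_mul_comm, mul_zpow, mul_zpow, ← zpow_mul,
          ← zpow_mul, ← zpow_mul, ← zpow_mul, neg_mul, neg_mul, mul_comm q' q, mul_comm p' q]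
      exact pow_eq ▸ hb.zpow.mul hb'.zpow
  neg_mem' := by
    rintro _ ⟨p, q, hq, rfl, b, hb⟩
    refine ⟨-p, q, hq, by push_cast; ring, b⁻¹, ?_⟩
    simpa [mul_comm] using hb.inv

/-- The analogue of `rhoSet` in a commutative group: the positive `n` such that `x` is an `n`-th
power up to torsion. -/
def rootDegrees (x : G) : Set ℕ :=
  {n | 0 < n ∧ ∃ a : G, IsOfFinOrder (a ^ n * x⁻¹)}

theorem one_mem_rootDegrees (x : G) : 1 ∈ rootDegrees x :=
  ⟨one_pos, x, by simp⟩

theorem one_div_mem_rationalExponents_iff {x : G} {n : ℕ} (hn : 0 < n) :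
    (1 / n : ℚ) ∈ rationalExponents x ↔ ∃ a : G, IsOfFinOrder (a ^ n * x⁻¹) := by
  constructor
  · rintro ⟨p, q, hq, hpq, b, hb⟩
    have q_eq : q = n * p := by
      rw [div_eq_div_iff (mod_cast hn.ne') (mod_cast hq), one_mul] at hpq
      rw [mul_comm]
      exact_mod_cast hpq
    have hp : p ≠ 0 := right_ne_zero_of_mul (q_eq ▸ hq)
    have pow_eq : b ^ q * x ^ (-p) = (b ^ n * x⁻¹) ^ p := by
      rw [q_eq, zpow_mul, zpow_natCast, zpow_neg, ← inv_zpow, mul_zpow]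
    exact ⟨b, isOfFinOrder_of_zpow hp (pow_eq ▸ hb)⟩
  · rintro ⟨a, ha⟩
    exact ⟨1, n, mod_cast hn.ne', by simp, a, by simpa using ha⟩

theorem rootDegrees_eq_setOf_one_div_mem (x : G) :
    rootDegrees x = {n : ℕ | 0 < n ∧ (1 / n : ℚ) ∈ rationalExponents x} :=
  Set.ext fun _ ↦ and_congr_right fun hn ↦ (one_div_mem_rationalExponents_iff hn).symm

theorem thetaSet_eq_closure_inv_rho_general (x : G) (hfin : BddAbove (rootDegrees x)) :
    rationalExponents x = AddSubgroup.closure {(1 / (sSup (rootDegrees x) : ℕ) : ℚ)} := by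
  have isGreatest : IsGreatest (rootDegrees x) (sSup (rootDegrees x)) :=
    ⟨Nat.sSup_mem ⟨1, one_mem_rootDegrees x⟩ hfin, fun _ hn ↦ le_csSup hfin hn⟩
  exact eq_closure_one_div_of_isGreatest (rootDegrees_eq_setOf_one_div_mem x ▸ isGreatest)

end CommGroup

section Field

variable {K : Type*} [Field K]

theorem isRootOfUnity_iff_isOfFinOrder {y : K} : IsRootOfUnity y ↔ IsOfFinOrder y :=
  isOfFinOrder_iff_pow_eq_one.symm

theorem isRootOfUnity_val_iff {u : Kˣ} : IsRootOfUnity (u : K) ↔ IsOfFinOrder u :=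
  isRootOfUnity_iff_isOfFinOrder.trans Units.isOfFinOrder_val

theorem IsRootOfUnity.ne_zero {y : K} (hy : IsRootOfUnity y) : y ≠ 0 :=
  (isRootOfUnity_iff_isOfFinOrder.1 hy).isUnit.ne_zero

theorem rhoSet_val_eq_rootDegrees (x : Kˣ) : rhoSet K x = rootDegrees x := by
  ext n
  refine and_congr_right fun hn ↦ ⟨?_, ?_⟩
  · rintro ⟨α, hα⟩
    have hα_ne : α ≠ 0 := (pow_ne_zero_iff hn.ne').1 (left_ne_zero_of_mul hα.ne_zero)
    lift α to Kˣ using hα_ne.isUnit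
    exact ⟨α, isRootOfUnity_val_iff.1 (by simpa using hα)⟩
  · rintro ⟨a, ha⟩
    exact ⟨a, by simpa using isRootOfUnity_val_iff.2 ha⟩

theorem thetaSet_val_eq_rationalExponents (x : Kˣ) : ThetaSet K x = rationalExponents x := by
  ext r
  constructor
  · rintro ⟨p, q, hq, hr, β, hβ, hroot⟩
    lift β to Kˣ using hβ.isUnit
    exact ⟨p, q, hq, hr, β, isRootOfUnity_val_iff.1 (by simpa using hroot)⟩
  · rintro ⟨p, q, hq, hr, b, hb⟩
    exact ⟨p, q, hq, hr, b, b.ne_zero, by simpa using isRootOfUnity_val_iff.2 hb⟩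

end Field

/-- If `ρ_K(x) < ∞` then `Θ_{K,x}` is the subgroup of `(ℚ,+)` generated by `1/ρ_K(x)`. -/
theorem thetaSet_eq_closure_inv_rho
    (K : Type*) [Field K] (x : K) (hx : x ≠ 0)
    (hfin : BddAbove (rhoSet K x)) :
    ThetaSet K x =
      (AddSubgroup.closure {(1 : ℚ) / ((sSup (rhoSet K x) : ℕ) : ℚ)} : Set ℚ) := by
  lift x to Kˣ using hx.isUnit
  rw [rhoSet_val_eq_rootDegrees] at hfin ⊢
  rw [thetaSet_val_eq_rationalExponents, thetaSet_eq_closure_inv_rho_general x hfin]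
end

section
/- Let K be a finitely generated field extension of ℚ with algebraic closure K̄, let S be a finite subset of K*, and let Λ ⊆ K̄* be a subset such that: (1) deg K(λ)/K ≤ 2 for every λ ∈ Λ, and (2) for every λ ∈ Λ there exist μ ∈ S and integers p, q ∈ ℤ \ {0} with λ^p = μ^q. Then there exist a finite subgroup W of K̄* and a finite subset S' of K̄*, none of whose elements is a root of unity, such that every λ ∈ Λ can be written as λ = α^N·w with α ∈ S', N ∈ ℤ and w ∈ W. -/
/-!
Fix a nonzero `μ ∈ K`. It suffices to find one exponent `E ≠ 0` with `λ ^ E ∈ μ ^ ℤ` for all `λ` of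
degree at most `D` that are multiplicatively dependent on `μ`: then `λ` is a power of an `E`-th root
`α` of `μ`, up to a root of unity of order dividing `E`. If `μ` itself is a root of unity, then so
is `λ`, and any `α` will do.

* `K` is finite, of degree `d` say, over a purely transcendental extension of `ℚ`, and algebraic
  elements keep their degree over such an extension. So a root of unity of degree at most `D` over
  `K` has degree at most `d * D` over `ℚ`, and all of these are killed by one exponent `M`.
* If a power of `λ` lies in `K`, then `σ λ / λ` is a root of unity of degree at most `D ^ 2` for
  every `σ` in the Galois group, hence `λ ^ M ∈ K` for the exponent `M` belonging to `D ^ 2`.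
* The `n` for which an element `ν ∈ K` of infinite order is an `n`-th power are bounded. If `ν` is
  transcendental, take it as a member of a transcendence basis and apply Eisenstein's criterion
  to `X ^ n - ν`. If `ν` is algebraic, its roots in `K` lie in a number field and have height at
  most that of `ν`, so Northcott's theorem applies.
* If `x ∈ K` and `x ^ p = μ ^ q`, dividing `p` and `q` by their gcd and raising to the power `M`
  makes `μ ^ M` a `p / gcd`-th power by Bézout, which bounds `p / gcd`.
-/

section PurelyTranscendental

open Polynomial

theorem irreducible_X_pow_sub_C_of_prime {A : Type*} [CommRing A] [IsDomain A] {π : A}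
    (hπ : Prime π) {n : ℕ} (hn : n ≠ 0) : Irreducible (X ^ n - C π : A[X]) := by
  have hmonic : (X ^ n - C π : A[X]).Monic := monic_X_pow_sub_C π hn
  have hprime : (Ideal.span {π}).IsPrime := (Ideal.span_singleton_prime hπ.ne_zero).2 hπ
  have heisenstein : (X ^ n - C π : A[X]).IsEisensteinAt (Ideal.span {π}) :=
    { leading := by
        rw [hmonic.leadingCoeff, ← Ideal.eq_top_iff_one]
        exact hprime.ne_top
      mem := fun {m} hm ↦ by
        rw [natDegree_X_pow_sub_C] at hm
        rcases eq_or_ne m 0 with rfl | hm0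
        · simp [hn.symm, coeff_X_pow]
        · simp [coeff_X_pow, coeff_C, hm.ne, hm0]
      notMem := by
        have hndvd : ¬ π ^ 2 ∣ π := by
          simpa using (pow_dvd_pow_iff hπ.ne_zero hπ.not_isUnit (m := 1)).not.2 one_lt_two.not_ge
        simpa [hn.symm, coeff_X_pow, Ideal.span_singleton_pow, Ideal.mem_span_singleton] }
  exact heisenstein.irreducible hprime hmonic.isPrimitive
    (by rw [natDegree_X_pow_sub_C]; exact hn.bot_lt)

theorem le_finrank_of_pow_eq_prime {A F K : Type*} [CommRing A] [IsDomain A]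
    [IsIntegrallyClosed A] [Field F] [Algebra A F] [IsFractionRing A F] [Field K] [Algebra F K]
    [Algebra A K] [IsScalarTower A F K] [FiniteDimensional F K] {π : A} (hπ : Prime π) {n : ℕ}
    {y : K} (hy : y ^ n = algebraMap A K π) : n ≤ Module.finrank F K := by
  rcases eq_or_ne n 0 with rfl | hn
  · exact Nat.zero_le _
  have hmonic : (X ^ n - C π : A[X]).Monic := monic_X_pow_sub_C π hn
  have hirr : Irreducible ((X ^ n - C π : A[X]).map (algebraMap A F)) :=
    hmonic.irreducible_iff_irreducible_map_fraction_map.1 (irreducible_X_pow_sub_C_of_prime hπ hn)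
  have hminpoly : (X ^ n - C π : A[X]).map (algebraMap A F) = minpoly F y :=
    minpoly.eq_of_irreducible_of_monic hirr
      (by simp [hy, ← IsScalarTower.algebraMap_apply]) (hmonic.map _)
  calc n = (minpoly F y).natDegree := by
        rw [← hminpoly, hmonic.natDegree_map, natDegree_X_pow_sub_C]
    _ ≤ Module.finrank F K := minpoly.natDegree_le y

theorem natDegree_minpoly_eq_of_retraction {k A L : Type*} (F : Type*) [Field k] [CommRing A]
    [IsDomain A] [IsIntegrallyClosed A] [Algebra k A] (ε : A →ₐ[k] k) [Field F] [Algebra A F]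
    [IsFractionRing A F] [Field L] [Algebra F L] [Algebra A L] [IsScalarTower A F L] [Algebra k L]
    [IsScalarTower k A L] {a : L} (ha : IsIntegral k a) :
    (minpoly F a).natDegree = (minpoly k a).natDegree := by
  have haA : IsIntegral A a := ha.tower_top
  have : FaithfulSMul A L := .trans A F L
  have hmonic : (minpoly A a).Monic := minpoly.monic haA
  have hdvd : minpoly A a ∣ (minpoly k a).map (algebraMap k A) :=
    minpoly.isIntegrallyClosed_dvd haA (by rw [aeval_map_algebraMap, minpoly.aeval])
  -- The retraction specialises the divisibility over `A` to one over `k`.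
  have hdvd_k : (minpoly A a).map (ε : A →+* k) ∣ minpoly k a := by
    simpa [Polynomial.map_map, ε.comp_algebraMap] using Polynomial.map_dvd (ε : A →+* k) hdvd
  have hnot_unit : ¬ IsUnit ((minpoly A a).map (ε : A →+* k)) :=
    not_isUnit_of_natDegree_pos _ (by rw [hmonic.natDegree_map]; exact minpoly.natDegree_pos haA)
  have heq : minpoly k a = (minpoly A a).map (ε : A →+* k) :=
    eq_of_monic_of_associated (minpoly.monic ha) (hmonic.map _)
      (((minpoly.irreducible ha).dvd_iff.1 hdvd_k).resolve_left hnot_unit)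
  rw [minpoly.isIntegrallyClosed_eq_field_fractions' F haA, hmonic.natDegree_map, heq,
    hmonic.natDegree_map]

open scoped IntermediateField.algebraAdjoinAdjoin

variable {k K ι : Type*} [Field k] [Field K] [Algebra k K] {x : ι → K}

theorem isIntegrallyClosed_adjoin_range (hx : AlgebraicIndependent k x) :
    IsIntegrallyClosed (Algebra.adjoin k (Set.range x)) :=
  .of_equiv hx.aevalEquiv.toRingEquiv

theorem prime_adjoin_range (hx : AlgebraicIndependent k x) (i : ι) :
    Prime (⟨x i, Algebra.subset_adjoin ⟨i, rfl⟩⟩ : Algebra.adjoin k (Set.range x)) := by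
  have hX : hx.aevalEquiv (MvPolynomial.X i) = ⟨x i, Algebra.subset_adjoin ⟨i, rfl⟩⟩ :=
    Subtype.ext (by simp)
  rw [← hX]
  exact (MulEquiv.prime_iff hx.aevalEquiv).2 MvPolynomial.X_prime

theorem le_finrank_of_pow_eq_of_algebraicIndependent (hx : AlgebraicIndependent k x)
    [FiniteDimensional (IntermediateField.adjoin k (Set.range x)) K] {i : ι} {n : ℕ} {y : K}
    (hy : y ^ n = x i) : n ≤ Module.finrank (IntermediateField.adjoin k (Set.range x)) K := by
  have := isIntegrallyClosed_adjoin_range hx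
  exact le_finrank_of_pow_eq_prime (prime_adjoin_range hx i) hy

theorem natDegree_minpoly_adjoin_range_eq (hx : AlgebraicIndependent k x) {L : Type*} [Field L]
    [Algebra K L] [Algebra k L] [IsScalarTower k K L] {a : L} (ha : IsIntegral k a) :
    (minpoly (IntermediateField.adjoin k (Set.range x)) a).natDegree =
      (minpoly k a).natDegree := by
  have := isIntegrallyClosed_adjoin_range hx
  exact natDegree_minpoly_eq_of_retraction _
    ((MvPolynomial.aeval fun _ ↦ 0).comp hx.aevalEquiv.symm.toAlgHom) ha

theorem finiteDimensional_adjoin_range_of_isTranscendenceBasis [Algebra.EssFiniteType k K]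
    (hx : IsTranscendenceBasis k x) :
    FiniteDimensional (IntermediateField.adjoin k (Set.range x)) K := by
  have := hx.isAlgebraic_field
  have : Algebra.EssFiniteType (IntermediateField.adjoin k (Set.range x)) K := .of_comp k _ _
  exact Algebra.finite_of_essFiniteType_of_isAlgebraic

end PurelyTranscendental

theorem natDegree_minpoly_le_finrank_mul {F K L : Type*} [Field F] [Field K] [Field L]
    [Algebra F K] [Algebra K L] [Algebra F L] [IsScalarTower F K L] [FiniteDimensional F K]
    {a : L} (ha : IsIntegral K a) :
    (minpoly F a).natDegree ≤ Module.finrank F K * (minpoly K a).natDegree := by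
  have := IntermediateField.adjoin.finiteDimensional ha
  have : FiniteDimensional F (IntermediateField.adjoin K {a}) := .trans F K _
  have : IsScalarTower F (IntermediateField.adjoin K {a}) L := ⟨fun c b z ↦ smul_assoc c (b : L) z⟩
  rw [← IntermediateField.adjoin.finrank ha, Module.finrank_mul_finrank,
    ← IntermediateField.AdjoinSimple.algebraMap_gen K a,
    minpoly.algebraMap_eq (FaithfulSMul.algebraMap_injective _ _)]
  exact minpoly.natDegree_le _

theorem finiteDimensional_of_natDegree_minpoly_le {k E : Type*} [Field k] [Field E] [Algebra k E]
    [Algebra.IsSeparable k E] {d : ℕ} (hd : ∀ a : E, (minpoly k a).natDegree ≤ d) :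
    FiniteDimensional k E := by
  by_contra hinf
  obtain ⟨F, _, hlt⟩ := IntermediateField.exists_lt_finrank_of_infinite_dimensional hinf d
  obtain ⟨a, ha⟩ := Field.exists_primitive_element k F
  have hdeg := (Field.primitive_element_iff_minpoly_natDegree_eq k a).1 ha
  rw [← minpoly.algebraMap_eq (FaithfulSMul.algebraMap_injective F E)] at hdeg
  exact (hd _).not_gt (hdeg ▸ hlt)

section EssFiniteType

variable (k K : Type*) [Field k] [Field K] [Algebra k K] [Algebra.EssFiniteType k K]

theorem exists_natDegree_minpoly_le_mul (L : Type*) [Field L] [Algebra K L] [Algebra k L]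
    [IsScalarTower k K L] :
    ∃ d : ℕ, ∀ a : L, IsIntegral k a → (minpoly k a).natDegree ≤ d * (minpoly K a).natDegree := by
  obtain ⟨s, hs⟩ := exists_isTranscendenceBasis k K
  have := finiteDimensional_adjoin_range_of_isTranscendenceBasis hs
  refine ⟨Module.finrank (IntermediateField.adjoin k (Set.range ((↑) : s → K))) K, fun a ha ↦ ?_⟩
  rw [← natDegree_minpoly_adjoin_range_eq hs.1 ha]
  exact natDegree_minpoly_le_finrank_mul ha.tower_top

theorem finiteDimensional_algebraicClosure [PerfectField k] :
    FiniteDimensional k (algebraicClosure k K) := by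
  obtain ⟨d, hd⟩ := exists_natDegree_minpoly_le_mul k K K
  refine finiteDimensional_of_natDegree_minpoly_le (d := d) fun a ↦ ?_
  have hdeg : (minpoly K (a : K)).natDegree = 1 := minpoly.natDegree_eq_one_iff.2 ⟨_, rfl⟩
  have ha : IsIntegral k (a : K) := (mem_algebraicClosure_iff.1 a.2).isIntegral
  have hminpoly : minpoly k (a : K) = minpoly k a :=
    minpoly.algHom_eq (algebraicClosure k K).val Subtype.val_injective a
  simpa [hminpoly, hdeg] using hd a ha

variable {k K}

theorem bddAbove_setOf_exists_pow_eq_of_transcendental {ν : K} (hν : Transcendental k ν) :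
    BddAbove {n : ℕ | ∃ y : K, y ^ n = ν} := by
  obtain ⟨s, hνs, hs⟩ := exists_isTranscendenceBasis_superset
    ((algebraicIndependent_singleton_iff (⟨ν, rfl⟩ : ({ν} : Set K))).2 hν)
  have := finiteDimensional_adjoin_range_of_isTranscendenceBasis hs
  refine ⟨Module.finrank (IntermediateField.adjoin k (Set.range ((↑) : s → K))) K, ?_⟩
  rintro n ⟨y, hy⟩
  exact le_finrank_of_pow_eq_of_algebraicIndependent hs.1 (i := ⟨ν, hνs rfl⟩) hy

end EssFiniteType

theorem isOfFinOrder_of_zpow_mem_zpowers {G : Type*} [Group G] {u x : G} (hu : IsOfFinOrder u)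
    {p : ℤ} (hp : p ≠ 0) (hx : x ^ p ∈ Subgroup.zpowers u) : IsOfFinOrder x := by
  refine isOfFinOrder_iff_zpow_eq_one.2 ⟨p * orderOf u, mul_ne_zero hp ?_, ?_⟩
  · exact_mod_cast hu.orderOf_pos.ne'
  · rw [zpow_mul, zpow_natCast]
    exact orderOf_dvd_iff_pow_eq_one.1 (orderOf_dvd_of_mem_zpowers hx)

theorem exists_pow_natAbs_eq {G : Type*} [DivisionMonoid G] {μ : G} {m : ℤ}
    (h : ∃ y : G, y ^ m = μ) : ∃ y : G, y ^ m.natAbs = μ := by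
  obtain ⟨y, hy⟩ := h
  obtain hm | hm := m.natAbs_eq
  · exact ⟨y, by rwa [hm, zpow_natCast] at hy⟩
  · exact ⟨y⁻¹, by rwa [hm, zpow_neg, zpow_natCast, ← inv_pow] at hy⟩

section CommGroup

variable {G : Type*} [CommGroup G]

theorem exists_zpow_eq_of_isCoprime {x μ : G} {m n : ℤ} (hmn : IsCoprime m n)
    (h : x ^ m = μ ^ n) : ∃ y : G, y ^ m = μ := by
  obtain ⟨a, b, hab⟩ := hmn
  refine ⟨μ ^ a * x ^ b, ?_⟩
  calc (μ ^ a * x ^ b) ^ m = μ ^ (a * m) * (x ^ m) ^ b := by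
        rw [mul_zpow, ← zpow_mul, ← zpow_mul, ← zpow_mul, mul_comm b]
    _ = μ ^ (a * m + b * n) := by rw [h, ← zpow_mul, mul_comm n, ← zpow_add]
    _ = μ := by rw [hab, zpow_one]

theorem pow_mul_factorial_mem_zpowers {M d : ℕ} {μ x : G}
    (hM : ∀ ζ : G, IsOfFinOrder ζ → ζ ^ M = 1)
    (hd : d ∈ upperBounds {n : ℕ | ∃ y : G, y ^ n = μ ^ M}) {p : ℤ} (hp : p ≠ 0)
    (hx : x ^ p ∈ Subgroup.zpowers μ) :
    x ^ (M * d.factorial) ∈ Subgroup.zpowers μ := by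
  obtain ⟨q, hq⟩ := Subgroup.mem_zpowers_iff.1 hx
  obtain ⟨g, m, n, hg, hmn, rfl, rfl⟩ := Int.exists_gcd_one' (Int.gcd_pos_of_ne_zero_left q hp)
  have hm : m ≠ 0 := left_ne_zero_of_mul hp
  have htorsion : (x ^ m / μ ^ n) ^ M = 1 := by
    refine hM _ (isOfFinOrder_iff_pow_eq_one.2 ⟨g, hg, ?_⟩)
    rw [div_pow, ← zpow_natCast, ← zpow_natCast, ← zpow_mul, ← zpow_mul, hq, div_self']
  have hpow : (x ^ M) ^ m = (μ ^ M) ^ n := by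
    rw [div_pow, div_eq_one] at htorsion
    rw [← zpow_natCast, zpow_comm, zpow_natCast, htorsion, ← zpow_natCast, zpow_comm, zpow_natCast]
  have hle : m.natAbs ≤ d := hd <| exists_pow_natAbs_eq <|
    exists_zpow_eq_of_isCoprime (Int.isCoprime_iff_gcd_eq_one.2 hmn) hpow
  obtain ⟨r, hr⟩ : m ∣ (d.factorial : ℤ) :=
    Int.natAbs_dvd.1 (by exact_mod_cast Nat.dvd_factorial (Int.natAbs_pos.2 hm) hle)
  rw [pow_mul, ← zpow_natCast, hr, zpow_mul, hpow]
  exact zpow_mem (zpow_mem (pow_mem (Subgroup.mem_zpowers μ) M) n) r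

end CommGroup

theorem bddAbove_setOf_exists_pow_eq_of_northcott {k : Type*} [Field k]
    [Height.AdmissibleAbsValues k] [Northcott (Height.mulHeight₁ (K := k))] {ν : kˣ}
    (hν : ¬ IsOfFinOrder ν) : BddAbove {n : ℕ | ∃ y : kˣ, y ^ n = ν} := by
  have hfinite : {y : kˣ | Height.mulHeight₁ (y : k) ≤ Height.mulHeight₁ (ν : k)}.Finite :=
    (Northcott.finite_le (h := Height.mulHeight₁ (K := k)) _).preimage Units.val_injective.injOn
  refine (Set.Finite.subset (hfinite.biUnion (t := fun y ↦ {n : ℕ | y ^ n = ν})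
    fun y _ ↦ Set.Subsingleton.finite ?_) ?_).bddAbove
  · intro m hm n hn
    have hy : ¬ IsOfFinOrder y := fun h ↦ hν (hm ▸ h.pow)
    exact injective_pow_iff_not_isOfFinOrder.2 hy (hm.trans hn.symm)
  · rintro n ⟨y, rfl⟩
    have hn : n ≠ 0 := by rintro rfl; simp at hν
    simp only [Set.mem_iUnion]
    refine ⟨y, ?_, rfl⟩
    rw [Set.mem_ofPred_eq, Units.val_pow_eq_pow_val, Height.mulHeight₁_pow]
    exact le_self_pow₀ (Height.one_le_mulHeight₁ _) hn

theorem bddAbove_setOf_exists_pow_eq {K : Type*} [Field K] [CharZero K]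
    [Algebra.EssFiniteType ℚ K] {ν : Kˣ} (hν : ¬ IsOfFinOrder ν) :
    BddAbove {n : ℕ | ∃ y : Kˣ, y ^ n = ν} := by
  by_cases halg : IsAlgebraic ℚ (ν : K)
  · have := finiteDimensional_algebraicClosure ℚ K
    have : NumberField (algebraicClosure ℚ K) := {}
    let ν' : (algebraicClosure ℚ K)ˣ :=
      .mk0 ⟨ν, mem_algebraicClosure_iff.2 halg⟩ (Subtype.coe_ne_coe.1 ν.ne_zero)
    have hν' : ¬ IsOfFinOrder ν' := fun h ↦ hν <| Units.isOfFinOrder_val.1 <|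
      (algebraicClosure ℚ K).val.toMonoidHom.isOfFinOrder (Units.isOfFinOrder_val.2 h)
    refine (bddAbove_setOf_exists_pow_eq_of_northcott hν').mono ?_
    rintro n ⟨y, hy⟩
    have hn : 0 < n := Nat.pos_of_ne_zero (by rintro rfl; simp [← hy] at hν)
    have hyν : (y : K) ^ n = ν := by rw [← hy, Units.val_pow_eq_pow_val]
    exact ⟨.mk0 ⟨y, mem_algebraicClosure_iff.2 (.of_pow hn (hyν ▸ halg))⟩
      (Subtype.coe_ne_coe.1 y.ne_zero), Units.ext (Subtype.ext hyν)⟩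
  · refine (bddAbove_setOf_exists_pow_eq_of_transcendental halg).mono ?_
    rintro n ⟨y, rfl⟩
    exact ⟨y, (Units.val_pow_eq_pow_val y n).symm⟩

theorem dvd_factorial_two_mul_totient {n : ℕ} (hn : n ≠ 0) : n ∣ (2 * n.totient).factorial := by
  refine (Nat.dvd_iff_prime_pow_dvd_dvd _ _).2 fun p k hp hpk ↦ ?_
  rcases k with _ | k
  · exact one_dvd _
  refine Nat.dvd_factorial (pow_pos hp.pos _) ?_
  calc p ^ (k + 1) = p ^ k * p := pow_succ _ _
    _ ≤ p ^ k * (2 * (p - 1)) := Nat.mul_le_mul_left _ (by have := hp.two_le; lia)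
    _ = 2 * (p ^ (k + 1)).totient := by rw [Nat.totient_prime_pow_succ hp]; ring
    _ ≤ 2 * n.totient := Nat.mul_le_mul_left _ <|
      Nat.le_of_dvd (Nat.totient_pos.2 hn.bot_lt) (Nat.totient_dvd_of_dvd hpk)

theorem totient_orderOf_le_natDegree_minpoly {L : Type*} [Field L] [CharZero L] {ζ : L}
    (hζ : IsOfFinOrder ζ) : (orderOf ζ).totient ≤ (minpoly ℚ ζ).natDegree := by
  have hprim : IsPrimitiveRoot ζ (orderOf ζ) := .orderOf ζ
  have hint : IsIntegral ℤ ζ := hprim.isIntegral hζ.orderOf_pos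
  rw [minpoly.isIntegrallyClosed_eq_field_fractions' ℚ hint, (minpoly.monic hint).natDegree_map]
  exact hprim.totient_le_degree_minpoly

theorem pow_factorial_eq_one_of_natDegree_minpoly_le {L : Type*} [Field L] [CharZero L] {ζ : L}
    (hζ : IsOfFinOrder ζ) {n : ℕ} (hn : (minpoly ℚ ζ).natDegree ≤ n) :
    ζ ^ (2 * n).factorial = 1 := by
  have hle : 2 * (orderOf ζ).totient ≤ 2 * n :=
    Nat.mul_le_mul_left 2 ((totient_orderOf_le_natDegree_minpoly hζ).trans hn)
  exact orderOf_dvd_iff_pow_eq_one.1 <|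
    (dvd_factorial_two_mul_totient hζ.orderOf_pos.ne').trans (Nat.factorial_dvd_factorial hle)

section AlgebraicClosure

open scoped IntermediateField

theorem exists_pow_eq_one_of_natDegree_minpoly_le (K L : Type*) [Field K] [CharZero K]
    [Algebra.EssFiniteType ℚ K] [Field L] [Algebra K L] (D : ℕ) :
    ∃ M : ℕ, M ≠ 0 ∧ ∀ ζ : L, IsOfFinOrder ζ → (minpoly K ζ).natDegree ≤ D → ζ ^ M = 1 := by
  have : CharZero L := charZero_of_injective_algebraMap (algebraMap K L).injective
  obtain ⟨d, hd⟩ := exists_natDegree_minpoly_le_mul ℚ K L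
  refine ⟨(2 * (d * D)).factorial, Nat.factorial_ne_zero _, fun ζ hζ hdeg ↦ ?_⟩
  have hint : IsIntegral ℚ ζ :=
    .of_pow hζ.orderOf_pos (by rw [pow_orderOf_eq_one]; exact isIntegral_one)
  exact pow_factorial_eq_one_of_natDegree_minpoly_le hζ
    ((hd ζ hint).trans (Nat.mul_le_mul_left d hdeg))

variable {K L : Type*} [Field K] [Field L] [Algebra K L]

theorem natDegree_minpoly_div_le {a b : L} (ha : IsIntegral K a) (hb : IsIntegral K b) :
    (minpoly K (a / b)).natDegree ≤ (minpoly K a).natDegree * (minpoly K b).natDegree := by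
  have := IntermediateField.adjoin.finiteDimensional ha
  have := IntermediateField.adjoin.finiteDimensional hb
  let E := K⟮a⟯ ⊔ K⟮b⟯
  have haE : a ∈ E := (le_sup_left : K⟮a⟯ ≤ E) (IntermediateField.mem_adjoin_simple_self K a)
  have hbE : b ∈ E := (le_sup_right : K⟮b⟯ ≤ E) (IntermediateField.mem_adjoin_simple_self K b)
  calc (minpoly K (a / b)).natDegree = (minpoly K (⟨a / b, div_mem haE hbE⟩ : E)).natDegree := by
        rw [← minpoly.algHom_eq E.val Subtype.val_injective]; rfl
    _ ≤ Module.finrank K E := minpoly.natDegree_le _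
    _ ≤ Module.finrank K K⟮a⟯ * Module.finrank K K⟮b⟯ := IntermediateField.finrank_sup_le _ _
    _ = (minpoly K a).natDegree * (minpoly K b).natDegree := by
        rw [IntermediateField.adjoin.finrank ha, IntermediateField.adjoin.finrank hb]

theorem pow_mem_range_algebraMap_of_zpow_mem [IsGalois K L] {D M : ℕ}
    (hM : ∀ ζ : L, IsOfFinOrder ζ → (minpoly K ζ).natDegree ≤ D * D → ζ ^ M = 1) {lam : L}
    (h0 : lam ≠ 0) (hdeg : (minpoly K lam).natDegree ≤ D) {p : ℤ} (hp : p ≠ 0)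
    (hlam : lam ^ p ∈ (algebraMap K L).range) : lam ^ M ∈ (algebraMap K L).range := by
  suffices h : lam ^ M ∈ (⊥ : IntermediateField K L) from IntermediateField.mem_bot.1 h
  rw [InfiniteGalois.mem_bot_iff_fixed]
  intro σ
  obtain ⟨c, hc⟩ := hlam
  have hfin : IsOfFinOrder (σ lam / lam) := isOfFinOrder_iff_zpow_eq_one.2
    ⟨p, hp, by rw [div_zpow, ← map_zpow₀, ← hc, σ.commutes, hc, div_self (zpow_ne_zero p h0)]⟩
  have hint : IsIntegral K lam := Algebra.IsIntegral.isIntegral lam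
  have hdeg_div : (minpoly K (σ lam / lam)).natDegree ≤ D * D :=
    (natDegree_minpoly_div_le (hint.map σ) hint).trans
      (by rw [minpoly.algEquiv_eq]; exact Nat.mul_le_mul hdeg hdeg)
  have hone : (σ lam / lam) ^ M = 1 := hM _ hfin hdeg_div
  rwa [div_pow, div_eq_one_iff_eq (pow_ne_zero M h0), ← map_pow] at hone

theorem pow_mul_factorial_mem_zpowers_of_natDegree_le [IsGalois K L] {D M d : ℕ} {μ : Kˣ}
    (hM : ∀ ζ : L, IsOfFinOrder ζ → (minpoly K ζ).natDegree ≤ D * D → ζ ^ M = 1)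
    (hd : d ∈ upperBounds {n : ℕ | ∃ y : Kˣ, y ^ n = μ ^ M}) {lam : Lˣ}
    (hdeg : (minpoly K (lam : L)).natDegree ≤ D) {p : ℤ} (hp : p ≠ 0)
    (hlam : lam ^ p ∈ Subgroup.zpowers (Units.map (algebraMap K L : K →* L) μ)) :
    lam ^ (M * (M * d.factorial)) ∈
      Subgroup.zpowers (Units.map (algebraMap K L : K →* L) μ) := by
  let φ : Kˣ →* Lˣ := Units.map (algebraMap K L : K →* L)
  have hφ : Function.Injective φ := Units.map_injective (algebraMap K L).injective
  have htorsion (ζ : Kˣ) (hζ : IsOfFinOrder ζ) : ζ ^ M = 1 := hφ <| Units.ext <| by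
    have hD : 0 < D :=
      (minpoly.natDegree_pos (Algebra.IsIntegral.isIntegral (lam : L))).trans_le hdeg
    have hdeg_one : (minpoly K (φ ζ : L)).natDegree = 1 :=
      minpoly.natDegree_eq_one_iff.2 ⟨ζ, rfl⟩
    simpa using hM (φ ζ) (Units.isOfFinOrder_val.2 (φ.isOfFinOrder hζ))
      (hdeg_one.trans_le (Nat.mul_pos hD hD))
  obtain ⟨q, hq⟩ := Subgroup.mem_zpowers_iff.1 hlam
  obtain ⟨x, hx⟩ := pow_mem_range_algebraMap_of_zpow_mem hM lam.ne_zero hdeg hp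
    ⟨(μ ^ q : Kˣ), by simpa using congrArg Units.val hq⟩
  have hx0 : x ≠ 0 := by
    rintro rfl
    exact pow_ne_zero M lam.ne_zero (by rw [← hx, map_zero])
  have hφx : φ (Units.mk0 x hx0) = lam ^ M := Units.ext hx
  rw [← MonoidHom.map_zpowers, pow_mul, ← hφx, ← map_pow, Subgroup.mem_map_iff_mem hφ]
  refine pow_mul_factorial_mem_zpowers htorsion hd hp ?_
  rw [← Subgroup.mem_map_iff_mem hφ, MonoidHom.map_zpowers, map_zpow, hφx, ← zpow_natCast,
    zpow_comm, zpow_natCast]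
  exact pow_mem hlam M

theorem exists_pow_mem_zpowers [CharZero K] [Algebra.EssFiniteType ℚ K] [IsGalois K L]
    (D : ℕ) (μ : Kˣ) :
    ∃ E : ℕ, E ≠ 0 ∧ ∀ lam : Lˣ, (minpoly K (lam : L)).natDegree ≤ D → ∀ p : ℤ, p ≠ 0 →
      lam ^ p ∈ Subgroup.zpowers (Units.map (algebraMap K L : K →* L) μ) →
        lam ^ E ∈ Subgroup.zpowers (Units.map (algebraMap K L : K →* L) μ) := by
  obtain ⟨M, hM0, hM⟩ := exists_pow_eq_one_of_natDegree_minpoly_le K L (D * D)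
  by_cases hμ : IsOfFinOrder μ
  · refine ⟨M, hM0, fun lam hdeg p hp hlam ↦ ?_⟩
    have hfin : IsOfFinOrder lam :=
      isOfFinOrder_of_zpow_mem_zpowers (MonoidHom.isOfFinOrder _ hμ) hp hlam
    have hone : lam ^ M = 1 := Units.ext <| by
      simpa using hM lam (Units.isOfFinOrder_val.2 hfin) (hdeg.trans (Nat.le_mul_self D))
    exact hone ▸ one_mem _
  · obtain ⟨d, hd⟩ := bddAbove_setOf_exists_pow_eq (ν := μ ^ M) fun h ↦ hμ (h.of_pow hM0)
    exact ⟨M * (M * d.factorial), mul_ne_zero hM0 (mul_ne_zero hM0 d.factorial_ne_zero),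
      fun lam hdeg p hp hlam ↦
        pow_mul_factorial_mem_zpowers_of_natDegree_le hM hd hdeg hp hlam⟩

theorem exists_div_zpow_mem_rootsOfUnity [IsAlgClosed L] [CharZero L] (u : Lˣ) {E : ℕ}
    (hE : E ≠ 0) :
    ∃ (α : Lˣ) (E' : ℕ), ¬ IsOfFinOrder α ∧ E' ≠ 0 ∧
      ∀ lam : Lˣ, lam ^ E ∈ Subgroup.zpowers u → ∃ N : ℤ, lam / α ^ N ∈ rootsOfUnity E' L := by
  by_cases hu : IsOfFinOrder u
  · have htwo : ¬ IsOfFinOrder (2 : L) := by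
      rw [isOfFinOrder_iff_pow_eq_one]
      rintro ⟨n, hn, h⟩
      exact (Nat.one_lt_two_pow hn.ne').ne' (by exact_mod_cast h)
    refine ⟨.mk0 2 two_ne_zero, E * orderOf u, fun h ↦ htwo (Units.isOfFinOrder_val.2 h),
      mul_ne_zero hE hu.orderOf_pos.ne', fun lam hlam ↦ ⟨0, ?_⟩⟩
    rw [zpow_zero, div_one, mem_rootsOfUnity, pow_mul]
    exact orderOf_dvd_iff_pow_eq_one.1 (orderOf_dvd_of_mem_zpowers hlam)
  · obtain ⟨a, ha⟩ := IsAlgClosed.exists_pow_nat_eq (u : L) hE.bot_lt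
    have ha0 : a ≠ 0 := by
      rintro rfl
      exact u.ne_zero (by rw [← ha, zero_pow hE])
    have hα : (Units.mk0 a ha0) ^ E = u := Units.ext ha
    refine ⟨.mk0 a ha0, E, fun h ↦ hu (hα ▸ h.pow), hE, fun lam hlam ↦ ?_⟩
    obtain ⟨N, hN⟩ := Subgroup.mem_zpowers_iff.1 hlam
    refine ⟨N, ?_⟩
    rw [mem_rootsOfUnity, div_pow, div_eq_one, ← hN, ← hα, ← zpow_natCast, zpow_comm, zpow_natCast]

theorem exists_eq_zpow_mul_rootsOfUnity [CharZero K] [Algebra.EssFiniteType ℚ K]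
    [IsAlgClosure K L] (D : ℕ) {μ : K} (hμ : μ ≠ 0) :
    ∃ (α : L) (E : ℕ), α ≠ 0 ∧ ¬ IsRootOfUnity α ∧ E ≠ 0 ∧
      ∀ lam : L, Module.finrank K (IntermediateField.adjoin K {lam}) ≤ D → ∀ p q : ℤ, p ≠ 0 →
        lam ^ p = algebraMap K L μ ^ q → ∃ N : ℤ, ∃ w ∈ rootsOfUnity E L,
          lam = α ^ N * (w : L) := by
  have : CharZero L := charZero_of_injective_algebraMap (algebraMap K L).injective
  have : IsAlgClosed L := IsAlgClosure.isAlgClosed K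
  have : Algebra.IsAlgebraic K L := IsAlgClosure.isAlgebraic
  obtain ⟨E, hE, hpow⟩ := exists_pow_mem_zpowers (L := L) D (Units.mk0 μ hμ)
  obtain ⟨α, E', hα, hE', hdiv⟩ :=
    exists_div_zpow_mem_rootsOfUnity (Units.map (algebraMap K L : K →* L) (.mk0 μ hμ)) hE
  refine ⟨α, E', α.ne_zero,
    fun h ↦ hα (Units.isOfFinOrder_val.1 (isOfFinOrder_iff_pow_eq_one.2 h)), hE', ?_⟩
  intro lam hdeg p q hp hpq
  rw [IntermediateField.adjoin.finrank (Algebra.IsIntegral.isIntegral lam)] at hdeg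
  have hlam : lam ≠ 0 := by
    rintro rfl
    rw [zero_zpow p hp] at hpq
    exact zpow_ne_zero q ((map_ne_zero (algebraMap K L)).2 hμ) hpq.symm
  obtain ⟨N, hN⟩ := hdiv _ (hpow (.mk0 lam hlam) hdeg p hp ⟨q, Units.ext (by simp [hpq])⟩)
  exact ⟨N, _, hN, by simp [mul_div_cancel₀, zpow_ne_zero]⟩

end AlgebraicClosure

theorem exists_finite_W_and_S'_general
    (K L : Type*) [Field K] [CharZero K] [Algebra.EssFiniteType ℚ K] [Field L] [Algebra K L]
    [IsAlgClosure K L] (D : ℕ) (S : Finset K) (hS : ∀ μ ∈ S, μ ≠ 0) (Λ : Set L)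
    (hdeg : ∀ lam ∈ Λ, Module.finrank K (IntermediateField.adjoin K {lam}) ≤ D)
    (hdep : ∀ lam ∈ Λ, ∃ μ ∈ S, ∃ p q : ℤ, p ≠ 0 ∧ lam ^ p = algebraMap K L μ ^ q) :
    ∃ (W : Subgroup Lˣ) (S' : Finset L),
      (W : Set Lˣ).Finite ∧
      (∀ α ∈ S', α ≠ 0 ∧ ¬ IsRootOfUnity α) ∧
      ∀ lam ∈ Λ, ∃ α ∈ S', ∃ N : ℤ, ∃ w ∈ W, lam = α ^ N * ((w : Lˣ) : L) := by
  classical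
  choose! α E hα0 hα hE hdecomp using fun μ (hμ : μ ∈ S) ↦
    exists_eq_zpow_mul_rootsOfUnity (L := L) D (hS μ hμ)
  have : NeZero (∏ μ ∈ S, E μ) := ⟨Finset.prod_ne_zero_iff.2 hE⟩
  refine ⟨rootsOfUnity (∏ μ ∈ S, E μ) L, S.image α,
    Set.finite_coe_iff.1 (inferInstanceAs (Finite (rootsOfUnity _ L))), ?_, fun lam hlam ↦ ?_⟩
  · exact Finset.forall_mem_image.2 fun μ hμ ↦ ⟨hα0 μ hμ, hα μ hμ⟩
  · obtain ⟨μ, hμ, p, q, hp, hpq⟩ := hdep lam hlam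
    obtain ⟨N, w, hw, hlam_eq⟩ := hdecomp μ hμ lam (hdeg lam hlam) p q hp hpq
    exact ⟨α μ, Finset.mem_image_of_mem α hμ, N, w,
      rootsOfUnity_le_of_dvd (Finset.dvd_prod_of_mem E hμ) hw, hlam_eq⟩

/-- Let `K` be a finitely generated field extension of `ℚ` with algebraic closure `K̄`,
`S ⊂ K*` finite, and `Λ ⊆ K̄*` such that each `λ ∈ Λ` has degree at most `2` over `K` and
satisfies `λ^p = μ^q` for some `μ ∈ S` and nonzero integers `p, q`. Then there are a finite
subgroup `W ⊂ K̄*` and a finite set `S' ⊂ K̄*` of non-roots-of-unity such that every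
`λ ∈ Λ` has the form `α^N·w` with `α ∈ S'`, `N ∈ ℤ`, `w ∈ W`. -/
theorem exists_finite_W_and_S'
    (K : Type*) [Field K] [CharZero K]
    (hfg : ∃ s : Finset K, IntermediateField.adjoin ℚ (s : Set K) = ⊤)
    (S : Finset K) (hS : ∀ μ ∈ S, μ ≠ 0)
    (Λ : Set (AlgebraicClosure K)) (hΛ0 : ∀ lam ∈ Λ, lam ≠ 0)
    (hdeg : ∀ lam ∈ Λ, Module.finrank K (IntermediateField.adjoin K {lam}) ≤ 2)
    (hdep : ∀ lam ∈ Λ, ∃ μ ∈ S, ∃ p q : ℤ, p ≠ 0 ∧ q ≠ 0 ∧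
      lam ^ p = (algebraMap K (AlgebraicClosure K) μ) ^ q) :
    ∃ (W : Subgroup (AlgebraicClosure K)ˣ) (S' : Finset (AlgebraicClosure K)),
      (W : Set (AlgebraicClosure K)ˣ).Finite ∧
      (∀ α ∈ S', α ≠ 0 ∧ ¬ IsRootOfUnity α) ∧
      ∀ lam ∈ Λ, ∃ α ∈ S', ∃ N : ℤ, ∃ w ∈ W,
        lam = α ^ N * ((w : (AlgebraicClosure K)ˣ) : AlgebraicClosure K) := by
  have : Algebra.EssFiniteType ℚ K := IntermediateField.fg_top_iff.1 hfg
  exact exists_finite_W_and_S'_general K (AlgebraicClosure K) 2 S hS Λ hdeg fun lam hlam ↦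
    have ⟨μ, hμ, p, q, hp, _, h⟩ := hdep lam hlam
    ⟨μ, hμ, p, q, hp, h⟩
end

section
/- There exists a discrete subgroup Γ of SL₂(ℂ) such that both quotient spaces SL₂(ℂ)/Γ and SL₂(ℝ)/(SL₂(ℝ) ∩ Γ) are compact. -/
/-- The standard topology on `SL₂(ℂ)`, induced from the space of matrices. -/
noncomputable instance : TopologicalSpace (Matrix.SpecialLinearGroup (Fin 2) ℂ) :=
  TopologicalSpace.induced
    (fun g => (g : Matrix (Fin 2) (Fin 2) ℂ)) inferInstance

/-- The standard topology on `SL₂(ℝ)`, induced from the space of matrices. -/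
noncomputable instance : TopologicalSpace (Matrix.SpecialLinearGroup (Fin 2) ℝ) :=
  TopologicalSpace.induced
    (fun g => (g : Matrix (Fin 2) (Fin 2) ℝ)) inferInstance

/-!
Let `O` be the ring of integral quaternions `ℍ[ℤ[i],2,5]`, embedded in `M₂(ℂ)` by means of `√2`,
and let `Γ` be its group of units of determinant one. It is discrete because `O` is a lattice. Since
`5` is exactly divisible by the prime `2 - i`, modulo which `2` is not a square, descent shows that
the norm form is anisotropic, so `O` has no zero divisors.

Given `g` in `SL₂(ℂ)`, left multiplication by `g` preserves volume, so by Minkowski's theorem there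
is a nonzero `x ∈ O` with `g x` in a fixed ball. Then `det x = det (g x)` takes finitely many
values, all nonzero. If `x` and `s` in `O` have the same determinant `d` and agree modulo `d O`,
then `x s⁻¹ ∈ Γ`; hence `x = γ s` with `γ ∈ Γ` and `s` in a fixed finite set, and `g γ = (g x) s⁻¹`
stays in a compact set. The same argument over `ℤ` and `ℝ` shows that the units of norm one of
`ℍ[ℤ,2,5]`, which lie in `SL₂(ℝ) ∩ Γ`, are already cocompact in `SL₂(ℝ)`.
-/

open Matrix MeasureTheory Module
open scoped Quaternion

lemma discreteTopology_span_range_basis {E ι : Type*} [AddCommGroup E] [Module ℝ E]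
    [TopologicalSpace E] [IsTopologicalAddGroup E] [ContinuousSMul ℝ E] [T2Space E] [Finite ι]
    (b : Basis ι ℝ E) : DiscreteTopology (Submodule.span ℤ (Set.range b)) := by
  have hmaps : Set.MapsTo b.equivFun (Submodule.span ℤ (Set.range b))
      (Submodule.span ℤ (Set.range (Pi.basisFun ℝ ι))) := by
    intro x hx
    rwa [SetLike.mem_coe, Basis.mem_span_iff_repr_mem] at hx ⊢
  have : DiscreteTopology (Submodule.span ℤ (Set.range (Pi.basisFun ℝ ι)) : Set (ι → ℝ)) :=
    ZSpan.discreteTopology_pi_basisFun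
  exact DiscreteTopology.of_continuous_injective ((continuous_equivFun_basis b).restrict hmaps)
    (Subtype.map_injective _ b.equivFun.injective)

lemma exists_lt_measure_closedBall {E : Type*} [NormedAddCommGroup E] [NormedSpace ℝ E]
    [FiniteDimensional ℝ E] [Nontrivial E] [MeasurableSpace E] [BorelSpace E] (μ : Measure E)
    [μ.IsAddHaarMeasure] {c : ENNReal} (hc : c < ⊤) :
    ∃ r : ℝ, c < μ (Metric.closedBall 0 r) := by
  have : NoncompactSpace E := NormedSpace.noncompactSpace ℝ E
  have htendsto := tendsto_measure_iUnion_atTop (μ := μ)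
    (s := fun n : ℕ => Metric.closedBall (0 : E) n)
    fun m n h => Metric.closedBall_subset_closedBall (Nat.cast_le.2 h)
  rw [Metric.iUnion_closedBall_nat, measure_univ_of_isAddLeftInvariant] at htendsto
  obtain ⟨n, hn⟩ := (htendsto.eventually_const_lt hc).exists
  exact ⟨n, hn⟩

theorem exists_forall_abs_det_eq_one_exists_mem_span_norm_le {E ι : Type*} [NormedAddCommGroup E]
    [NormedSpace ℝ E] [Nontrivial E] [Finite ι] (b : Basis ι ℝ E) :
    ∃ r : ℝ, ∀ f : E →ₗ[ℝ] E, |LinearMap.det f| = 1 →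
      ∃ x ∈ Submodule.span ℤ (Set.range b), x ≠ 0 ∧ ‖f x‖ ≤ r := by
  have : Fintype ι := Fintype.ofFinite ι
  have : FiniteDimensional ℝ E := b.finiteDimensional_of_finite
  have : ProperSpace E := FiniteDimensional.proper ℝ E
  let _ : MeasurableSpace E := borel E
  have : BorelSpace E := ⟨rfl⟩
  let μ : Measure E := Measure.addHaar
  have hcovolume : μ (ZSpan.fundamentalDomain b) * 2 ^ finrank ℝ E < ⊤ :=
    ENNReal.mul_lt_top (ZSpan.fundamentalDomain_isBounded b).measure_lt_top (by finiteness)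
  obtain ⟨r, hr⟩ := exists_lt_measure_closedBall μ hcovolume
  refine ⟨r, fun f hf => ?_⟩
  have hdet : LinearMap.det f ≠ 0 := abs_ne_zero.1 (hf ▸ one_ne_zero)
  have hvolume : μ (f ⁻¹' Metric.closedBall 0 r) = μ (Metric.closedBall 0 r) := by
    rw [Measure.addHaar_preimage_linearMap μ hdet, abs_inv, hf, inv_one, ENNReal.ofReal_one,
      one_mul]
  have : Countable (Submodule.span ℤ (Set.range b)).toAddSubgroup :=
    inferInstanceAs (Countable (Submodule.span ℤ (Set.range b)))
  obtain ⟨x, hx0, hx⟩ := exists_ne_zero_mem_lattice_of_measure_mul_two_pow_lt_measure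
    (ZSpan.isAddFundamentalDomain' b μ) (fun x hx => by simpa using hx)
    ((convex_closedBall (0 : E) r).linear_preimage f) (hvolume ▸ hr)
  exact ⟨x, x.2, by simpa using hx0, by simpa using hx⟩

lemma det_mulLeft_matrix {n R : Type*} [Fintype n] [DecidableEq n] [CommRing R]
    (g : Matrix n n R) :
    LinearMap.det (LinearMap.mulLeft R g) = g.det ^ Fintype.card n := by
  have hkronecker : LinearMap.toMatrix (stdBasis R n n) (stdBasis R n n) (LinearMap.mulLeft R g) =
      kroneckerMap (· * ·) g (1 : Matrix n n R) := by
    ext ⟨i, j⟩ ⟨k, l⟩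
    rw [LinearMap.toMatrix_apply, stdBasis_eq_single, LinearMap.mulLeft_apply]
    by_cases hjl : j = l
    · subst hjl
      simp [stdBasis]
    · simp [stdBasis, hjl]
  rw [← LinearMap.det_toMatrix (stdBasis R n n), hkronecker, det_kronecker, det_one, one_pow,
    mul_one]

lemma finite_quotient_range_of_injective {M : Type*} [AddCommGroup M] [Module.Free ℤ M]
    [Module.Finite ℤ M] {f : M →ₗ[ℤ] M} (hf : Function.Injective f) :
    Finite (M ⧸ LinearMap.range f) :=
  Submodule.finiteQuotientOfFreeOfRankEq _ (LinearMap.finrank_range_of_inj hf)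

lemma compactSpace_quotient_of_forall_exists_mul_mem {G : Type*} [Group G] [TopologicalSpace G]
    {Γ : Subgroup G} {K : Set G} (hK : IsCompact K) (h : ∀ g, ∃ γ ∈ Γ, g * γ ∈ K) :
    CompactSpace (G ⧸ Γ) := by
  have himage : QuotientGroup.mk '' K = (Set.univ : Set (G ⧸ Γ)) := by
    rw [Set.eq_univ_iff_forall, QuotientGroup.forall_mk]
    intro g
    obtain ⟨γ, hγ, hgγ⟩ := h g
    exact ⟨g * γ, hgγ, QuotientGroup.mk_mul_of_mem g hγ⟩
  exact ⟨himage ▸ hK.image continuous_quotient_mk'⟩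

lemma compactSpace_quotient_of_le {G : Type*} [Group G] [TopologicalSpace G]
    {Γ Δ : Subgroup G} (hΓ : CompactSpace (G ⧸ Γ)) (h : Γ ≤ Δ) : CompactSpace (G ⧸ Δ) := by
  have hsurj : Function.Surjective (Subgroup.quotientMapOfLE h) := by
    rw [Function.Surjective, QuotientGroup.forall_mk]
    exact fun g => ⟨g, rfl⟩
  have hcont : Continuous (Subgroup.quotientMapOfLE h) :=
    continuous_quot_lift _ continuous_quotient_mk'
  exact hsurj.compactSpace hcont

section SpecialUnits

variable {n F : Type*} [Fintype n] [DecidableEq n]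

section CommRing

variable [CommRing F]

/-- The group of units of determinant one of a ring `O` of matrices, such as an order in a matrix
algebra. -/
def specialUnits (O : Subalgebra ℤ (Matrix n n F)) : Subgroup (SpecialLinearGroup n F) where
  carrier := {g | (g : Matrix n n F) ∈ O ∧ (↑g⁻¹ : Matrix n n F) ∈ O}
  one_mem' := by simp [one_mem]
  mul_mem' hg hh := ⟨mul_mem hg.1 hh.1, by rw [_root_.mul_inv_rev]; exact mul_mem hh.2 hg.2⟩
  inv_mem' hg := ⟨hg.2, by rw [inv_inv]; exact hg.1⟩

lemma specialUnits_le_comap_map {F' : Type*} [CommRing F'] {O : Subalgebra ℤ (Matrix n n F)}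
    {O' : Subalgebra ℤ (Matrix n n F')} (φ : F →+* F') (h : ∀ x ∈ O, x.map φ ∈ O') :
    specialUnits O ≤ (specialUnits O').comap (SpecialLinearGroup.map φ) :=
  fun _ hg => ⟨h _ hg.1, by rw [← map_inv]; exact h _ hg.2⟩

theorem discreteTopology_specialUnits [TopologicalSpace F] (O : Subalgebra ℤ (Matrix n n F))
    [DiscreteTopology O] : DiscreteTopology (specialUnits O) := by
  have hval : Topology.IsEmbedding fun g : SpecialLinearGroup n F => (g : Matrix n n F) :=
    .subtypeVal
  let toOrder : specialUnits O → O := fun γ => ⟨γ, γ.2.1⟩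
  have hcont : Continuous toOrder :=
    (hval.continuous.comp continuous_subtype_val).subtype_mk _
  have hinj : Function.Injective toOrder := fun γ δ h =>
    Subtype.ext (hval.injective (congrArg (fun x : O => x.val) h))
  exact DiscreteTopology.of_continuous_injective hcont hinj

lemma nonempty_of_nontrivial_subalgebra (O : Subalgebra ℤ (Matrix n n F)) [Nontrivial O] :
    Nonempty n := by
  by_contra h
  rw [not_nonempty_iff] at h
  exact not_subsingleton O inferInstance

variable {O : Subalgebra ℤ (Matrix n n F)}

lemma det_smul_one_mem (hadj : ∀ x ∈ O, x.adjugate ∈ O) {x : Matrix n n F} (hx : x ∈ O) :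
    x.det • (1 : Matrix n n F) ∈ O :=
  mul_adjugate x ▸ mul_mem hx (hadj x hx)

lemma exists_mem_specialUnits_eq_mul_inv (hadj : ∀ x ∈ O, x.adjugate ∈ O) {x s z : Matrix n n F}
    (hs : s ∈ O) (hz : z ∈ O) (hunit : IsUnit s.det) (hdet : x.det = s.det)
    (hxs : x - s = s.det • z) : ∃ γ ∈ specialUnits O, (γ : Matrix n n F) = x * s⁻¹ := by
  have hxs' : x * s⁻¹ = 1 + z * s.adjugate := by
    rw [sub_eq_iff_eq_add.1 hxs, add_mul, mul_nonsing_inv _ hunit, inv_def, smul_mul_assoc,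
      mul_smul_comm, smul_smul, Ring.mul_inverse_cancel _ hunit, one_smul, add_comm]
  have hmem : x * s⁻¹ ∈ O := hxs' ▸ add_mem (one_mem O) (mul_mem hz (hadj s hs))
  have hdet' : (x * s⁻¹).det = 1 := by
    rw [det_mul, hdet, ← det_mul, mul_nonsing_inv _ hunit, det_one]
  exact ⟨⟨x * s⁻¹, hdet'⟩, ⟨hmem, hadj _ hmem⟩, rfl⟩

end CommRing

section Field

variable [Field F] [CharZero F] {O : Subalgebra ℤ (Matrix n n F)} [Module.Free ℤ O]
  [Module.Finite ℤ O] [IsDomain O]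

lemma det_ne_zero_of_mem {x : Matrix n n F} (hx : x ∈ O) (hx0 : x ≠ 0) : x.det ≠ 0 := by
  let f := LinearMap.mulLeft ℤ (⟨x, hx⟩ : O)
  have hf : Function.Injective f := mul_right_injective₀ (by simpa [Subtype.ext_iff] using hx0)
  have := finite_quotient_range_of_injective hf
  let N := Nat.card (O ⧸ LinearMap.range f)
  obtain ⟨y, hy⟩ : N • (1 : O) ∈ LinearMap.range f := by
    rw [← Submodule.Quotient.mk_eq_zero, Submodule.Quotient.mk_smul]
    exact card_nsmul_eq_zero'
  have hxy : x * y = N • 1 := congrArg Subtype.val hy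
  have hdet : (x * y).det ≠ 0 := by
    rw [hxy, ← Nat.cast_smul_eq_nsmul F, det_smul, det_one, mul_one]
    exact pow_ne_zero _ (Nat.cast_ne_zero.2 Nat.card_pos.ne')
  rw [det_mul] at hdet
  exact left_ne_zero_of_mul hdet

lemma exists_finite_forall_det_eq_exists_mem_specialUnits (hadj : ∀ x ∈ O, x.adjugate ∈ O) (d : F) :
    ∃ S : Set (Matrix n n F), S.Finite ∧
      ∀ x ∈ O, x ≠ 0 → x.det = d →
        ∃ s ∈ S, ∃ γ ∈ specialUnits O, (γ : Matrix n n F) = x * s⁻¹ := by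
  by_cases hd : d ≠ 0 ∧ d • (1 : Matrix n n F) ∈ O
  · obtain ⟨hd0, hdO⟩ := hd
    let δ : O := ⟨d • 1, hdO⟩
    have hδ : δ ≠ 0 := fun h => smul_ne_zero hd0
      (fun h1 => one_ne_zero (α := O) (Subtype.ext h1)) (congrArg Subtype.val h)
    have := finite_quotient_range_of_injective (f := LinearMap.mulLeft ℤ δ)
      (mul_right_injective₀ hδ)
    let residue := (LinearMap.range (LinearMap.mulLeft ℤ δ)).mkQ
    obtain ⟨S, hS, hbij⟩ := Set.exists_subset_bijOn {x : O | (x : Matrix n n F).det = d} residue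
    have hSfin : S.Finite := .of_finite_image (Set.toFinite _) hbij.injOn
    refine ⟨Subtype.val '' S, hSfin.image _, fun x hx _ hxd => ?_⟩
    obtain ⟨s, hs, hsx⟩ := hbij.surjOn ⟨⟨x, hx⟩, hxd, rfl⟩
    obtain ⟨z, hz⟩ := (Submodule.Quotient.eq _).1 hsx.symm
    have hsd : (s : Matrix n n F).det = d := hS hs
    refine ⟨s, ⟨s, hs, rfl⟩, exists_mem_specialUnits_eq_mul_inv hadj s.2 z.2
      (hsd ▸ hd0.isUnit) (hxd.trans hsd.symm) ?_⟩
    rw [hsd, ← smul_one_mul d (z : Matrix n n F)]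
    exact (congrArg Subtype.val hz).symm
  · refine ⟨∅, Set.finite_empty, fun x hx hx0 hxd => (hd ?_).elim⟩
    exact hxd ▸ ⟨det_ne_zero_of_mem hx hx0, det_smul_one_mem hadj hx⟩

end Field

section RCLike

attribute [local instance] Matrix.normedAddCommGroup Matrix.normedSpace

variable [RCLike F]

lemma abs_det_mulLeft_eq_one (g : SpecialLinearGroup n F) :
    |LinearMap.det (LinearMap.mulLeft ℝ (g : Matrix n n F))| = 1 := by
  have hrestrict : LinearMap.mulLeft ℝ (g : Matrix n n F) =
      (LinearMap.mulLeft F (g : Matrix n n F)).restrictScalars ℝ := rfl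
  rw [hrestrict, LinearMap.det_restrictScalars, det_mulLeft_matrix, g.det_coe, one_pow, map_one,
    abs_one]

variable {O : Subalgebra ℤ (Matrix n n F)} {ι : Type*} [Finite ι] {b : Basis ι ℝ (Matrix n n F)}

lemma finite_setOf_smul_one_mem [Nonempty n]
    (hb : Submodule.span ℤ (Set.range b) = Subalgebra.toSubmodule O) {D : Set F}
    (hD : IsCompact D) : {d ∈ D | d • (1 : Matrix n n F) ∈ O}.Finite := by
  have : Fintype ι := Fintype.ofFinite ι
  have : ProperSpace (Matrix n n F) := FiniteDimensional.proper ℝ _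
  have hbounded := (hD.image (f := fun d : F => d • (1 : Matrix n n F)) (by fun_prop)).isBounded
  refine ((ZSpan.setFinite_inter b hbounded).preimage
    (smul_left_injective F one_ne_zero).injOn).subset ?_
  rw [hb]
  exact fun d hd => ⟨Set.mem_image_of_mem _ hd.1, hd.2⟩

variable [IsDomain O]

lemma exists_finite_forall_det_mem_exists_mem_specialUnits
    (hb : Submodule.span ℤ (Set.range b) = Subalgebra.toSubmodule O)
    (hadj : ∀ x ∈ O, x.adjugate ∈ O) {D : Set F} (hD : IsCompact D) :
    ∃ S : Set (Matrix n n F), S.Finite ∧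
      ∀ x ∈ O, x ≠ 0 → x.det ∈ D →
        ∃ s ∈ S, ∃ γ ∈ specialUnits O, (γ : Matrix n n F) = x * s⁻¹ := by
  let bO : Basis ι ℤ O := (b.restrictScalars ℤ).map (LinearEquiv.ofEq _ _ hb)
  have : Module.Free ℤ O := .of_basis bO
  have : Module.Finite ℤ O := .of_basis bO
  have : Nonempty n := nonempty_of_nontrivial_subalgebra O
  choose S hSfin hS using exists_finite_forall_det_eq_exists_mem_specialUnits hadj
  refine ⟨⋃ d ∈ {d ∈ D | d • (1 : Matrix n n F) ∈ O}, S d,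
    (finite_setOf_smul_one_mem hb hD).biUnion fun d _ => hSfin d, fun x hx hx0 hxD => ?_⟩
  obtain ⟨s, hs, hsx⟩ := hS x.det x hx hx0 rfl
  exact ⟨s, Set.mem_biUnion ⟨hxD, det_smul_one_mem hadj hx⟩ hs, hsx⟩

theorem compactSpace_quotient_specialUnits
    (hb : Submodule.span ℤ (Set.range b) = Subalgebra.toSubmodule O)
    (hadj : ∀ x ∈ O, x.adjugate ∈ O) :
    CompactSpace (SpecialLinearGroup n F ⧸ specialUnits O) := by
  have : Nonempty n := nonempty_of_nontrivial_subalgebra O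
  obtain ⟨r, hr⟩ := exists_forall_abs_det_eq_one_exists_mem_span_norm_le b
  have : ProperSpace (Matrix n n F) := FiniteDimensional.proper ℝ _
  have hB : IsCompact (Metric.closedBall (0 : Matrix n n F) r) := isCompact_closedBall _ _
  obtain ⟨S, hSfin, hS⟩ := exists_finite_forall_det_mem_exists_mem_specialUnits hb hadj
    (hB.image (continuous_id.matrix_det))
  have hK : IsCompact (⋃ s ∈ S, (· * s⁻¹) '' Metric.closedBall (0 : Matrix n n F) r) :=
    hSfin.isCompact_biUnion fun s _ => hB.image (by fun_prop)
  refine compactSpace_quotient_of_forall_exists_mul_mem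
    (SpecialLinearGroup.isClosedEmbedding_val.isCompact_preimage hK) fun g => ?_
  obtain ⟨x, hx, hx0, hgx⟩ := hr _ (abs_det_mulLeft_eq_one g)
  rw [LinearMap.mulLeft_apply, ← mem_closedBall_zero_iff] at hgx
  rw [hb] at hx
  obtain ⟨s, hs, γ, hγ, hγx⟩ := hS x hx hx0 ⟨_, hgx, by simp⟩
  refine ⟨γ, hγ, Set.mem_biUnion hs ⟨g * x, hgx, ?_⟩⟩
  exact (Matrix.mul_assoc _ _ _).trans (congrArg (g.val * ·) hγx.symm)

end RCLike

end SpecialUnits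

section Anisotropic

variable {R : Type*} [CommRing R] {a b : R}

lemma re_star_mul_self (x : ℍ[R,a,b]) :
    (star x * x).re = x.re ^ 2 - a * x.imI ^ 2 - b * (x.imJ ^ 2 - a * x.imK ^ 2) := by
  simp only [QuaternionAlgebra.re_mul, QuaternionAlgebra.re_star, QuaternionAlgebra.imI_star,
    QuaternionAlgebra.imJ_star, QuaternionAlgebra.imK_star]
  ring

lemma eq_zero_of_sq_sub_mul_sq_eq_zero {k : Type*} [Field k] {c x y : k} (hc : ¬IsSquare c)
    (h : x ^ 2 - c * y ^ 2 = 0) : x = 0 ∧ y = 0 := by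
  have hy : y = 0 := by
    by_contra hy
    refine hc ⟨x / y, ?_⟩
    field_simp
    linear_combination -h
  subst hy
  simpa using h

variable [IsDomain R] {k : Type*} [Field k] {ρ : R →+* k} {p q : R}

lemma exists_eq_smul_of_star_mul_self_eq_zero (hker : RingHom.ker ρ = Ideal.span {p})
    (hp : p ≠ 0) (hq : ρ q ≠ 0) (ha : ¬IsSquare (ρ a)) {x : ℍ[R,a,p * q]}
    (hx : star x * x = 0) : ∃ y : ℍ[R,a,p * q], x = p • y ∧ star y * y = 0 := by
  have hdvd {r : R} : p ∣ r ↔ ρ r = 0 := by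
    rw [← RingHom.mem_ker, hker, Ideal.mem_span_singleton]
  have hnorm := re_star_mul_self x
  rw [hx, QuaternionAlgebra.re_zero] at hnorm
  have hρp : ρ p = 0 := hdvd.1 dvd_rfl
  have hρ : ρ x.re ^ 2 - ρ a * ρ x.imI ^ 2 = 0 := by
    simpa [hρp] using (congrArg ρ hnorm).symm
  obtain ⟨⟨r, hr⟩, i, hi⟩ := (eq_zero_of_sq_sub_mul_sq_eq_zero ha hρ).imp hdvd.2 hdvd.2
  have hnorm' : q * (x.imJ ^ 2 - a * x.imK ^ 2) = p * (r ^ 2 - a * i ^ 2) := by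
    rw [hr, hi] at hnorm
    exact mul_left_cancel₀ hp (by linear_combination hnorm)
  have hρ' : ρ x.imJ ^ 2 - ρ a * ρ x.imK ^ 2 = 0 := by
    simpa [hρp, hq] using congrArg ρ hnorm'
  obtain ⟨⟨j, hj⟩, l, hl⟩ := (eq_zero_of_sq_sub_mul_sq_eq_zero ha hρ').imp hdvd.2 hdvd.2
  have hxy : x = p • (⟨r, i, j, l⟩ : ℍ[R,a,p * q]) := by
    ext <;> simp [hr, hi, hj, hl]
  refine ⟨_, hxy, ?_⟩
  have hp2 : (p * p) • (star (⟨r, i, j, l⟩ : ℍ[R,a,p * q]) * ⟨r, i, j, l⟩) = 0 := by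
    rw [← hx, hxy]
    simp only [mul_smul, QuaternionAlgebra.star_smul, smul_mul_assoc, mul_smul_comm]
  exact (smul_eq_zero.1 hp2).resolve_left (mul_self_ne_zero.2 hp)

lemma eq_zero_of_star_mul_self_eq_zero [WfDvdMonoid R] (hker : RingHom.ker ρ = Ideal.span {p})
    (hp : p ≠ 0) (hq : ρ q ≠ 0) (ha : ¬IsSquare (ρ a)) {x : ℍ[R,a,p * q]}
    (hx : star x * x = 0) : x = 0 := by
  have hpow (n : ℕ) : ∃ y : ℍ[R,a,p * q], x = p ^ n • y ∧ star y * y = 0 := by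
    induction n with
    | zero => exact ⟨x, by simp, hx⟩
    | succ n ih =>
      obtain ⟨y, rfl, hy⟩ := ih
      obtain ⟨z, rfl, hz⟩ := exists_eq_smul_of_star_mul_self_eq_zero hker hp hq ha hy
      exact ⟨z, by rw [smul_smul, pow_succ], hz⟩
  have hunit : ¬IsUnit p := fun h => not_isUnit_zero <|
    (RingHom.mem_ker.1 (hker ▸ Ideal.mem_span_singleton_self p) : ρ p = 0) ▸ h.map ρ
  have hzero {r : R} (h : ∀ n, p ^ n ∣ r) : r = 0 := by
    by_contra hr
    exact FiniteMultiplicity.not_iff_forall.2 h (.of_not_isUnit hunit hr)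
  ext <;> refine hzero fun n => ?_ <;> obtain ⟨y, rfl, -⟩ := hpow n
  exacts [⟨y.re, rfl⟩, ⟨y.imI, rfl⟩, ⟨y.imJ, rfl⟩, ⟨y.imK, rfl⟩]

lemma isDomain_quaternionAlgebra_of_anisotropic
    (h : ∀ x : ℍ[R,a,b], star x * x = 0 → x = 0) : IsDomain ℍ[R,a,b] := by
  have : NoZeroDivisors ℍ[R,a,b] := by
    refine ⟨fun {x y} hxy => ?_⟩
    have hnorm : (star x * x).re • y = 0 := by
      rw [← QuaternionAlgebra.coe_mul_eq_smul, ← QuaternionAlgebra.star_mul_eq_coe, mul_assoc,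
        hxy, mul_zero]
    refine (smul_eq_zero.1 hnorm).imp_left fun hre => h x ?_
    rw [QuaternionAlgebra.star_mul_eq_coe, hre, QuaternionAlgebra.coe_zero]
  exact NoZeroDivisors.to_isDomain _

theorem isDomain_quaternionAlgebra_of_not_isSquare [WfDvdMonoid R]
    (hker : RingHom.ker ρ = Ideal.span {p}) (hp : p ≠ 0) (hb : b = p * q) (hq : ρ q ≠ 0)
    (ha : ¬IsSquare (ρ a)) : IsDomain ℍ[R,a,b] := by
  subst hb
  exact isDomain_quaternionAlgebra_of_anisotropic fun _ hx =>
    eq_zero_of_star_mul_self_eq_zero hker hp hq ha hx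

end Anisotropic

lemma mem_span_range_smulTower_iff {R S F E κ ι : Type*} [CommRing R] [IsDomain R] [CommRing S]
    [Nontrivial S] [CommRing F] [AddCommGroup E] [Algebra R S] [IsTorsionFree R S] [Algebra S F]
    [Module R F] [IsScalarTower R S F] [Module S E] [Module F E] [IsScalarTower S F E] [Module R E]
    [IsScalarTower R S E] (c : Basis κ S F) (B : Basis ι F E) {m : E} :
    m ∈ Submodule.span R (Set.range (c.smulTower B)) ↔
      ∀ j, B.repr m j ∈ Submodule.span R (Set.range c) := by
  simp only [Basis.mem_span_iff_repr_mem, Basis.smulTower_repr, Prod.forall]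
  exact forall_comm

section SplitOrder

variable {R F : Type*} [CommRing R] [Field F] [Algebra R F] {a b : R} {t : F}

/-- The images of the quaternion units in a splitting of the quaternion algebra `(a, b)` by a
square root `t` of `a`. -/
def splitBasis (ht : t ^ 2 = algebraMap R F a) (b : R) :
    QuaternionAlgebra.Basis (Matrix (Fin 2) (Fin 2) F) a 0 b where
  i := !![t, 0; 0, -t]
  j := !![0, algebraMap R F b; 1, 0]
  k := !![0, t * algebraMap R F b; -t, 0]
  i_mul_i := by
    ext i j
    fin_cases i <;> fin_cases j <;> simp [Algebra.smul_def (A := F), ← ht, sq]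
  j_mul_j := by
    ext i j
    fin_cases i <;> fin_cases j <;> simp [Algebra.smul_def (A := F)]
  i_mul_j := by simp
  j_mul_i := by simp [Algebra.smul_def (A := F), mul_comm]

/-- The order in `M₂(F)` of the matrices of the quaternions over `R`, under the splitting
`splitBasis`. -/
def splitOrder (ht : t ^ 2 = algebraMap R F a) (b : R) : Subalgebra ℤ (Matrix (Fin 2) (Fin 2) F) :=
  (splitBasis ht b).liftHom.range.restrictScalars ℤ

lemma splitBasis_lift (ht : t ^ 2 = algebraMap R F a) (x : ℍ[R,a,b]) :
    (splitBasis ht b).lift x =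
      !![algebraMap R F x.re + t * algebraMap R F x.imI,
          algebraMap R F b * (algebraMap R F x.imJ + t * algebraMap R F x.imK);
        algebraMap R F x.imJ - t * algebraMap R F x.imK,
          algebraMap R F x.re - t * algebraMap R F x.imI] := by
  ext i j
  fin_cases i <;> fin_cases j <;>
    simp [QuaternionAlgebra.Basis.lift, splitBasis, Algebra.smul_def (A := F),
      algebraMap_matrix_apply] <;>
    ring

lemma adjugate_mem_splitOrder (ht : t ^ 2 = algebraMap R F a) :
    ∀ m ∈ splitOrder ht b, m.adjugate ∈ splitOrder ht b := by
  rintro _ ⟨x, rfl⟩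
  refine ⟨star x, ?_⟩
  ext i j
  fin_cases i <;> fin_cases j <;> simp [splitBasis_lift, adjugate_fin_two] <;> ring

lemma map_mem_splitOrder {R' F' : Type*} [CommRing R'] [Field F'] [Algebra R' F'] {a' b' : R'}
    (ψ : R →+* R') (φ : F →+* F') (hφ : ∀ r, φ (algebraMap R F r) = algebraMap R' F' (ψ r))
    (hb : ψ b = b') (ht : t ^ 2 = algebraMap R F a) (ht' : φ t ^ 2 = algebraMap R' F' a') :
    ∀ m ∈ splitOrder ht b, m.map φ ∈ splitOrder ht' b' := by
  rintro _ ⟨x, rfl⟩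
  refine ⟨⟨ψ x.re, ψ x.imI, ψ x.imJ, ψ x.imK⟩, ?_⟩
  ext i j
  fin_cases i <;> fin_cases j <;> simp [splitBasis_lift, hφ, ← hb]

variable [NeZero (2 : F)]

lemma linearIndependent_splitBasis (ht : t ^ 2 = algebraMap R F a) (ht0 : t ≠ 0)
    (hb0 : algebraMap R F b ≠ 0) :
    LinearIndependent F
      ![1, (splitBasis ht b).i, (splitBasis ht b).j, (splitBasis ht b).k] := by
  rw [Fintype.linearIndependent_iff]
  intro g hg
  have h00 : g 0 + g 1 * t = 0 := by
    simpa [splitBasis, Fin.sum_univ_four] using congrFun₂ hg 0 0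
  have h11 : g 0 - g 1 * t = 0 := by
    simpa [splitBasis, Fin.sum_univ_four, sub_eq_add_neg] using congrFun₂ hg 1 1
  have h01 : g 2 + g 3 * t = 0 := by
    refine (mul_eq_zero.1 ?_).resolve_right hb0
    simpa [splitBasis, Fin.sum_univ_four, add_mul, mul_assoc] using congrFun₂ hg 0 1
  have h10 : g 2 - g 3 * t = 0 := by
    simpa [splitBasis, Fin.sum_univ_four, sub_eq_add_neg] using congrFun₂ hg 1 0
  have hzero {u v : F} (hadd : u + v * t = 0) (hsub : u - v * t = 0) : u = 0 ∧ v = 0 := by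
    have hu : u = 0 := (mul_eq_zero.1 (by linear_combination hadd + hsub)).resolve_left two_ne_zero
    subst hu
    simpa [ht0] using hadd
  obtain ⟨h0, h1⟩ := hzero h00 h11
  obtain ⟨h2, h3⟩ := hzero h01 h10
  intro j
  fin_cases j <;> assumption

/-- The quaternion units, as an `F`-basis of `M₂(F)`. -/
noncomputable def splitLinearBasis (ht : t ^ 2 = algebraMap R F a) (ht0 : t ≠ 0)
    (hb0 : algebraMap R F b ≠ 0) : Basis (Fin 4) F (Matrix (Fin 2) (Fin 2) F) :=
  basisOfLinearIndependentOfCardEqFinrank (linearIndependent_splitBasis ht ht0 hb0)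
    (by simp [finrank_matrix])

variable (ht : t ^ 2 = algebraMap R F a)

lemma splitLinearBasis_repr_lift (ht0 : t ≠ 0) (hb0 : algebraMap R F b ≠ 0)
    (x : ℍ[R,a,b]) :
    (splitLinearBasis ht ht0 hb0).repr ((splitBasis ht b).lift x) =
      algebraMap R F ∘ QuaternionAlgebra.equivTuple a 0 b x := by
  have hsum : (splitBasis ht b).lift x =
      ∑ j, algebraMap R F (QuaternionAlgebra.equivTuple a 0 b x j) •
        splitLinearBasis ht ht0 hb0 j := by
    simp [splitLinearBasis, QuaternionAlgebra.Basis.lift, Fin.sum_univ_four,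
      Algebra.algebraMap_eq_smul_one]
  rw [hsum, Basis.repr_sum_self]
  rfl

lemma mem_splitOrder_iff_repr_mem_range (ht0 : t ≠ 0) (hb0 : algebraMap R F b ≠ 0)
    {m : Matrix (Fin 2) (Fin 2) F} :
    m ∈ splitOrder ht b ↔
      ∀ j, (splitLinearBasis ht ht0 hb0).repr m j ∈ Set.range (algebraMap R F) := by
  constructor
  · rintro ⟨x, rfl⟩ j
    exact ⟨_, (congrFun (splitLinearBasis_repr_lift ht ht0 hb0 x) j).symm⟩
  · intro h
    choose y hy using h
    refine ⟨(QuaternionAlgebra.equivTuple a 0 b).symm y, ?_⟩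
    refine (splitLinearBasis ht ht0 hb0).repr.injective (DFunLike.coe_injective ?_)
    refine (splitLinearBasis_repr_lift ht ht0 hb0 _).trans ?_
    rw [Equiv.apply_symm_apply]
    exact funext hy

lemma splitBasis_liftHom_injective (ht0 : t ≠ 0) (hb0 : algebraMap R F b ≠ 0)
    (hinj : Function.Injective (algebraMap R F)) :
    Function.Injective (splitBasis ht b).liftHom := by
  intro x y hxy
  have hrepr := congrArg (fun m => ⇑((splitLinearBasis ht ht0 hb0).repr m)) hxy
  simp only [QuaternionAlgebra.Basis.liftHom_apply, splitLinearBasis_repr_lift] at hrepr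
  exact (QuaternionAlgebra.equivTuple a 0 b).injective (hinj.comp_left hrepr)

lemma isDomain_splitOrder [IsDomain ℍ[R,a,b]] (ht0 : t ≠ 0) (hb0 : algebraMap R F b ≠ 0)
    (hinj : Function.Injective (algebraMap R F)) : IsDomain (splitOrder ht b) :=
  (AlgEquiv.ofInjective _
    (splitBasis_liftHom_injective ht ht0 hb0 hinj)).symm.toMulEquiv.isDomain _

lemma span_range_smulTower_splitLinearBasis [Algebra ℝ F] {κ : Type*} (ht0 : t ≠ 0)
    (hb0 : algebraMap R F b ≠ 0) (c : Basis κ ℝ F)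
    (hc : (Submodule.span ℤ (Set.range c) : Set F) = Set.range (algebraMap R F)) :
    Submodule.span ℤ (Set.range (c.smulTower (splitLinearBasis ht ht0 hb0))) =
      Subalgebra.toSubmodule (splitOrder ht b) := by
  ext m
  simp only [mem_span_range_smulTower_iff, ← SetLike.mem_coe (p := Submodule.span ℤ (Set.range c)),
    hc, Subalgebra.mem_toSubmodule, mem_splitOrder_iff_repr_mem_range ht ht0 hb0]

end SplitOrder

theorem compactSpace_quotient_specialUnits_splitOrder {R F κ : Type*} [CommRing R] [RCLike F]
    [Algebra R F] [Finite κ] {a b : R} [IsDomain ℍ[R,a,b]] {t : F}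
    (ht : t ^ 2 = algebraMap R F a) (ht0 : t ≠ 0) (hb0 : algebraMap R F b ≠ 0)
    (hinj : Function.Injective (algebraMap R F)) (c : Basis κ ℝ F)
    (hc : (Submodule.span ℤ (Set.range c) : Set F) = Set.range (algebraMap R F)) :
    CompactSpace (SpecialLinearGroup (Fin 2) F ⧸ specialUnits (splitOrder ht b)) :=
  have := isDomain_splitOrder ht ht0 hb0 hinj
  compactSpace_quotient_specialUnits
    (span_range_smulTower_splitLinearBasis ht ht0 hb0 c hc) (adjugate_mem_splitOrder ht)

theorem discreteTopology_specialUnits_splitOrder {R F κ : Type*} [CommRing R] [RCLike F]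
    [Algebra R F] [Finite κ] {a b : R} {t : F}
    (ht : t ^ 2 = algebraMap R F a) (ht0 : t ≠ 0) (hb0 : algebraMap R F b ≠ 0) (c : Basis κ ℝ F)
    (hc : (Submodule.span ℤ (Set.range c) : Set F) = Set.range (algebraMap R F)) :
    DiscreteTopology (specialUnits (splitOrder ht b)) := by
  have hb := span_range_smulTower_splitLinearBasis ht ht0 hb0 c hc
  have hdiscrete := discreteTopology_span_range_basis (c.smulTower (splitLinearBasis ht ht0 hb0))
  have : DiscreteTopology (splitOrder ht b) := by rwa [hb] at hdiscrete
  exact discreteTopology_specialUnits _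

lemma isDomain_quaternionAlgebra_int : IsDomain ℍ[ℤ,2,5] := by
  have htwo : ¬IsSquare (Int.castRingHom (ZMod 5) 2) := by decide
  have : Fact (Nat.Prime 5) := ⟨by decide⟩
  exact isDomain_quaternionAlgebra_of_not_isSquare (ZMod.ker_intCastRingHom 5) (by decide)
    (mul_one 5).symm (by simp) htwo

/-- Reduction modulo the prime `2 - i`, which sends `i` to `2`. -/
def gaussianIntToZMod : GaussianInt →+* ZMod 5 :=
  Zsqrtd.lift ⟨2, by decide⟩

lemma ker_gaussianIntToZMod : RingHom.ker gaussianIntToZMod = Ideal.span {⟨2, -1⟩} := by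
  ext z
  rw [RingHom.mem_ker, Ideal.mem_span_singleton]
  constructor
  · intro hz
    have hz' : ((z.re + 2 * z.im : ℤ) : ZMod 5) = 0 := by
      simpa [gaussianIntToZMod, mul_comm] using hz
    obtain ⟨m, hm⟩ := (ZMod.intCast_zmod_eq_zero_iff_dvd _ 5).1 hz'
    rw [Nat.cast_ofNat] at hm
    refine ⟨⟨2 * m - z.im, m⟩, ?_⟩
    ext
    · rw [Zsqrtd.re_mul]
      linarith
    · simp
  · rintro ⟨w, rfl⟩
    have hp : gaussianIntToZMod ⟨2, -1⟩ = 0 := by decide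
    rw [map_mul, hp, zero_mul]

lemma isDomain_quaternionAlgebra_gaussianInt : IsDomain ℍ[GaussianInt,2,5] := by
  have hfive : (5 : GaussianInt) = ⟨2, -1⟩ * ⟨2, 1⟩ := by decide
  have hconj : gaussianIntToZMod ⟨2, 1⟩ ≠ 0 := by decide
  have htwo : ¬IsSquare (gaussianIntToZMod 2) := by decide
  have : Fact (Nat.Prime 5) := ⟨by decide⟩
  exact isDomain_quaternionAlgebra_of_not_isSquare ker_gaussianIntToZMod (by decide) hfive
    hconj htwo

lemma coe_span_range_basis_singleton :
    (Submodule.span ℤ (Set.range (Basis.singleton Unit ℝ)) : Set ℝ) =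
      Set.range (algebraMap ℤ ℝ) := by
  ext x
  rw [SetLike.mem_coe, Basis.mem_span_iff_repr_mem]
  simp

/-- The Gaussian integers as a subring of `ℂ`. -/
noncomputable local instance : Algebra GaussianInt ℂ := GaussianInt.toComplex.toAlgebra

lemma coe_span_range_basisOneI :
    (Submodule.span ℤ (Set.range Complex.basisOneI) : Set ℂ) =
      Set.range (algebraMap GaussianInt ℂ) := by
  ext z
  rw [SetLike.mem_coe, Basis.mem_span_iff_repr_mem, Fin.forall_fin_two]
  constructor
  · rintro ⟨⟨x, hx⟩, ⟨y, hy⟩⟩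
    refine ⟨⟨x, y⟩, Complex.ext ?_ ?_⟩
    · simpa [RingHom.algebraMap_toAlgebra] using hx
    · simpa [RingHom.algebraMap_toAlgebra] using hy
  · rintro ⟨w, rfl⟩
    exact ⟨⟨w.re, by simp [RingHom.algebraMap_toAlgebra]⟩,
      ⟨w.im, by simp [RingHom.algebraMap_toAlgebra]⟩⟩

/-- There exists a discrete subgroup `Γ` of `SL₂(ℂ)` such that both `SL₂(ℂ)/Γ` and
`SL₂(ℝ)/(SL₂(ℝ) ∩ Γ)` are compact. -/
theorem exists_discrete_cocompact_with_real_cocompact_intersection :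
    ∃ Γ : Subgroup (Matrix.SpecialLinearGroup (Fin 2) ℂ),
      DiscreteTopology Γ ∧
      CompactSpace (Matrix.SpecialLinearGroup (Fin 2) ℂ ⧸ Γ) ∧
      CompactSpace (Matrix.SpecialLinearGroup (Fin 2) ℝ ⧸
        (Γ.comap (Matrix.SpecialLinearGroup.map Complex.ofRealHom))) := by
  have := isDomain_quaternionAlgebra_int
  have := isDomain_quaternionAlgebra_gaussianInt
  have ht : √2 ^ 2 = algebraMap ℤ ℝ 2 := by simp
  have htℂ : Complex.ofRealHom √2 ^ 2 = algebraMap GaussianInt ℂ 2 := by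
    rw [← map_pow, ht, map_ofNat, map_ofNat, map_ofNat]
  have ht0 : √2 ≠ 0 := by simp
  have htℂ0 : Complex.ofRealHom √2 ≠ 0 := by simp
  have h5 : algebraMap ℤ ℝ 5 ≠ 0 := by simp
  have hℂ5 : algebraMap GaussianInt ℂ 5 ≠ 0 := by rw [map_ofNat]; exact OfNat.ofNat_ne_zero 5
  have hle := specialUnits_le_comap_map Complex.ofRealHom
    (map_mem_splitOrder (Int.castRingHom GaussianInt) Complex.ofRealHom (by simp)
      (by simp) ht htℂ : ∀ m ∈ splitOrder ht 5, _ ∈ splitOrder htℂ 5)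
  refine ⟨specialUnits (splitOrder htℂ 5), ?_, ?_, ?_⟩
  · exact discreteTopology_specialUnits_splitOrder htℂ htℂ0 hℂ5 _ coe_span_range_basisOneI
  · exact compactSpace_quotient_specialUnits_splitOrder htℂ htℂ0 hℂ5
      GaussianInt.toComplex_injective _ coe_span_range_basisOneI
  · exact compactSpace_quotient_of_le (compactSpace_quotient_specialUnits_splitOrder ht ht0 h5
      Int.cast_injective _ coe_span_range_basis_singleton) hle
end
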